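/- Quantitative free sub-semigroup theorem with specification (Theorem 1.1(i)): For all real P0, r0, δ > 0 there exists a positive integer N, depending only on P0, r0 and δ, with the following property. Let (X,σ) be any δ-hyperbolic GCB-space which is P0-packed at scale r0, and let a, b be σ-isometries of X such that a is non-elliptic and the subgroup ⟨a,b⟩ of the isometry group generated by a and b is discrete and non-elementary. Then there exists an element w of ⟨a,b⟩ expressible as a product of at most N elements of {a, a⁻¹, b, b⁻¹}, and a sign τ ∈ {+1, −1}, such that the monoid homomorphism from the free monoid on two generators to the isometry group of X sending the two generators to a^{τN} and w respectively is injective (i.e. the sub-semigroup generated by a^{τN} and w is free). -/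

import Mathlib

open Metric Filter

/-- Four-points condition for `δ`-hyperbolicity. -/
def IsDeltaHyperbolic (X : Type*) [MetricSpace X] (δ : ℝ) : Prop :=
  ∀ x y z w : X,
    dist x y + dist z w ≤ max (dist x z + dist y w) (dist x w + dist y z) + 2 * δ

/-- `X` is `P₀`-packed at scale `r₀`: any subset of a closed ball of radius `3r₀` whose
points are pairwise at distance `> 2r₀` has cardinality at most `P₀`. -/
def IsPacked (X : Type*) [MetricSpace X] (P₀ r₀ : ℝ) : Prop :=
  ∀ x : X, ∀ S : Finset X, (↑S ⊆ closedBall x (3 * r₀)) →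
    (∀ a ∈ S, ∀ b ∈ S, a ≠ b → 2 * r₀ < dist a b) → (S.card : ℝ) ≤ P₀

/-- A geodesically complete, convex, consistent, reversible geodesic bicombing on `X`.
Together with completeness of `X` this is the notion of GCB-space. -/
structure IsGCB {X : Type*} [MetricSpace X] (σ : X → X → ℝ → X) : Prop where
  source : ∀ x y : X, σ x y 0 = x
  target : ∀ x y : X, σ x y 1 = y
  geodesic : ∀ x y : X, ∀ t ∈ Set.Icc (0:ℝ) 1, ∀ t' ∈ Set.Icc (0:ℝ) 1,
    dist (σ x y t) (σ x y t') = |t - t'| * dist x y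
  convex : ∀ x y x' y' : X,
    ConvexOn ℝ (Set.Icc (0:ℝ) 1) fun t => dist (σ x y t) (σ x' y' t)
  consistent : ∀ x y : X, ∀ s t l : ℝ, 0 ≤ s → s ≤ t → t ≤ 1 → l ∈ Set.Icc (0:ℝ) 1 →
    σ (σ x y s) (σ x y t) l = σ x y ((1 - l) * s + l * t)
  reversible : ∀ x y : X, ∀ t ∈ Set.Icc (0:ℝ) 1, σ x y t = σ y x (1 - t)
  geodComplete : ∀ x y : X, ∃ γ : ℝ → X, Isometry γ ∧
    (∀ s t : ℝ, s ≤ t → ∀ l ∈ Set.Icc (0:ℝ) 1, σ (γ s) (γ t) l = γ (s + l * (t - s))) ∧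
    (∀ t ∈ Set.Icc (0:ℝ) 1, σ x y t = γ (t * dist x y))

/-- `g` is a `σ`-isometry: a surjective isometry preserving the bicombing `σ`. -/
def IsSigmaIsometry {X : Type*} [MetricSpace X] (σ : X → X → ℝ → X) (g : X ≃ᵢ X) : Prop :=
  ∀ x y : X, ∀ t ∈ Set.Icc (0:ℝ) 1, g (σ x y t) = σ (g x) (g y) t

/-- A group of isometries is discrete if for every `x` and `R` only finitely many of its
elements displace `x` at most `R`. -/
def IsDiscreteSubgroup {X : Type*} [MetricSpace X] (Γ : Subgroup (X ≃ᵢ X)) : Prop :=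
  ∀ x : X, ∀ R : ℝ, {g : X ≃ᵢ X | g ∈ Γ ∧ dist x (g x) ≤ R}.Finite

/-- A group is virtually nilpotent if it has a nilpotent subgroup of finite index. -/
def IsVirtuallyNilpotent (G : Type*) [Group G] : Prop :=
  ∃ H : Subgroup G, H.FiniteIndex ∧ Group.IsNilpotent H

/-- `Γ` is non-elementary: it contains two elements generating a subgroup that is not
virtually nilpotent. -/
def IsNonElementary {X : Type*} [MetricSpace X] (Γ : Subgroup (X ≃ᵢ X)) : Prop :=
  ∃ a b : X ≃ᵢ X, a ∈ Γ ∧ b ∈ Γ ∧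
    ¬ IsVirtuallyNilpotent ↥(Subgroup.closure ({a, b} : Set (X ≃ᵢ X)))

/-- An isometry is non-elliptic if its orbits are unbounded. -/
def IsNonElliptic {X : Type*} [MetricSpace X] (g : X ≃ᵢ X) : Prop :=
  ∀ x : X, ¬ Bornology.IsBounded (Set.range fun n : ℤ => (g ^ n) x)

/-- The `r`-almost stabilizer `Γ_r(x)`, generated by the elements of `Γ` displacing `x`
at most `r`. -/
def almostStabilizer {X : Type*} [MetricSpace X] (Γ : Subgroup (X ≃ᵢ X)) (r : ℝ) (x : X) :
    Subgroup (X ≃ᵢ X) :=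
  Subgroup.closure {g : X ≃ᵢ X | g ∈ Γ ∧ dist x (g x) ≤ r}

/-- The nilpotence radius of `Γ` at `x`. -/
noncomputable def nilrad {X : Type*} [MetricSpace X] (Γ : Subgroup (X ≃ᵢ X)) (x : X) : ℝ :=
  sSup {r : ℝ | 0 ≤ r ∧ IsVirtuallyNilpotent ↥(almostStabilizer Γ r x)}

/-- The Margulis domain `M_ε(g)`. -/
def margulisDomain {X : Type*} [MetricSpace X] (g : X ≃ᵢ X) (ε : ℝ) : Set X :=
  {x : X | dist x (g x) ≤ ε}

/-- The generalized Margulis domain `ℳ_ε(g) = ⋃_{i ≠ 0} M_ε(gⁱ)`. -/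
def genMargulisDomain {X : Type*} [MetricSpace X] (g : X ≃ᵢ X) (ε : ℝ) : Set X :=
  ⋃ i ∈ {i : ℤ | i ≠ 0}, margulisDomain (g ^ i) ε

/-- `f` parameterizes a geodesic segment from `x` to `y` on `[0, dist x y]`. -/
def IsGeodesicFrom {X : Type*} [MetricSpace X] (f : ℝ → X) (x y : X) : Prop :=
  f 0 = x ∧ f (dist x y) = y ∧
    ∀ s ∈ Set.Icc 0 (dist x y), ∀ t ∈ Set.Icc 0 (dist x y), dist (f s) (f t) = |s - t|

/-- `X` is a geodesic space. -/
def IsGeodesicSpace (X : Type*) [MetricSpace X] : Prop :=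
  ∀ x y : X, ∃ f : ℝ → X, IsGeodesicFrom f x y

/-- `C` is `lam`-quasiconvex: any two of its points are joined by a geodesic contained in
the closed `lam`-neighbourhood of `C`. -/
def IsQuasiconvex {X : Type*} [MetricSpace X] (lam : ℝ) (C : Set X) : Prop :=
  ∀ x ∈ C, ∀ y ∈ C, ∃ f : ℝ → X, IsGeodesicFrom f x y ∧
    ∀ t ∈ Set.Icc 0 (dist x y), infDist (f t) C ≤ lam

/-- `C` is a convex subset: any two of its points are joined by a geodesic inside `C`. -/
def IsConvexSubset {X : Type*} [MetricSpace X] (C : Set X) : Prop :=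
  ∀ x ∈ C, ∀ y ∈ C, ∃ f : ℝ → X, IsGeodesicFrom f x y ∧
    ∀ t ∈ Set.Icc 0 (dist x y), f t ∈ C

/-- Arc-length concatenation of three paths, of respective lengths `d₁`, `d₂` and the rest. -/
noncomputable def concatPath {X : Type*} (d₁ d₂ : ℝ) (f₁ f₂ f₃ : ℝ → X) : ℝ → X :=
  fun t => if t ≤ d₁ then f₁ t else if t ≤ d₁ + d₂ then f₂ (t - d₁) else f₃ (t - d₁ - d₂)

/-- A nonnegative symmetric subadditive function on a group which, on the set where it is at most
`κ`, is almost invariant under conjugation and almost doubled by squaring. -/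
structure IsAlmostHomogeneous {G : Type*} [Group G] (κ : ℝ) (N : G → ℝ) : Prop where
  nonneg : ∀ g, 0 ≤ N g
  one : N 1 = 0
  inv : ∀ g, N g⁻¹ = N g
  mul_le : ∀ g h, N (g * h) ≤ N g + N h
  conj_le : ∀ g h, N g ≤ κ → N h ≤ κ → N (h * g * h⁻¹) ≤ (1 + N h) * N g
  sq_le : ∀ g, N g ≤ κ → 2 * N g - N g ^ 2 ≤ N (g * g)

namespace IsAlmostHomogeneous

variable {G : Type*} [Group G] {κ : ℝ} {N : G → ℝ}

theorem pow_le (hN : IsAlmostHomogeneous κ N) (g : G) (n : ℕ) : N (g ^ n) ≤ n * N g := by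
  induction n with
  | zero => simp [hN.one]
  | succ n ih =>
    rw [pow_succ]
    push_cast
    linarith [hN.mul_le (g ^ n) g]

theorem zpow_le (hN : IsAlmostHomogeneous κ N) (g : G) (m : ℤ) : N (g ^ m) ≤ |(m : ℝ)| * N g := by
  obtain ⟨n, rfl | rfl⟩ := m.eq_nat_or_neg
  · simpa using hN.pow_le g n
  · simpa [hN.inv] using hN.pow_le g n

theorem le_pow_two_pow (hN : IsAlmostHomogeneous κ N) (hκ : κ ≤ 1) (x : G) (j : ℕ)
    (hj : 2 ^ j * N x ≤ κ) :
    2 ^ j * N x - (2 ^ j * N x) ^ 2 ≤ N (x ^ 2 ^ j) := by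
  induction j with
  | zero => simp; positivity
  | succ j ih =>
    have h0 := hN.nonneg x
    have hA0 : 0 ≤ 2 ^ j * N x := by positivity
    have hs : (2 : ℝ) ^ (j + 1) * N x = 2 * (2 ^ j * N x) := by ring
    rw [hs] at hj ⊢
    have ih' := ih (by linarith)
    have hup := hN.pow_le x (2 ^ j)
    push_cast at hup
    have hsq := hN.sq_le (x ^ 2 ^ j) (by linarith)
    have he : x ^ 2 ^ (j + 1) = x ^ 2 ^ j * x ^ 2 ^ j := by rw [← pow_add]; congr 1; ring
    rw [he]
    have := hN.nonneg (x ^ 2 ^ j)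
    nlinarith

/-- A discrete comparison principle for the drifting random walk
`(m, k) ↦ (m - 1, k) or (m + 1, k - 1)`. -/
theorem walk_bound (F : ℤ → ℕ → ℝ) (a : ℝ) (ha : 0 ≤ a)
    (hF : ∀ m k, F m k ≤ (|(m : ℝ)| + 3 * k) * a)
    (hrec : ∀ m : ℤ, ∀ k : ℕ, |m| ≤ 256 → k < 64 →
      F m (k + 1) ≤ (F (m - 1) (k + 1) + F (m + 1) k) / 2 + a / 32) :
    F 0 64 ≤ 16 * a := by
  set u : ℤ → ℕ → ℝ := fun m k => a * (((m : ℝ) ^ 2 + 2 * k) / 16 + 4 + k / 16) with hu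
  have hfar : ∀ m : ℤ, ∀ k : ℕ, 256 ≤ |m| → k ≤ 64 → F m k ≤ u m k := by
    intro m k hm hk
    refine (hF m k).trans ?_
    have hm' : (256 : ℝ) ≤ |(m : ℝ)| := by exact_mod_cast hm
    have hk' : (k : ℝ) ≤ 64 := by exact_mod_cast hk
    have hk0 : (0 : ℝ) ≤ k := by positivity
    simp only [hu]
    rw [mul_comm]
    apply mul_le_mul_of_nonneg_left _ ha
    rw [← sq_abs (m : ℝ)]
    nlinarith
  have hmain : ∀ k : ℕ, k ≤ 64 → ∀ m : ℤ, F m k ≤ u m k := by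
    intro k
    induction k with
    | zero =>
      intro _ m
      refine (hF m 0).trans ?_
      simp only [hu]
      rw [mul_comm]
      apply mul_le_mul_of_nonneg_left _ ha
      rw [← sq_abs (m : ℝ)]
      push_cast
      nlinarith [sq_nonneg (|(m : ℝ)| - 8)]
    | succ k ih =>
      intro hk m
      have ih' := ih (by omega)
      by_cases hm : m ≤ -256
      · exact hfar _ _ (by rw [abs_of_nonpos (by omega)]; omega) hk
      · have : ∀ n : ℕ, F (-256 + n) (k + 1) ≤ u (-256 + n) (k + 1) := by
          intro n
          induction n with
          | zero => exact hfar _ _ (by norm_num) hk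
          | succ n ihn =>
            by_cases hn : 256 ≤ |(-256 + (n + 1 : ℕ) : ℤ)|
            · exact hfar _ _ hn hk
            · have h1 := hrec (-256 + (n + 1 : ℕ)) k (by omega) (by omega)
              have h2 := ih' (-256 + (n + 1 : ℕ) + 1)
              have e : (-256 + (n + 1 : ℕ) - 1 : ℤ) = -256 + n := by push_cast; ring
              rw [e] at h1
              simp only [hu] at h2 ihn ⊢
              push_cast at h1 h2 ihn ⊢
              nlinarith
        have h := this (m + 256).toNat
        rwa [show (-256 + ((m + 256).toNat : ℤ)) = m by omega] at h
  have := hmain 64 le_rfl 0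
  simp only [hu] at this
  push_cast at this
  linarith

end IsAlmostHomogeneous

namespace IsAlmostHomogeneous

open scoped commutatorElement

variable {G : Type*} [Group G] {N : G → ℝ}

theorem conj_le' {κ : ℝ} (hN : IsAlmostHomogeneous κ N) (g h : G) (hg : N g ≤ κ) (hh : N h ≤ κ) :
    N (h⁻¹ * g * h) ≤ (1 + N h) * N g := by
  simpa [hN.inv] using hN.conj_le g h⁻¹ hg (by simpa [hN.inv] using hh)

/-- If `g * y = x = h * (z * g⁻¹) * h⁻¹`, the norm of `x` is at most about the mean of the norms
of `y` and `z`. -/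
theorem le_mean (hN : IsAlmostHomogeneous (2 / 25) N) {g h x y z : G}
    (ha : N g ≤ 1 / 10 ^ 12) (ha0 : 0 < N g) (hb : N h ≤ 1 / 10 ^ 12)
    (hxy : x = g * y) (hxz : x = h * (z * g⁻¹) * h⁻¹)
    (hx : N x ≤ 500 * N g) (hy : N y ≤ 500 * N g) (hz : N z ≤ 501 * N g) :
    N x ≤ (N y + N z) / 2 + N g / 64 := by
  set a := N g
  set b := N h
  have hb0 : 0 ≤ b := hN.nonneg h
  have hy0 := hN.nonneg y
  have hz0 := hN.nonneg z
  have hx0 := hN.nonneg x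
  obtain ⟨j, hj1, hj2⟩ : ∃ j : ℕ, (2 : ℝ) ^ j * a ≤ 1 / 10 ^ 9 ∧ 1 / 10 ^ 9 < 2 * (2 ^ j * a) := by
    obtain ⟨j, hj1, hj2⟩ := exists_nat_pow_near (x := 1 / 10 ^ 9 / a) (y := (2 : ℝ))
      (by rw [le_div_iff₀ ha0]; linarith) (by norm_num)
    refine ⟨j, (le_div_iff₀ ha0).1 hj1, ?_⟩
    have := (div_lt_iff₀ ha0).1 hj2
    have e : (2 : ℝ) ^ (j + 1) * a = 2 * (2 ^ j * a) := by ring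
    rwa [e] at this
  have hind : ∀ i : ℕ, i * a ≤ 1 / 10 ^ 9 →
      N ((g * y) ^ i * h * (z * g⁻¹) ^ i) ≤ (1 + 2 * a * i) * (i * (N y + N z) + b) := by
    intro i
    induction i with
    | zero => intro _; simp [b]
    | succ i ih =>
      intro hi
      push_cast at hi ⊢
      have hia : (0 : ℝ) ≤ i * a := by positivity
      have ih' := ih (by linarith)
      set q := (g * y) ^ i * h * (z * g⁻¹) ^ i with hq
      have e : (g * y) ^ (i + 1) * h * (z * g⁻¹) ^ (i + 1) = g * (y * q * z) * g⁻¹ := by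
        rw [pow_succ', pow_succ, hq]; group
      rw [e]
      set S := N y + N z with hS
      have hS0 : 0 ≤ S := by positivity
      have hSa : S ≤ 1001 * a := by linarith
      have h1 : N (y * q * z) ≤ S + N q := by
        have := hN.mul_le (y * q) z
        have := hN.mul_le y q
        linarith
      have hiS : (i : ℝ) * S ≤ 1001 * (i * a) := by
        have : (0 : ℝ) ≤ i := by positivity
        nlinarith
      have hq1 : N q ≤ 2 * (i * S + b) := by
        refine ih'.trans ?_
        have : 0 ≤ i * S + b := by positivity
        nlinarith
      have h2 : N (y * q * z) ≤ 2 / 25 := by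
        refine h1.trans ?_
        linarith
      refine (hN.conj_le _ _ h2 (by linarith)).trans ?_
      have h3 : N (y * q * z) ≤ (1 + 2 * a * i) * ((i + 1) * S + b) := by
        refine h1.trans ?_
        have : 0 ≤ 2 * a * i * S := by positivity
        nlinarith
      refine (mul_le_mul_of_nonneg_left h3 (by positivity)).trans ?_
      rw [← mul_assoc]
      apply mul_le_mul_of_nonneg_right _ (by positivity)
      nlinarith
  set n : ℕ := 2 ^ j with hn
  have hn' : (2 : ℝ) ^ j = n := by rw [hn]; push_cast; rfl
  rw [hn'] at hj1 hj2
  have hn1 : (0 : ℝ) < n := by rw [hn]; positivity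
  have hna : 0 < n * a := by positivity
  have hup := hind n hj1
  have e2 : x ^ 2 ^ (j + 1) = (g * y) ^ n * h * (z * g⁻¹) ^ n * h⁻¹ := by
    have : 2 ^ (j + 1) = n + n := by rw [hn]; ring
    rw [this, pow_add]
    conv_lhs => enter [2]; rw [hxz, conj_pow]
    rw [hxy]; group
  have hnx : (n : ℝ) * N x ≤ 500 * (n * a) := by nlinarith
  have hlow := hN.le_pow_two_pow (by norm_num) x (j + 1) (by rw [pow_succ, hn']; linarith)
  rw [e2, show (2 : ℝ) ^ (j + 1) = 2 * n by rw [pow_succ, hn']; ring] at hlow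
  have hm := hN.mul_le ((g * y) ^ n * h * (z * g⁻¹) ^ n) h⁻¹
  rw [hN.inv] at hm
  change _ ≤ _ + b at hm
  set S := N y + N z with hS
  have hS0 : 0 ≤ S := by positivity
  have hSa : S ≤ 1001 * a := by linarith
  have hb2 : b ≤ n * a / 400 := by linarith
  have key : 2 * n * N x - (2 * n * N x) ^ 2 ≤ (1 + 2 * a * n) * (n * S + b) + b := by linarith
  have k1 : (2 * n * N x) ^ 2 ≤ n * a / 1000 := by
    have : 0 ≤ n * N x := by positivity
    nlinarith
  have k2 : (1 + 2 * a * n) * (n * S + b) ≤ n * S + b + n * a / 1000 := by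
    have h1 : n * S ≤ 1001 * (n * a) := by nlinarith
    have h2 : 0 ≤ n * S := by positivity
    nlinarith
  have k3 : n * (2 * N x) ≤ n * (S + a / 32) := by nlinarith
  have := le_of_mul_le_mul_left k3 hn1
  linarith

theorem commutator_le (hN : IsAlmostHomogeneous (2 / 25) N) {g h : G}
    (ha : N g ≤ 1 / 10 ^ 12) (hb : N h ≤ 1 / 10 ^ 12) : N ⁅g, h⁆ ≤ N g / 2 := by
  have ha0 := hN.nonneg g
  have hb0 := hN.nonneg h
  have hc : N ⁅g, h⁆ ≤ 3 * N g := by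
    have h1 := hN.mul_le g (h * g⁻¹ * h⁻¹)
    have h2 := hN.conj_le g⁻¹ h (by rw [hN.inv]; linarith) (by linarith)
    rw [hN.inv] at h2
    have e : ⁅g, h⁆ = g * (h * g⁻¹ * h⁻¹) := by rw [commutatorElement_def]; group
    rw [e]
    nlinarith
  rcases ha0.eq_or_lt with h0 | ha0'
  · linarith
  set a := N g
  set c := ⁅g, h⁆ with hcdef
  have hc0 := hN.nonneg c
  have hF : ∀ (m : ℤ) (k : ℕ), N (g ^ m * c ^ k) ≤ (|(m : ℝ)| + 3 * k) * a := by
    intro m k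
    have h1 := hN.mul_le (g ^ m) (c ^ k)
    have h2 := hN.zpow_le g m
    have h3 := hN.pow_le c k
    have : (k : ℝ) * N c ≤ k * (3 * a) := by gcongr
    linarith
  have hw := walk_bound (fun m k => N (g ^ m * c ^ k)) a ha0 hF (by
    intro m k hm hk
    have hm' : |(m : ℝ)| ≤ 256 := by exact_mod_cast hm
    have hk' : (k : ℝ) + 1 ≤ 64 := by exact_mod_cast hk
    have hk0 : (0 : ℝ) ≤ k := by positivity
    have f0 := hF m (k + 1)
    have f1 := hF (m - 1) (k + 1)
    have f2 := hF (m + 1) k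
    have t1 : |((m - 1 : ℤ) : ℝ)| ≤ |(m : ℝ)| + 1 := by
      push_cast; exact (abs_sub _ _).trans (by simp)
    have t2 : |((m + 1 : ℤ) : ℝ)| ≤ |(m : ℝ)| + 1 := by
      push_cast; exact (abs_add_le _ _).trans (by simp)
    push_cast at f0 f1 f2 t1 t2
    set z := h⁻¹ * (g⁻¹ * (g ^ (m + 1) * c ^ k) * g) * h with hz
    have n2 := hN.nonneg (g ^ (m + 1) * c ^ k)
    have f2' : N (g ^ (m + 1) * c ^ k) ≤ 449 * a := by nlinarith
    have z1 := hN.conj_le' (g ^ (m + 1) * c ^ k) g (by linarith) (by linarith)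
    have z1' : N (g⁻¹ * (g ^ (m + 1) * c ^ k) * g) ≤ N (g ^ (m + 1) * c ^ k) + a / 1000 := by
      change _ ≤ (1 + a) * _ at z1
      nlinarith
    have z2 := hN.conj_le' (g⁻¹ * (g ^ (m + 1) * c ^ k) * g) h (by linarith) (by linarith)
    have z2' : N z ≤ N (g ^ (m + 1) * c ^ k) + a / 500 := by
      have := hN.nonneg (g⁻¹ * (g ^ (m + 1) * c ^ k) * g)
      nlinarith
    have := hN.le_mean (g := g) (h := h) (x := g ^ m * c ^ (k + 1))
      (y := g ^ (m - 1) * c ^ (k + 1)) (z := z) ha ha0' hb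
      (by rw [← mul_assoc, ← zpow_one_add]; congr 2; ring)
      (by rw [hz, pow_succ, zpow_add, hcdef, commutatorElement_def]; group)
      (by nlinarith) (by nlinarith) (by linarith)
    linarith)
  simp only [zpow_zero, one_mul] at hw
  have hl := hN.le_pow_two_pow (by norm_num) c 6 (by linarith)
  norm_num at hl
  nlinarith

end IsAlmostHomogeneous

section VirtuallyNilpotent

open scoped commutatorElement

variable {G : Type*} [Group G]

theorem isVirtuallyNilpotent_subgroup_iff {Γ : Subgroup G} :
    IsVirtuallyNilpotent ↥Γ ↔ ∃ H ≤ Γ, H.relIndex Γ ≠ 0 ∧ Group.IsNilpotent H := by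
  constructor
  · rintro ⟨K, hK, hn⟩
    refine ⟨K.map Γ.subtype, Subgroup.map_subtype_le K, ?_, ?_⟩
    · rw [Subgroup.relIndex, Subgroup.subgroupOf, Subgroup.comap_map_eq_self_of_injective
        Γ.subtype_injective]
      exact hK.index_ne_zero
    · exact (Group.isNilpotent_congr (K.equivMapOfInjective _ Γ.subtype_injective)).1 hn
  · rintro ⟨H, hH, hi, hn⟩
    exact ⟨H.subgroupOf Γ, ⟨hi⟩,
      (Group.isNilpotent_congr (Subgroup.subgroupOfEquivOfLe hH)).2 hn⟩

theorem IsVirtuallyNilpotent.mono {Γ Γ' : Subgroup G} (h : Γ' ≤ Γ)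
    (hΓ : IsVirtuallyNilpotent ↥Γ) : IsVirtuallyNilpotent ↥Γ' := by
  rw [isVirtuallyNilpotent_subgroup_iff] at *
  obtain ⟨H, hH, hi, hn⟩ := hΓ
  refine ⟨H ⊓ Γ', inf_le_right, ?_, ?_⟩
  · rw [Subgroup.inf_relIndex_right]
    exact fun h0 => hi (Subgroup.relIndex_eq_zero_of_le_right h h0)
  · rw [Subgroup.isNilpotent_iff_lowerCentralSeries] at *
    obtain ⟨n, hn⟩ := hn
    exact ⟨n, le_bot_iff.1 (hn ▸ Subgroup.lowerCentralSeries_mono n inf_le_left)⟩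

theorem IsVirtuallyNilpotent.of_relIndex_ne_zero {Γ Λ : Subgroup G} (h : Λ ≤ Γ)
    (hi : Λ.relIndex Γ ≠ 0) (hΛ : IsVirtuallyNilpotent ↥Λ) : IsVirtuallyNilpotent ↥Γ := by
  rw [isVirtuallyNilpotent_subgroup_iff] at *
  obtain ⟨H, hH, hi', hn⟩ := hΛ
  exact ⟨H, hH.trans h, Subgroup.relIndex_ne_zero_trans hi' hi, hn⟩

/-- A group carrying a descending chain of subgroups `H k` with `⁅G, H k⁆ ≤ H (k + 1)` and some
`H k` finite is virtually nilpotent. -/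
theorem isVirtuallyNilpotent_of_descending {H : ℕ → Subgroup G}
    (hH : Subgroup.IsDescendingCentralSeries H) (k : ℕ) (hk : Finite (H k)) [(H k).Normal] :
    IsVirtuallyNilpotent G := by
  set C := (MulAut.conjNormal : G →* MulAut (H k)).ker with hC
  have : Finite (MulAut (H k)) := Finite.of_injective (fun e => (e : H k → H k))
    (fun e f h => MulEquiv.ext (congrFun h))
  refine ⟨C, Subgroup.finiteIndex_ker _, ?_⟩
  have hnil : Group.IsNilpotent (G ⧸ H k) := by
    rw [Subgroup.nilpotent_iff_lowerCentralSeries]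
    refine ⟨k, ?_⟩
    have hs : (⊤ : Subgroup G).map (QuotientGroup.mk' (H k)) = ⊤ :=
      Subgroup.map_top_of_surjective _ (QuotientGroup.mk'_surjective _)
    rw [← hs, ← Subgroup.map_lowerCentralSeries, Subgroup.map_eq_bot_iff, QuotientGroup.ker_mk']
    exact Subgroup.descending_central_series_ge_lower H hH k
  refine Subgroup.isNilpotent_of_ker_le_center ((QuotientGroup.mk' (H k)).comp C.subtype) ?_
  rintro ⟨x, hx⟩ hxk
  rw [MonoidHom.mem_ker] at hxk
  have hxk' : x ∈ H k := by simpa using hxk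
  rw [Subgroup.mem_center_iff]
  rintro ⟨c, hc⟩
  rw [hC, MonoidHom.mem_ker] at hc
  have h1 := congrArg Subtype.val (DFunLike.congr_fun hc ⟨x, hxk'⟩)
  rw [MulAut.conjNormal_apply] at h1
  ext
  simp only [MulAut.one_apply] at h1
  simpa using mul_inv_eq_iff_eq_mul.1 h1

theorem IsAlmostHomogeneous.isVirtuallyNilpotent {N : G → ℝ} {ε : ℝ}
    (hN : IsAlmostHomogeneous (2 / 25) N) (hε0 : 0 ≤ ε) (hε : ε ≤ 1 / 10 ^ 12)
    (hfin : {g | N g ≤ ε}.Finite) (hgen : Subgroup.closure {g | N g ≤ ε} = ⊤) :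
    IsVirtuallyNilpotent G := by
  set S : ℕ → Set G := fun k => {g | N g ≤ ε / 2 ^ k} with hS
  set H : ℕ → Subgroup G := fun k => Subgroup.closure (S k) with hHdef
  have hSanti : Antitone S := by
    intro i j hij g hg
    simp only [hS, Set.mem_ofPred_eq] at hg ⊢
    refine hg.trans ?_
    gcongr
    norm_num
  have hle : ∀ k, ∀ g ∈ S k, N g ≤ 1 / 10 ^ 12 := by
    intro k g hg
    have := hSanti (Nat.zero_le k) hg
    simp only [hS, Set.mem_ofPred_eq, pow_zero, div_one] at this
    linarith
  have hcomm : ∀ k, ∀ s ∈ S 0, ∀ t ∈ S k, ⁅t, s⁆ ∈ S (k + 1) := by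
    intro k s hs t ht
    have := hN.commutator_le (hle _ _ ht) (hle _ _ hs)
    simp only [hS, Set.mem_ofPred_eq] at ht ⊢
    refine this.trans ?_
    rw [pow_succ, ← div_div]
    gcongr
  have hnorm : ∀ k, (H k).Normal := by
    intro k
    have hinv : ∀ s ∈ S 0, ∀ t ∈ S k, s * t * s⁻¹ ∈ H k := by
      intro s hs t ht
      have h1 : ⁅t, s⁆ ∈ H k := Subgroup.subset_closure (hSanti k.le_succ (hcomm k s hs t ht))
      have h2 : s * t * s⁻¹ = ⁅t, s⁆⁻¹ * t := by rw [commutatorElement_def]; group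
      rw [h2]
      exact mul_mem (inv_mem h1) (Subgroup.subset_closure ht)
    have hsub : ∀ s ∈ S 0, ∀ t ∈ H k, s * t * s⁻¹ ∈ H k := by
      intro s hs t ht
      have : H k ≤ (H k).comap (MulAut.conj s).toMonoidHom := by
        rw [hHdef, Subgroup.closure_le]
        intro t ht
        simpa using hinv s hs t ht
      simpa using this ht
    refine ⟨fun t ht g => ?_⟩
    have hg : g ∈ Subgroup.closure (S 0) := by
      have : S 0 = {g | N g ≤ ε} := by simp [hS]
      rw [this, hgen]; trivial
    revert t
    induction hg using Subgroup.closure_induction'' with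
    | one => simp
    | mem s hs => exact hsub s hs
    | inv_mem s hs =>
      have : s⁻¹ ∈ S 0 := by
        simp only [hS, Set.mem_ofPred_eq] at hs ⊢
        rwa [hN.inv]
      exact hsub _ this
    | mul x y _ _ hx hy =>
      intro t ht
      have := hx _ (hy t ht)
      rwa [show x * y * t * (x * y)⁻¹ = x * (y * t * y⁻¹) * x⁻¹ by group]
  have hdesc : Subgroup.IsDescendingCentralSeries H := by
    refine ⟨by simpa [hHdef, hS] using hgen, fun x k hx g => ?_⟩
    have hg : g ∈ Subgroup.closure (S 0) := by
      have : S 0 = {g | N g ≤ ε} := by simp [hS]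
      rw [this, hgen]; trivial
    have := hnorm (k + 1)
    have key : ∀ x g : G, ⁅x, g⁆ ∈ H (k + 1) ↔
        Commute (QuotientGroup.mk' (H (k + 1)) x) (QuotientGroup.mk' (H (k + 1)) g) := by
      intro x g
      rw [← commutatorElement_eq_one_iff_commute, ← map_commutatorElement,
        ← MonoidHom.mem_ker, QuotientGroup.ker_mk']
    rw [key]
    have hx' : x ∈ Subgroup.closure (S k) := hx
    have hgx : ∀ s ∈ S 0, Commute (QuotientGroup.mk' (H (k + 1)) x)
        (QuotientGroup.mk' (H (k + 1)) s) := by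
      intro s hs
      induction hx' using Subgroup.closure_induction with
      | mem t ht => exact (key _ _).1 (Subgroup.subset_closure (hcomm k s hs t ht))
      | one => rw [map_one]; exact Commute.one_left _
      | mul _ _ h1 h2 ih1 ih2 => rw [map_mul]; exact (ih1 h1).mul_left (ih2 h2)
      | inv _ h1 ih => rw [map_inv]; exact (ih h1).inv_left
    induction hg using Subgroup.closure_induction with
    | mem s hs => exact hgx s hs
    | one => rw [map_one]; exact Commute.one_right _
    | mul _ _ _ _ ih1 ih2 => rw [map_mul]; exact ih1.mul_right ih2
    | inv _ _ ih => rw [map_inv]; exact ih.inv_right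
  obtain ⟨k, hk⟩ : ∃ k, ∀ g ∈ S k, N g = 0 := by
    have hpos : ∀ g ∈ hfin.toFinset, ∃ k : ℕ, N g ≤ ε / 2 ^ k → N g = 0 := by
      intro g _
      rcases (hN.nonneg g).eq_or_lt with h | h
      · exact ⟨0, fun _ => h.symm⟩
      · have : Tendsto (fun k : ℕ => ε / 2 ^ k) atTop (nhds 0) :=
          tendsto_const_nhds.div_atTop (tendsto_pow_atTop_atTop_of_one_lt (by norm_num))
        obtain ⟨k, hk⟩ := (this.eventually_lt_const h).exists
        exact ⟨k, fun h' => absurd h' (not_le.2 hk)⟩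
    choose! f hf using hpos
    refine ⟨hfin.toFinset.sup f, fun g hg => ?_⟩
    have hg0 : g ∈ hfin.toFinset := by
      rw [Set.Finite.mem_toFinset]
      simpa [hS] using hSanti (Nat.zero_le _) hg
    exact hf g hg0 (hSanti (Finset.le_sup hg0) hg)
  have hzero : ∀ g ∈ H k, N g = 0 := by
    intro g hg
    induction hg using Subgroup.closure_induction with
    | mem s hs => exact hk s hs
    | one => exact hN.one
    | mul x y _ _ hx hy => exact le_antisymm (by linarith [hN.mul_le x y]) (hN.nonneg _)
    | inv x _ hx => rwa [hN.inv]
  have := hnorm k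
  refine isVirtuallyNilpotent_of_descending hdesc k ?_
  exact Set.Finite.to_subtype (hfin.subset fun g hg => by
    simpa [hzero g hg] using hε0)

end VirtuallyNilpotent

section WordBall

variable {G : Type*} [Group G]

/-- The products of at most `n` elements of `S ∪ S⁻¹`. -/
def wordBall (S : Set G) (n : ℕ) : Set G :=
  {g | ∃ L : List G, L.length ≤ n ∧ (∀ u ∈ L, u ∈ S ∨ u⁻¹ ∈ S) ∧ g = L.prod}

variable {S : Set G}

theorem one_mem_wordBall (n : ℕ) : (1 : G) ∈ wordBall S n := ⟨[], by simp⟩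

theorem mem_wordBall_one {s : G} (hs : s ∈ S ∨ s⁻¹ ∈ S) : s ∈ wordBall S 1 :=
  ⟨[s], by simpa using hs⟩

theorem wordBall_mono {m n : ℕ} (h : m ≤ n) : wordBall S m ⊆ wordBall S n :=
  fun _ ⟨L, h1, h2⟩ => ⟨L, h1.trans h, h2⟩

theorem mul_mem_wordBall {m n : ℕ} {g h : G} (hg : g ∈ wordBall S m) (hh : h ∈ wordBall S n) :
    g * h ∈ wordBall S (m + n) := by
  obtain ⟨L, h1, h2, rfl⟩ := hg
  obtain ⟨L', h1', h2', rfl⟩ := hh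
  refine ⟨L ++ L', by simp; omega, ?_, by simp⟩
  intro u hu
  rcases List.mem_append.1 hu with hu | hu
  exacts [h2 u hu, h2' u hu]

theorem inv_mem_wordBall {n : ℕ} {g : G} (hg : g ∈ wordBall S n) : g⁻¹ ∈ wordBall S n := by
  obtain ⟨L, h1, h2, rfl⟩ := hg
  refine ⟨(L.map fun x => x⁻¹).reverse, by simpa using h1, ?_, List.prod_inv_reverse L⟩
  intro u hu
  rw [List.mem_reverse, List.mem_map] at hu
  obtain ⟨v, hv, rfl⟩ := hu
  simpa [or_comm] using h2 v hv

theorem pow_mem_wordBall {n : ℕ} {g : G} (hg : g ∈ wordBall S n) (k : ℕ) :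
    g ^ k ∈ wordBall S (k * n) := by
  induction k with
  | zero => simpa using one_mem_wordBall 0
  | succ k ih => rw [pow_succ, Nat.succ_mul]; exact mul_mem_wordBall ih hg

theorem wordBall_subset_closure (n : ℕ) : wordBall S n ⊆ Subgroup.closure S := by
  rintro _ ⟨L, _, h, rfl⟩
  refine list_prod_mem fun u hu => ?_
  rcases h u hu with h | h
  · exact Subgroup.subset_closure h
  · simpa using inv_mem (Subgroup.subset_closure h)

/-- Either `Λ` has finite index in `closure S`, or the ball of radius `n` meets at least `n + 1`
left cosets of `Λ`. -/
theorem relIndex_ne_zero_or_exists_cosets (S : Set G) (Λ : Subgroup G) :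
    Λ.relIndex (Subgroup.closure S) ≠ 0 ∨ ∀ n : ℕ, ∃ F : Finset G, F.card = n + 1 ∧
      (∀ u ∈ F, u ∈ wordBall S n) ∧ ∀ u ∈ F, ∀ v ∈ F, u⁻¹ * v ∈ Λ → u = v := by
  classical
  by_cases hfin : Λ.relIndex (Subgroup.closure S) = 0
  swap
  · exact Or.inl hfin
  right
  suffices ∀ n : ℕ, ∃ F : Finset G, F.card = n + 1 ∧ (1 : G) ∈ F ∧
      (∀ u ∈ F, u ∈ wordBall S n) ∧ ∀ u ∈ F, ∀ v ∈ F, u⁻¹ * v ∈ Λ → u = v by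
    intro n
    obtain ⟨F, h1, _, h2, h3⟩ := this n
    exact ⟨F, h1, h2, h3⟩
  intro n
  induction n with
  | zero => exact ⟨{1}, by simp, by simp, by simp [one_mem_wordBall], by simp⟩
  | succ n ih =>
    obtain ⟨F, hc, h1, hb, hd⟩ := ih
    by_cases hex : ∃ s, (s ∈ S ∨ s⁻¹ ∈ S) ∧ ∃ u ∈ F, ∀ v ∈ F, v⁻¹ * (s * u) ∉ Λ
    · obtain ⟨s, hs, u, hu, hv⟩ := hex
      have hnot : s * u ∉ F := fun h => hv _ h (by simp)
      refine ⟨insert (s * u) F, by rw [Finset.card_insert_of_notMem hnot, hc],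
        Finset.mem_insert_of_mem h1, ?_, ?_⟩
      · intro w hw
        rcases Finset.mem_insert.1 hw with rfl | hw
        · rw [add_comm]; exact mul_mem_wordBall (mem_wordBall_one hs) (hb u hu)
        · exact wordBall_mono n.le_succ (hb w hw)
      · intro w hw z hz hwz
        rcases Finset.mem_insert.1 hw with rfl | hw <;> rcases Finset.mem_insert.1 hz with rfl | hz
        · rfl
        · exact absurd (by simpa [mul_assoc] using inv_mem hwz) (hv z hz)
        · exact absurd hwz (hv w hw)
        · exact hd w hw z hz hwz
    · push Not at hex
      exfalso
      have hstep : ∀ s, (s ∈ S ∨ s⁻¹ ∈ S) → ∀ g : G, (∃ u ∈ F, u⁻¹ * g ∈ Λ) →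
          ∃ v ∈ F, v⁻¹ * (s * g) ∈ Λ := by
        rintro s hs g ⟨u, hu, hug⟩
        obtain ⟨v, hv, hvu⟩ := hex s hs u hu
        refine ⟨v, hv, ?_⟩
        simpa [mul_assoc] using mul_mem hvu hug
      have hall : ∀ g ∈ Subgroup.closure S, ∃ u ∈ F, u⁻¹ * g ∈ Λ := by
        have : ∀ g ∈ Subgroup.closure S, ∀ h : G, (∃ u ∈ F, u⁻¹ * h ∈ Λ) →
            ∃ v ∈ F, v⁻¹ * (g * h) ∈ Λ := by
          intro g hg
          induction hg using Subgroup.closure_induction'' with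
          | one => simp
          | mem s hs => exact hstep s (Or.inl hs)
          | inv_mem s hs => exact hstep s⁻¹ (Or.inr (by simpa using hs))
          | mul x y _ _ hx hy =>
            intro h hh
            rw [mul_assoc]
            exact hx _ (hy h hh)
        intro g hg
        simpa using this g hg 1 ⟨1, h1, by simp⟩
      choose f hfF hfΛ using hall
      have : Finite (Subgroup.closure S ⧸ Λ.subgroupOf (Subgroup.closure S)) := by
        refine Finite.of_injective
          (β := F) (fun q => ⟨f q.out q.out.2, hfF _ _⟩) fun p q hpq => ?_
        have hpq' : f p.out p.out.2 = f q.out q.out.2 := congrArg Subtype.val hpq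
        rw [← QuotientGroup.out_eq' p, ← QuotientGroup.out_eq' q, QuotientGroup.eq,
          Subgroup.mem_subgroupOf]
        have h1 := hfΛ p.out p.out.2
        have h2 := hfΛ q.out q.out.2
        rw [hpq'] at h1
        simpa [mul_assoc] using mul_mem (inv_mem h1) h2
      exact (Subgroup.finiteIndex_of_finite_quotient
        (H := Λ.subgroupOf (Subgroup.closure S))).index_ne_zero hfin

end WordBall

section Displacement

variable {X : Type*} [MetricSpace X]

theorem dist_mul_apply_le (g h : X ≃ᵢ X) (x : X) :
    dist x ((g * h) x) ≤ dist x (g x) + dist x (h x) := by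
  rw [IsometryEquiv.mul_apply]
  have := dist_triangle x (g x) (g (h x))
  rwa [g.isometry.dist_eq] at this

theorem dist_inv_apply (g : X ≃ᵢ X) (x : X) : dist x (g⁻¹ x) = dist x (g x) := by
  rw [← g.isometry.dist_eq, IsometryEquiv.apply_inv_self, dist_comm]

theorem dist_inv_left (g : X ≃ᵢ X) (x y : X) : dist (g⁻¹ x) y = dist x (g y) := by
  rw [← g.isometry.dist_eq, IsometryEquiv.apply_inv_self]

theorem dist_inv_right (g : X ≃ᵢ X) (x y : X) : dist x (g⁻¹ y) = dist (g x) y := by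
  rw [← g.isometry.dist_eq, IsometryEquiv.apply_inv_self]

theorem dist_pow_apply_le (g : X ≃ᵢ X) (x : X) (n : ℕ) :
    dist x ((g ^ n) x) ≤ n * dist x (g x) := by
  induction n with
  | zero => simp
  | succ n ih =>
    rw [pow_succ]
    push_cast
    linarith [dist_mul_apply_le (g ^ n) g x]

theorem dist_zpow_natAbs (g : X ≃ᵢ X) (x : X) (n : ℤ) :
    dist x ((g ^ n) x) = dist x ((g ^ n.natAbs) x) := by
  obtain ⟨m, rfl | rfl⟩ := n.eq_nat_or_neg
  · simp
  · rw [zpow_neg, dist_inv_apply]; simp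

theorem dist_zpow_apply_le (g : X ≃ᵢ X) (x : X) (n : ℤ) :
    dist x ((g ^ n) x) ≤ |(n : ℝ)| * dist x (g x) := by
  rw [dist_zpow_natAbs]
  simpa [Nat.cast_natAbs] using dist_pow_apply_le g x n.natAbs

theorem dist_conj_apply (g h : X ≃ᵢ X) (x : X) :
    dist (h x) ((h * g * h⁻¹) (h x)) = dist x (g x) := by
  simp [IsometryEquiv.mul_apply, IsometryEquiv.inv_apply_self, h.isometry.dist_eq]

theorem dist_conj_apply' (g h : X ≃ᵢ X) (x : X) :
    dist x ((h * g * h⁻¹) x) = dist (h⁻¹ x) (g (h⁻¹ x)) := by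
  conv_lhs => rw [← IsometryEquiv.apply_inv_self h x]
  rw [dist_conj_apply]

theorem dist_apply_le_of_dist_le (g : X ≃ᵢ X) (x y : X) :
    dist x (g x) ≤ dist y (g y) + 2 * dist x y := by
  have h1 := dist_triangle x y (g x)
  have h2 := dist_triangle y (g y) (g x)
  rw [g.isometry.dist_eq, dist_comm y x] at h2
  linarith

theorem dist_le_of_mem_wordBall {S : Set (X ≃ᵢ X)} {x : X} {r : ℝ} (hr : 0 ≤ r)
    (hS : ∀ s ∈ S, dist x (s x) ≤ r) {n : ℕ} {g : X ≃ᵢ X} (hg : g ∈ wordBall S n) :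
    dist x (g x) ≤ n * r := by
  obtain ⟨L, h1, h2, rfl⟩ := hg
  have : dist x (L.prod x) ≤ L.length * r := by
    clear h1
    induction L with
    | nil => simp
    | cons u L ih =>
      rw [List.prod_cons, List.length_cons]
      push_cast
      have hu : dist x (u x) ≤ r := by
        rcases h2 u (by simp) with h | h
        · exact hS u h
        · rw [← dist_inv_apply]; exact hS _ h
      linarith [dist_mul_apply_le u L.prod x, ih fun v hv => h2 v (by simp [hv])]
  refine this.trans ?_
  gcongr

end Displacement

/-- The group of all `σ`-isometries. -/
def sigmaIsometries {X : Type*} [MetricSpace X] (σ : X → X → ℝ → X) : Subgroup (X ≃ᵢ X) where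
  carrier := {g | IsSigmaIsometry σ g}
  one_mem' := fun _ _ _ _ => rfl
  mul_mem' := by
    intro g h hg hh x y t ht
    rw [IsometryEquiv.mul_apply, hh x y t ht, hg _ _ t ht]
    rfl
  inv_mem' := by
    intro g hg x y t ht
    apply g.injective
    rw [hg _ _ t ht]
    simp

theorem mem_sigmaIsometries {X : Type*} [MetricSpace X] {σ : X → X → ℝ → X} {g : X ≃ᵢ X} :
    g ∈ sigmaIsometries σ ↔ IsSigmaIsometry σ g := Iff.rfl

namespace IsGCB

variable {X : Type*} [MetricSpace X] {σ : X → X → ℝ → X}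

theorem dist_source (hσ : IsGCB σ) (x y : X) {t : ℝ} (ht : t ∈ Set.Icc (0 : ℝ) 1) :
    dist x (σ x y t) = t * dist x y := by
  have := hσ.geodesic x y 0 (by simp) t ht
  rwa [hσ.source, zero_sub, abs_neg, abs_of_nonneg ht.1] at this

theorem dist_target (hσ : IsGCB σ) (x y : X) {t : ℝ} (ht : t ∈ Set.Icc (0 : ℝ) 1) :
    dist (σ x y t) y = (1 - t) * dist x y := by
  have := hσ.geodesic x y t ht 1 (by simp)
  rwa [hσ.target, abs_sub_comm, abs_of_nonneg (by linarith [ht.2])] at this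

theorem dist_sigma_le (hσ : IsGCB σ) (x y x' y' : X) {t : ℝ} (ht : t ∈ Set.Icc (0 : ℝ) 1) :
    dist (σ x y t) (σ x' y' t) ≤ (1 - t) * dist x x' + t * dist y y' := by
  have := (hσ.convex x y x' y').2 (show (0 : ℝ) ∈ Set.Icc (0 : ℝ) 1 by simp)
    (show (1 : ℝ) ∈ Set.Icc (0 : ℝ) 1 by simp) (show (0 : ℝ) ≤ 1 - t by linarith [ht.2]) ht.1
    (by ring)
  simpa [hσ.source, hσ.target] using this

theorem dist_apply_sigma_le (hσ : IsGCB σ) {g h : X ≃ᵢ X} (hg : IsSigmaIsometry σ g)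
    (hh : IsSigmaIsometry σ h) (x y : X) {t : ℝ} (ht : t ∈ Set.Icc (0 : ℝ) 1) :
    dist (g (σ x y t)) (h (σ x y t)) ≤ (1 - t) * dist (g x) (h x) + t * dist (g y) (h y) := by
  rw [hg x y t ht, hh x y t ht]
  exact hσ.dist_sigma_le _ _ _ _ ht

theorem disp_sigma_le (hσ : IsGCB σ) {g : X ≃ᵢ X} (hg : IsSigmaIsometry σ g)
    (x y : X) {t : ℝ} (ht : t ∈ Set.Icc (0 : ℝ) 1) :
    dist (σ x y t) (g (σ x y t)) ≤ (1 - t) * dist x (g x) + t * dist y (g y) :=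
  hσ.dist_apply_sigma_le (one_mem (sigmaIsometries σ)) hg x y ht

/-- A segment can be prolonged. -/
theorem exists_extension (hσ : IsGCB σ) (z y : X) {T : ℝ} (hT : 0 < T) (hd : dist z y ≤ T) :
    ∃ p, dist z p = T ∧ dist y p = T - dist z y ∧ y = σ z p (dist z y / T) := by
  obtain ⟨γ, hγ, hγσ, hγy⟩ := hσ.geodComplete z y
  have h0 : γ 0 = z := by
    have := hγy 0 (by simp)
    rw [hσ.source, zero_mul] at this
    exact this.symm
  have h1 : γ (dist z y) = y := by
    have := hγy 1 (by simp)
    rw [hσ.target, one_mul] at this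
    exact this.symm
  refine ⟨γ T, ?_, ?_, ?_⟩
  · rw [← h0, hγ.dist_eq, Real.dist_eq, zero_sub, abs_neg, abs_of_pos hT]
  · nth_rewrite 1 [← h1]
    rw [hγ.dist_eq, Real.dist_eq, abs_sub_comm, abs_of_nonneg (by linarith)]
  · have := hγσ 0 T hT.le (dist z y / T) ⟨by positivity, (div_le_one hT).2 hd⟩
    rw [h0] at this
    rw [this, zero_add, sub_zero, div_mul_cancel₀ _ hT.ne', h1]

theorem exists_extension_disp (hσ : IsGCB σ) (z y : X) {T : ℝ} (hT : 0 < T) (hd : dist z y ≤ T) :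
    ∃ p, dist z p = T ∧ dist y p = T - dist z y ∧
      ∀ g h : X ≃ᵢ X, IsSigmaIsometry σ g → IsSigmaIsometry σ h →
        T * dist (g y) (h y) ≤ (T - dist z y) * dist (g z) (h z) + dist z y * dist (g p) (h p) := by
  obtain ⟨p, hp1, hp2, hp3⟩ := hσ.exists_extension z y hT hd
  refine ⟨p, hp1, hp2, fun g h hg hh => ?_⟩
  have := hσ.dist_apply_sigma_le hg hh z p (t := dist z y / T)
    ⟨by positivity, (div_le_one hT).2 hd⟩
  rw [← hp3] at this
  have h2 := mul_le_mul_of_nonneg_left this hT.le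
  refine h2.trans (le_of_eq ?_)
  field_simp

theorem midpoint_disp_le (hσ : IsGCB σ) {g : X ≃ᵢ X} (hg : IsSigmaIsometry σ g) (y : X) :
    ∃ m, dist y m = dist y (g y) / 2 ∧ dist m (g m) ≤ dist y (g (g y)) / 2 := by
  have hh : (1 / 2 : ℝ) ∈ Set.Icc (0 : ℝ) 1 := by norm_num
  refine ⟨σ y (g y) (1 / 2), by rw [hσ.dist_source _ _ hh]; ring, ?_⟩
  rw [hg _ _ _ hh, hσ.reversible y (g y) _ hh, show (1 - 1 / 2 : ℝ) = 1 / 2 by norm_num]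
  have := hσ.dist_sigma_le (g y) y (g y) (g (g y)) hh
  rw [dist_self] at this
  linarith

/-- On a ball where the displacement of `g` is small, the displacement of `g * g` is almost twice
that of `g`. -/
theorem two_mul_disp_le (hσ : IsGCB σ) {g : X ≃ᵢ X} (hg : IsSigmaIsometry σ g) {x y : X}
    {ρ l b : ℝ} (hl : 0 < l) (hb : b ≤ 2 * l)
    (hB : ∀ p, dist p x ≤ ρ + l → dist p (g p) ≤ b) (hy : dist y x ≤ ρ) :
    2 * dist y (g y) ≤ dist y (g (g y)) + dist y (g y) * b / l := by
  obtain ⟨m, hm1, hm2⟩ := hσ.midpoint_disp_le hg y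
  have hyb := hB y (by linarith)
  obtain ⟨p, hp1, hp2, hp3⟩ := hσ.exists_extension_disp m y hl
    (by rw [dist_comm, hm1]; linarith)
  have hpb := hB p (by
    have := dist_triangle p y x
    rw [dist_comm p y] at this
    have := dist_nonneg (x := m) (y := y)
    linarith)
  have h := hp3 1 g (one_mem (sigmaIsometries σ)) hg
  change l * dist y (g y) ≤ (l - dist m y) * dist m (g m) + dist m y * dist p (g p) at h
  rw [dist_comm m y, hm1] at h
  have h0 : 0 ≤ dist y (g y) := dist_nonneg
  have h0' : 0 ≤ dist m (g m) := dist_nonneg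
  have h1 : (l - dist y (g y) / 2) * dist m (g m) ≤ l * (dist y (g (g y)) / 2) := by nlinarith
  have h2 : dist y (g y) / 2 * dist p (g p) ≤ dist y (g y) / 2 * b := by gcongr
  have h3 : l * (2 * dist y (g y)) ≤ l * (dist y (g (g y)) + dist y (g y) * b / l) := by
    rw [mul_add, mul_div_cancel₀ _ hl.ne']
    linarith
  exact le_of_mul_le_mul_left h3 hl

end IsGCB

section TranslationLength

variable {X : Type*} [MetricSpace X] {σ : X → X → ℝ → X}

/-- The infimum of the displacement of `g`. -/
noncomputable def transLength (g : X ≃ᵢ X) : ℝ := ⨅ y, dist y (g y)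

theorem bddBelow_disp (g : X ≃ᵢ X) : BddBelow (Set.range fun y => dist y (g y)) :=
  ⟨0, by rintro _ ⟨y, rfl⟩; exact dist_nonneg⟩

theorem transLength_le (g : X ≃ᵢ X) (y : X) : transLength g ≤ dist y (g y) :=
  ciInf_le (bddBelow_disp g) y

theorem transLength_nonneg (g : X ≃ᵢ X) : 0 ≤ transLength g := Real.iInf_nonneg fun _ => dist_nonneg

theorem exists_disp_lt [Nonempty X] (g : X ≃ᵢ X) {η : ℝ} (hη : 0 < η) :
    ∃ y, dist y (g y) < transLength g + η :=
  exists_lt_of_ciInf_lt (lt_add_of_pos_right _ hη)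

theorem le_transLength [Nonempty X] {g : X ≃ᵢ X} {r : ℝ} (h : ∀ y, r ≤ dist y (g y)) :
    r ≤ transLength g := le_ciInf h

theorem IsGCB.two_pow_mul_transLength_le [Nonempty X] (hσ : IsGCB σ) {g : X ≃ᵢ X}
    (hg : IsSigmaIsometry σ g) (k : ℕ) : 2 ^ k * transLength g ≤ transLength (g ^ 2 ^ k) := by
  induction k with
  | zero => simp
  | succ k ih =>
    refine le_transLength fun y => ?_
    obtain ⟨m, -, hm⟩ := hσ.midpoint_disp_le (pow_mem (S := sigmaIsometries σ) hg (2 ^ k)) y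
    have := transLength_le (g ^ 2 ^ k) m
    rw [← IsometryEquiv.mul_apply, ← pow_add, ← two_mul, ← pow_succ'] at hm
    rw [pow_succ]
    linarith

theorem IsGCB.mul_transLength_le_disp (hσ : IsGCB σ) {g : X ≃ᵢ X}
    (hg : IsSigmaIsometry σ g) (n : ℕ) (z : X) : n * transLength g ≤ dist z ((g ^ n) z) := by
  have : Nonempty X := ⟨z⟩
  by_contra! hlt
  obtain rfl | hn := Nat.eq_zero_or_pos n
  · simp at hlt
  have hl := transLength_nonneg g
  obtain ⟨M, hM⟩ := exists_nat_gt (n * dist z (g z) / (n * transLength g - dist z ((g ^ n) z)))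
  rw [div_lt_iff₀ (by linarith)] at hM
  set k := n * M
  have hk : n * M ≤ 2 ^ k := (Nat.lt_two_pow_self).le
  set q := 2 ^ k / n
  set r := 2 ^ k % n
  have hq : M ≤ q := (Nat.le_div_iff_mul_le hn).2 (by rwa [mul_comm])
  have hqr : n * q + r = 2 ^ k := Nat.div_add_mod _ _
  have hr : r < n := Nat.mod_lt _ hn
  have h1 := (hσ.two_pow_mul_transLength_le hg k).trans (transLength_le _ z)
  rw [← hqr, pow_add g, pow_mul g] at h1
  have h2 := dist_mul_apply_le ((g ^ n) ^ q) (g ^ r) z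
  have h3 := dist_pow_apply_le (g ^ n) z q
  have h4 := dist_pow_apply_le g z r
  have h5 : (2 : ℝ) ^ k = n * q + r := by exact_mod_cast hqr.symm
  rw [h5] at h1
  have hd : 0 ≤ dist z (g z) := dist_nonneg
  have h6 : (r : ℝ) * dist z (g z) ≤ n * dist z (g z) := by gcongr
  have h7 : (M : ℝ) ≤ q := by exact_mod_cast hq
  have h8 : 0 ≤ (r : ℝ) * transLength g := by positivity
  nlinarith

theorem IsGCB.abs_mul_transLength_le_disp (hσ : IsGCB σ) {g : X ≃ᵢ X}
    (hg : IsSigmaIsometry σ g) (n : ℤ) (z : X) :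
    |(n : ℝ)| * transLength g ≤ dist z ((g ^ n) z) := by
  rw [dist_zpow_natAbs]
  simpa [Nat.cast_natAbs] using hσ.mul_transLength_le_disp hg n.natAbs z

end TranslationLength

section Packing

universe u

theorem IsPacked.rescale {X : Type u} [MetricSpace X] {σ : X → X → ℝ → X} (hσ : IsGCB σ)
    {P r₀ r : ℝ} (hP : IsPacked X P r₀) (hr : 0 < r) (hrr : r ≤ r₀) : IsPacked X P r := by
  classical
  intro x S hS hsep
  have hr₀ : 0 < r₀ := hr.trans_le hrr
  have ht : r / r₀ ∈ Set.Icc (0 : ℝ) 1 := ⟨by positivity, (div_le_one hr₀).2 hrr⟩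
  have hext : ∀ s : X, ∃ p, dist x p = r₀ / r * dist x s ∧ s = σ x p (r / r₀) := by
    intro s
    rcases eq_or_ne x s with rfl | hne
    · refine ⟨x, by simp, ?_⟩
      have := hσ.dist_source x x ht
      rw [dist_self, mul_zero] at this
      exact eq_of_dist_eq_zero this
    · have hd : 0 < dist x s := dist_pos.2 hne
      obtain ⟨p, h1, -, h3⟩ := hσ.exists_extension x s (T := r₀ / r * dist x s) (by positivity)
        (le_mul_of_one_le_left hd.le ((one_le_div hr).2 hrr))
      refine ⟨p, h1, ?_⟩
      rw [h3]
      congr 1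
      field_simp
  choose f hf1 hf2 using hext
  have hle : ∀ s s', r₀ / r * dist s s' ≤ dist (f s) (f s') := by
    intro s s'
    have := hσ.dist_sigma_le x (f s) x (f s') ht
    rw [← hf2, ← hf2, dist_self, mul_zero, zero_add] at this
    calc r₀ / r * dist s s' ≤ r₀ / r * (r / r₀ * dist (f s) (f s')) := by gcongr
      _ = dist (f s) (f s') := by field_simp
  have hinj : Function.Injective f := by
    intro s s' h
    have h1 := hle s s'
    rw [h, dist_self] at h1
    have h2 : dist s s' ≤ 0 := by
      by_contra! h0
      have : 0 < r₀ / r * dist s s' := by positivity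
      linarith
    exact eq_of_dist_eq_zero (le_antisymm h2 dist_nonneg)
  rw [← Finset.card_image_of_injective S hinj]
  apply hP x
  · intro p hp
    obtain ⟨s, hs, rfl⟩ := Finset.mem_image.1 (Finset.mem_coe.1 hp)
    have := hS (Finset.mem_coe.2 hs)
    rw [mem_closedBall, dist_comm] at this ⊢
    rw [hf1]
    calc r₀ / r * dist x s ≤ r₀ / r * (3 * r) := by gcongr
      _ = 3 * r₀ := by field_simp
  · intro p hp q hq hpq
    obtain ⟨s, hs, rfl⟩ := Finset.mem_image.1 hp
    obtain ⟨s', hs', rfl⟩ := Finset.mem_image.1 hq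
    refine lt_of_lt_of_le ?_ (hle s s')
    have := hsep s hs s' hs' fun h => hpq (by rw [h])
    calc 2 * r₀ = r₀ / r * (2 * r) := by field_simp
      _ < _ := by gcongr

theorem IsPacked.exists_cover {X : Type u} [MetricSpace X] {P r : ℝ} (hP : IsPacked X P r)
    (x : X) : ∃ S : Finset X, S.card ≤ ⌊P⌋₊ ∧
      ∀ y, dist y x ≤ 3 * r → ∃ s ∈ S, dist y s ≤ 2 * r := by
  classical
  set A : Set ℕ := {n | ∃ S : Finset X, S.card = n ∧ (↑S ⊆ closedBall x (3 * r)) ∧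
    ∀ a ∈ S, ∀ b ∈ S, a ≠ b → 2 * r < dist a b} with hA
  have hbd : ∀ n ∈ A, n ≤ ⌊P⌋₊ := by
    rintro _ ⟨S, rfl, h1, h2⟩
    exact Nat.le_floor (hP x S h1 h2)
  have hmem : sSup A ∈ A := Nat.sSup_mem ⟨0, ∅, by simp⟩ ⟨_, hbd⟩
  obtain ⟨S, hc, h1, h2⟩ := hmem
  refine ⟨S, hc ▸ hbd _ ⟨S, hc, h1, h2⟩, fun y hy => ?_⟩
  by_contra! hno
  by_cases hyS : y ∈ S
  · have h := hno y hyS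
    have h0 : (0 : ℝ) ≤ 3 * r := dist_nonneg.trans hy
    rw [dist_self] at h
    linarith
  have hbig : S.card + 1 ∈ A := by
    refine ⟨insert y S, Finset.card_insert_of_notMem hyS, ?_, ?_⟩
    · intro z hz
      rcases Finset.mem_insert.1 (Finset.mem_coe.1 hz) with rfl | hz
      · exact hy
      · exact h1 (Finset.mem_coe.2 hz)
    · intro a ha b hb hab
      rcases Finset.mem_insert.1 ha with ha' | ha' <;>
        rcases Finset.mem_insert.1 hb with hb' | hb'
      · exact absurd (ha'.trans hb'.symm) hab
      · rw [ha']; exact hno _ hb'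
      · rw [hb', dist_comm]; exact hno _ ha'
      · exact h2 a ha' b hb' hab
  have := le_csSup ⟨_, hbd⟩ hbig
  omega

theorem IsPacked.exists_cover_iterate {X : Type u} [MetricSpace X] {σ : X → X → ℝ → X}
    (hσ : IsGCB σ) {P r : ℝ} (hr : 0 < r) (hP : IsPacked X P r) (x : X) (k : ℕ) :
    ∃ S : Finset X, S.card ≤ ⌊P⌋₊ ^ k ∧
      ∀ y, dist y x ≤ (2 + k) * r → ∃ s ∈ S, dist y s ≤ 2 * r := by
  classical
  induction k with
  | zero => exact ⟨{x}, by simp, by simp⟩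
  | succ k ih =>
    obtain ⟨S, hc, hS⟩ := ih
    choose C hC1 hC2 using fun s => hP.exists_cover s
    refine ⟨S.biUnion C, ?_, fun y hy => ?_⟩
    · refine Finset.card_biUnion_le.trans ((Finset.sum_le_card_nsmul _ _ _ fun s _ => hC1 s).trans ?_)
      rw [smul_eq_mul, pow_succ]
      gcongr
    · obtain ⟨y', hy1, hy2⟩ : ∃ y', dist y' x ≤ (2 + k) * r ∧ dist y y' ≤ r := by
        by_cases hyx : dist y x ≤ r
        · refine ⟨x, by rw [dist_self]; positivity, hyx⟩
        · push Not at hyx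
          have hpos : 0 < dist y x := hr.trans hyx
          have ht : r / dist y x ∈ Set.Icc (0 : ℝ) 1 := ⟨by positivity, (div_le_one hpos).2 hyx.le⟩
          refine ⟨σ y x (r / dist y x), ?_, ?_⟩
          · rw [hσ.dist_target _ _ ht, sub_mul, div_mul_cancel₀ _ hpos.ne']
            push_cast at hy
            linarith
          · rw [hσ.dist_source _ _ ht, div_mul_cancel₀ _ hpos.ne']
      obtain ⟨s, hs, hys⟩ := hS y' hy1
      obtain ⟨s', hs', hys'⟩ := hC2 s y (by linarith [dist_triangle y y' s])
      exact ⟨s', Finset.mem_biUnion.2 ⟨s, hs, hs'⟩, hys'⟩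

/-- Balls in packed GCB-spaces admit finite nets of uniformly bounded cardinality. -/
theorem exists_uniform_net (P r₀ : ℝ) (hr₀ : 0 < r₀) (R η : ℝ) (hη : 0 < η) :
    ∃ n : ℕ, ∀ (X : Type u) [MetricSpace X] (σ : X → X → ℝ → X), IsGCB σ → IsPacked X P r₀ →
      ∀ x : X, ∃ S : Finset X, S.card ≤ n ∧ ∀ y, dist y x ≤ R → ∃ s ∈ S, dist y s ≤ η := by
  set r := min r₀ (η / 2) with hr
  have hr0 : 0 < r := lt_min hr₀ (by positivity)
  obtain ⟨k, hk⟩ := exists_nat_ge (R / r)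
  refine ⟨⌊P⌋₊ ^ k, fun X _ σ hσ hP x => ?_⟩
  obtain ⟨S, h1, h2⟩ := (hP.rescale hσ hr0 (min_le_left _ _)).exists_cover_iterate hσ hr0 x k
  refine ⟨S, h1, fun y hy => ?_⟩
  obtain ⟨s, hs, hys⟩ := h2 y (by rw [div_le_iff₀ hr0] at hk; nlinarith)
  exact ⟨s, hs, by linarith [min_le_right r₀ (η / 2)]⟩

theorem exists_uniform_pigeonhole (P r₀ : ℝ) (hr₀ : 0 < r₀) (R η : ℝ) (hη : 0 < η) :
    ∃ n : ℕ, ∀ (X : Type u) [MetricSpace X] (σ : X → X → ℝ → X), IsGCB σ → IsPacked X P r₀ →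
      ∀ (x : X) (f : Fin (n + 1) → X), (∀ i, dist (f i) x ≤ R) →
        ∃ i j, i ≠ j ∧ dist (f i) (f j) ≤ η := by
  obtain ⟨n, hn⟩ := exists_uniform_net P r₀ hr₀ R (η / 2) (by positivity)
  refine ⟨n, fun X _ σ hσ hP x f hf => ?_⟩
  obtain ⟨S, hS, hnet⟩ := hn X σ hσ hP x
  choose c hc1 hc2 using fun i => hnet (f i) (hf i)
  obtain ⟨i, j, hij, h⟩ := Fintype.exists_ne_map_eq_of_card_lt
    (fun i => (⟨c i, hc1 i⟩ : S)) (by simp; omega)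
  refine ⟨i, j, hij, ?_⟩
  have h' : c i = c j := congrArg Subtype.val h
  have h1 := hc2 i
  rw [h'] at h1
  linarith [dist_triangle_right (f i) (f j) (c j), hc2 j]

/-- Among sufficiently many isometries with bounded displacement at `x`, two are uniformly close on
a given ball. -/
theorem exists_uniform_pigeonhole_isometry (P r₀ : ℝ) (hr₀ : 0 < r₀) (R r η : ℝ)
    (hη : 0 < η) :
    ∃ n : ℕ, ∀ (X : Type u) [MetricSpace X] (σ : X → X → ℝ → X), IsGCB σ → IsPacked X P r₀ →
      ∀ (x : X) (g : Fin (n + 1) → X ≃ᵢ X), (∀ i, dist x (g i x) ≤ r) →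
        ∃ i j, i ≠ j ∧ ∀ y, dist y x ≤ R → dist (g i y) (g j y) ≤ η := by
  obtain ⟨n, hn⟩ := exists_uniform_net.{u} P r₀ hr₀ R (η / 4) (by positivity)
  obtain ⟨m, hm⟩ := exists_uniform_net.{u} P r₀ hr₀ (R + η + r) (η / 4) (by positivity)
  refine ⟨(m + 1) ^ n, fun X _ σ hσ hP x g hg => ?_⟩
  obtain ⟨S, hS, hSnet⟩ := hn X σ hσ hP x
  obtain ⟨S', hS', hSnet'⟩ := hm X σ hσ hP x
  classical
  set c : Fin ((m + 1) ^ n + 1) → S → Option S' := fun i s =>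
    if h : ∃ s' ∈ S', dist (g i s) s' ≤ η / 4 then some ⟨h.choose, h.choose_spec.1⟩ else none
    with hc
  have hcard : Fintype.card (S → Option S') < Fintype.card (Fin ((m + 1) ^ n + 1)) := by
    simp only [Fintype.card_fun, Fintype.card_option, Fintype.card_coe, Fintype.card_fin]
    have h1 : (S'.card + 1) ^ S.card ≤ (m + 1) ^ S.card := Nat.pow_le_pow_left (by omega) _
    have h2 : (m + 1) ^ S.card ≤ (m + 1) ^ n := Nat.pow_le_pow_right (by omega) hS
    omega
  obtain ⟨i, j, hij, h⟩ := Fintype.exists_ne_map_eq_of_card_lt c hcard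
  refine ⟨i, j, hij, fun y hy => ?_⟩
  obtain ⟨s, hs, hys⟩ := hSnet y hy
  have hex : ∀ k, ∃ s' ∈ S', dist (g k s) s' ≤ η / 4 := by
    intro k
    apply hSnet'
    have h1 := dist_triangle (g k s) (g k x) x
    rw [(g k).isometry.dist_eq, dist_comm (g k x)] at h1
    have h2 := dist_triangle_left s x y
    linarith [hg k]
  have hcs := congrFun h ⟨s, hs⟩
  simp only [hc, dif_pos (hex i), dif_pos (hex j), Option.some.injEq, Subtype.mk.injEq] at hcs
  have h1 := (hex i).choose_spec.2
  have h2 := (hex j).choose_spec.2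
  rw [hcs] at h1
  have h3 := dist_triangle (g i y) (g i s) (g j y)
  have h4 := dist_triangle (g i s) (g j s) (g j y)
  have h5 := dist_triangle_right (g i s) (g j s) (hex j).choose
  rw [(g i).isometry.dist_eq] at h3
  rw [(g j).isometry.dist_eq, dist_comm s y] at h4
  linarith

end Packing

section LocalNilpotency

universe u

/-- `GoodRadius Γ x ρ τ` says that elements of `Γ` which are very small on the ball of radius `ρ`
are still controlled on the ball of radius `ρ + τ`. -/
def GoodRadius {X : Type u} [MetricSpace X] (Γ : Subgroup (X ≃ᵢ X)) (x : X) (ρ τ : ℝ) : Prop :=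
  ∀ k ∈ Γ, (∀ y, dist y x ≤ ρ → dist y (k y) ≤ τ / 800) →
    ∀ y, dist y x ≤ ρ + τ → dist y (k y) ≤ τ / 100

theorem exists_goodRadius (P r₀ : ℝ) (hr₀ : 0 < r₀) :
    ∃ τ : ℝ, 0 < τ ∧ τ ≤ 1 ∧ ∀ (X : Type u) [MetricSpace X] (σ : X → X → ℝ → X), IsGCB σ →
      IsPacked X P r₀ → ∀ Γ ≤ sigmaIsometries σ, ∀ x : X,
        ∃ ρ : ℝ, 1 ≤ ρ ∧ ρ ≤ 2 ∧ GoodRadius Γ x ρ τ := by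
  obtain ⟨n, hn⟩ := exists_uniform_pigeonhole_isometry.{u} P r₀ hr₀ 3 1 (1 / 200) (by norm_num)
  set τ : ℝ := 1 / (n + 1) with hτ
  have hτ0 : 0 < τ := by positivity
  have hτ1 : τ ≤ 1 := by
    rw [hτ, div_le_one (by positivity)]
    linarith [(Nat.cast_nonneg n : (0 : ℝ) ≤ n)]
  have hnτ : (n + 1) * τ = 1 := by rw [hτ]; field_simp
  refine ⟨τ, hτ0, hτ1, fun X _ σ hσ hP Γ hΓ x => ?_⟩
  by_contra! hno
  have hR : ∀ i : Fin (n + 1), (1 : ℝ) ≤ 1 + i * τ ∧ 1 + i * τ ≤ 2 := by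
    intro i
    have h1 : (i : ℝ) ≤ n + 1 := by exact_mod_cast i.2.le
    have h2 : (0 : ℝ) ≤ i * τ := by positivity
    exact ⟨by linarith, by nlinarith⟩
  have h1 : ∀ i : Fin (n + 1), ∃ k ∈ Γ, (∀ y, dist y x ≤ 1 + i * τ → dist y (k y) ≤ τ / 800) ∧
      ∃ y, dist y x ≤ 1 + i * τ + τ ∧ τ / 100 < dist y (k y) := by
    intro i
    have := hno (1 + i * τ) (hR i).1 (hR i).2
    simpa only [GoodRadius, not_forall, not_le, exists_prop] using this
  choose k hkΓ hk y hy1 hy2 using h1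
  have h2 : ∀ i : Fin (n + 1), ∃ z p : X, dist z x ≤ 1 + i * τ ∧ dist p x ≤ 3 ∧
      ∃ s, 0 ≤ s ∧ s ≤ τ ∧ ∀ g h : X ≃ᵢ X, IsSigmaIsometry σ g → IsSigmaIsometry σ h →
        dist (g (y i)) (h (y i)) ≤
          (1 - s) * dist (g z) (h z) + s * dist (g p) (h p) := by
    intro i
    have hlt : 1 + i * τ < dist x (y i) := by
      by_contra! h
      have := hk i (y i) (by rwa [dist_comm])
      linarith [hy2 i]
    have hpos : 0 < dist x (y i) := by linarith [(hR i).1]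
    have ht : (1 + i * τ) / dist x (y i) ∈ Set.Icc (0 : ℝ) 1 :=
      ⟨by have := (hR i).1; positivity, (div_le_one hpos).2 hlt.le⟩
    set z := σ x (y i) ((1 + i * τ) / dist x (y i)) with hz
    have hz1 : dist x z = 1 + i * τ := by
      rw [hz, hσ.dist_source _ _ ht, div_mul_cancel₀ _ hpos.ne']
    have hz2 : dist z (y i) = dist x (y i) - (1 + i * τ) := by
      rw [hz, hσ.dist_target _ _ ht, sub_mul, div_mul_cancel₀ _ hpos.ne', one_mul]
    have hyi := hy1 i
    rw [dist_comm] at hyi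
    obtain ⟨p, hp1, hp2, hp3⟩ := hσ.exists_extension_disp z (y i) (T := 1) one_pos (by linarith)
    refine ⟨z, p, by rw [dist_comm, hz1], ?_, dist z (y i), dist_nonneg, by linarith, ?_⟩
    · have := dist_triangle_left p x z
      rw [hp1, dist_comm z x, hz1] at this
      linarith [(hR i).2]
    · intro g h hg hh
      have := hp3 g h hg hh
      rwa [one_mul] at this
  choose z p hz hp s hs0 hs1 hs using h2
  have key : ∀ i j : Fin (n + 1), i < j → 1 / 200 < dist (k i (p i)) (k j (p i)) := by
    intro i j hij
    have hij' : (1 + i * τ) + τ ≤ 1 + j * τ := by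
      have : (i : ℝ) + 1 ≤ j := by exact_mod_cast hij
      nlinarith
    have e1 := hs i (k i) (k j) (hΓ (hkΓ i)) (hΓ (hkΓ j))
    have e2 := hk j (y i) (by linarith [hy1 i])
    have e3 := hk j (z i) (by linarith [hz i])
    have e4 := hk i (z i) (hz i)
    have e5 := dist_triangle_left (k i (z i)) (k j (z i)) (z i)
    have e6 := dist_triangle_right (y i) (k i (y i)) (k j (y i))
    have e7 := hy2 i
    have e8 : (1 - s i) * dist (k i (z i)) (k j (z i)) ≤ 1 * (τ / 400) := by
      have := hs0 i
      have : s i ≤ 1 := (hs1 i).trans hτ1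
      apply mul_le_mul _ _ dist_nonneg (by norm_num) <;> linarith
    by_contra! hle
    have e9 : s i * dist (k i (p i)) (k j (p i)) ≤ τ * (1 / 200) :=
      mul_le_mul (hs1 i) hle dist_nonneg hτ0.le
    linarith
  obtain ⟨i, j, hij, h⟩ := hn X σ hσ hP x k fun i => by
    have := hk i x (by rw [dist_self]; linarith [(hR i).1])
    linarith
  rcases lt_or_gt_of_ne hij with hlt | hlt
  · linarith [key i j hlt, h (p i) (hp i)]
  · have := key j i hlt
    rw [dist_comm] at this
    linarith [h (p j) (hp j)]

variable {X : Type u} [MetricSpace X] {σ : X → X → ℝ → X} {Γ : Subgroup (X ≃ᵢ X)} {x : X}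
  {ρ τ : ℝ}

theorem IsGCB.disp_le_of_iterates (hσ : IsGCB σ) (hτ : 0 < τ) (j : ℕ) :
    ∀ g : X ≃ᵢ X, IsSigmaIsometry σ g →
      (∀ i ≤ j, ∀ y, dist y x ≤ ρ + τ → dist y ((g ^ 2 ^ i) y) ≤ τ / 100) →
      ∀ y, dist y x ≤ ρ + τ - τ / 2 * (1 - (3 / 4) ^ j) →
        dist y (g y) ≤ τ / 100 * (2 - (2 / 3) ^ j) / 2 ^ j := by
  induction j with
  | zero =>
    intro g _ h y hy
    have := h 0 le_rfl y (by simpa using hy)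
    norm_num at this ⊢
    linarith
  | succ j ih =>
    intro g hg h y hy
    have h1 := ih g hg fun i hi => h i (by omega)
    have h2 := ih (g * g) ((sigmaIsometries σ).mul_mem hg hg) fun i hi y hy => by
      have := h (i + 1) (by omega) y hy
      rwa [pow_succ', pow_mul, pow_two] at this
    set b := τ / 100 * (2 - (2 / 3) ^ j) / 2 ^ j with hb
    have hq : (0 : ℝ) < (3 / 4) ^ j := by positivity
    have hr : (0 : ℝ) < (2 / 3) ^ j := by positivity
    have hr1 : ((2 : ℝ) / 3) ^ j ≤ 1 := pow_le_one₀ (by norm_num) (by norm_num)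
    have hb0 : 0 ≤ b := by
      have : 0 ≤ 2 - ((2 : ℝ) / 3) ^ j := by linarith
      positivity
    have hqr : ((1 : ℝ) / 2) ^ j = (3 / 4) ^ j * (2 / 3) ^ j := by
      rw [← mul_pow]; norm_num
    have hbr : b = τ / 100 * (2 - (2 / 3) ^ j) * ((3 / 4) ^ j * (2 / 3) ^ j) := by
      rw [hb, ← hqr, one_div, inv_pow, div_eq_mul_inv]
    have hbq : b ≤ τ / 50 * ((3 / 4) ^ j * (2 / 3) ^ j) := by
      rw [hbr]
      apply mul_le_mul_of_nonneg_right _ (by positivity)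
      nlinarith
    have hbq' : b ≤ τ / 50 * (3 / 4) ^ j := hbq.trans (by
      apply mul_le_mul_of_nonneg_left _ (by positivity)
      nlinarith)
    have hl : 0 < τ / 8 * (3 / 4) ^ j := by positivity
    have hstep := hσ.two_mul_disp_le hg (x := x) (y := y) (b := b)
      (ρ := ρ + τ - τ / 2 * (1 - (3 / 4) ^ (j + 1))) hl (by nlinarith)
      (fun p hp => h1 p (by rw [pow_succ] at hp; linarith)) hy
    have hy' : dist y x ≤ ρ + τ - τ / 2 * (1 - (3 / 4) ^ j) := by
      rw [pow_succ] at hy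
      nlinarith
    have g1 := h1 y hy'
    have g2 := h2 y hy'
    rw [IsometryEquiv.mul_apply] at g2
    have g3 : dist y (g y) * b / (τ / 8 * (3 / 4) ^ j) ≤ b * (4 / 25 * (2 / 3) ^ j) := by
      rw [div_le_iff₀ hl]
      have : dist y (g y) * b ≤ b * b := by gcongr
      refine this.trans ?_
      rw [mul_assoc]
      apply mul_le_mul_of_nonneg_left _ hb0
      refine hbq.trans (le_of_eq ?_)
      ring
    have g4 : dist y (g y) ≤ b * (1 + 4 / 25 * (2 / 3) ^ j) / 2 := by linarith
    refine g4.trans ?_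
    rw [hb, pow_succ, pow_succ]
    have g5 : (2 - ((2 : ℝ) / 3) ^ j) * (1 + 4 / 25 * (2 / 3) ^ j) ≤ 2 - (2 / 3) ^ j * (2 / 3) := by
      nlinarith
    calc τ / 100 * (2 - (2 / 3) ^ j) / 2 ^ j * (1 + 4 / 25 * (2 / 3) ^ j) / 2
        = τ / 100 / (2 ^ j * 2) * ((2 - (2 / 3) ^ j) * (1 + 4 / 25 * (2 / 3) ^ j)) := by
          field_simp
      _ ≤ τ / 100 / (2 ^ j * 2) * (2 - (2 / 3) ^ j * (2 / 3)) := by gcongr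
      _ = _ := by field_simp

theorem GoodRadius.doubling (hσ : IsGCB σ) (hΓ : Γ ≤ sigmaIsometries σ) (hτ : 0 < τ)
    (h : GoodRadius Γ x ρ τ) {g : X ≃ᵢ X} (hg : g ∈ Γ) {α : ℝ} (hα0 : 0 ≤ α) (hα : α ≤ τ / 800)
    (hgα : ∀ y, dist y x ≤ ρ → dist y (g y) ≤ α) :
    ∀ y, dist y x ≤ ρ + τ / 2 → dist y (g y) ≤ 32 * α := by
  have main : ∀ β, 0 < β → α ≤ β → β ≤ τ / 800 →
      ∀ y, dist y x ≤ ρ + τ / 2 → dist y (g y) ≤ 32 * β := by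
    intro β hβ0 hαβ hβ y hy
    obtain ⟨j, hj1, hj2⟩ := exists_nat_pow_near (x := τ / 800 / β) (y := (2 : ℝ))
      (by rw [le_div_iff₀ hβ0]; linarith) (by norm_num)
    rw [le_div_iff₀ hβ0] at hj1
    rw [div_lt_iff₀ hβ0] at hj2
    have hq : (0 : ℝ) < (3 / 4) ^ j := by positivity
    have hr : (0 : ℝ) < (2 / 3) ^ j := by positivity
    have := hσ.disp_le_of_iterates (x := x) (ρ := ρ) hτ j g (hΓ hg) (fun i hi => by
      apply h _ (pow_mem hg _)
      intro y hy
      have h1 := dist_pow_apply_le g y (2 ^ i)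
      have h2 := hgα y hy
      push_cast at h1
      have h3 : (2 : ℝ) ^ i ≤ 2 ^ j := pow_le_pow_right₀ (by norm_num) hi
      calc _ ≤ (2 : ℝ) ^ i * dist y (g y) := h1
        _ ≤ 2 ^ j * β := by gcongr; linarith
        _ ≤ _ := hj1) y (by nlinarith)
    refine this.trans ?_
    rw [div_le_iff₀ (by positivity)]
    rw [pow_succ] at hj2
    nlinarith
  rcases hα0.eq_or_lt with h0 | h0
  · intro y hy
    by_contra! hlt
    rw [← h0, mul_zero] at hlt
    have := main (min (τ / 800) (dist y (g y) / 64)) (by positivity) (by rw [← h0]; positivity)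
      (min_le_left _ _) y hy
    linarith [min_le_right (τ / 800) (dist y (g y) / 64)]
  · exact main α h0 le_rfl hα

/-- The supremum of the displacement of `g` on the ball of centre `x` and radius `ρ`. -/
noncomputable def supDisp (x : X) (ρ : ℝ) (g : X ≃ᵢ X) : ℝ :=
  ⨆ y : {y : X // dist y x ≤ ρ}, dist y.1 (g y.1)

theorem le_supDisp (g : X ≃ᵢ X) {y : X} (hy : dist y x ≤ ρ) : dist y (g y) ≤ supDisp x ρ g := by
  refine le_ciSup (f := fun y : {y : X // dist y x ≤ ρ} => dist y.1 (g y.1))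
    ⟨dist x (g x) + 2 * ρ, ?_⟩ ⟨y, hy⟩
  rintro _ ⟨⟨z, hz⟩, rfl⟩
  have := dist_apply_le_of_dist_le g z x
  dsimp only
  linarith

theorem supDisp_le (hρ : 0 ≤ ρ) {g : X ≃ᵢ X} {b : ℝ} (h : ∀ y, dist y x ≤ ρ → dist y (g y) ≤ b) :
    supDisp x ρ g ≤ b := by
  have : Nonempty {y : X // dist y x ≤ ρ} := ⟨⟨x, by simpa using hρ⟩⟩
  exact ciSup_le fun y => h y.1 y.2

theorem GoodRadius.isAlmostHomogeneous (hσ : IsGCB σ) (hΓ : Γ ≤ sigmaIsometries σ) (hτ : 0 < τ)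
    (hρ : 0 ≤ ρ) (h : GoodRadius Γ x ρ τ) :
    IsAlmostHomogeneous (2 / 25) fun g : Γ => 64 / τ * supDisp x ρ (g : X ≃ᵢ X) := by
  have hx : dist x x ≤ ρ := by simpa using hρ
  have h0 : ∀ g : X ≃ᵢ X, 0 ≤ supDisp x ρ g := fun g => dist_nonneg.trans (le_supDisp g hx)
  have hL : 0 < 64 / τ := by positivity
  have hκ : ∀ g : X ≃ᵢ X, 64 / τ * supDisp x ρ g ≤ 2 / 25 → supDisp x ρ g ≤ τ / 800 := by
    intro g hg
    rw [div_mul_eq_mul_div, div_le_iff₀ hτ] at hg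
    linarith
  refine ⟨fun g => mul_nonneg hL.le (h0 _), ?_, ?_, ?_, ?_, ?_⟩
  · have : supDisp x ρ (1 : X ≃ᵢ X) ≤ 0 := supDisp_le hρ fun y _ => by simp
    simp [le_antisymm this (h0 1)]
  · rintro ⟨g, hg⟩
    have : ∀ g : X ≃ᵢ X, supDisp x ρ g⁻¹ = supDisp x ρ g := fun g => by
      simp only [supDisp, dist_inv_apply]
    simp [this]
  · rintro ⟨g, hg⟩ ⟨k, hk⟩
    rw [← mul_add]
    refine mul_le_mul_of_nonneg_left (supDisp_le hρ fun y hy => ?_) hL.le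
    exact (dist_mul_apply_le g k y).trans (add_le_add (le_supDisp g hy) (le_supDisp k hy))
  · rintro ⟨g, hg⟩ ⟨k, hk⟩ hgκ hkκ
    have hg' := hκ g hgκ
    have hk' := hκ k hkκ
    rw [mul_left_comm]
    refine mul_le_mul_of_nonneg_left (supDisp_le hρ fun y hy => ?_) hL.le
    change dist y ((k * g * k⁻¹) y) ≤ _
    rw [dist_conj_apply']
    have ht : dist y (k⁻¹ y) ≤ supDisp x ρ k := by
      rw [dist_inv_apply]; exact le_supDisp k hy
    obtain ⟨p, hp1, -, hp3⟩ := hσ.exists_extension_disp y (k⁻¹ y) (T := τ / 2) (by positivity)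
      (by linarith)
    have hpg := h.doubling hσ hΓ hτ hg (h0 g) hg' (fun y hy => le_supDisp g hy) p (by
      have := dist_triangle_left p x y
      linarith)
    have e := hp3 1 g (one_mem (sigmaIsometries σ)) (hΓ hg)
    change τ / 2 * dist (k⁻¹ y) (g (k⁻¹ y)) ≤ (τ / 2 - dist y (k⁻¹ y)) * dist y (g y) +
      dist y (k⁻¹ y) * dist p (g p) at e
    have e1 : (τ / 2 - dist y (k⁻¹ y)) * dist y (g y) ≤ τ / 2 * supDisp x ρ g := by
      have h1 := le_supDisp g hy
      have h2 : 0 ≤ dist y (k⁻¹ y) := dist_nonneg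
      have h3 : 0 ≤ dist y (g y) := dist_nonneg
      nlinarith
    have e2 : dist y (k⁻¹ y) * dist p (g p) ≤ supDisp x ρ k * (32 * supDisp x ρ g) := by
      gcongr
      exact h0 k
    have e3 : τ / 2 * dist (k⁻¹ y) (g (k⁻¹ y)) ≤
        τ / 2 * ((1 + 64 / τ * supDisp x ρ k) * supDisp x ρ g) := by
      refine (e.trans (add_le_add e1 e2)).trans (le_of_eq ?_)
      field_simp
      ring
    exact le_of_mul_le_mul_left e3 (by positivity)
  · rintro ⟨g, hg⟩ hgκ
    have hg' := hκ g hgκ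
    change 2 * (64 / τ * supDisp x ρ g) - (64 / τ * supDisp x ρ g) ^ 2 ≤
      64 / τ * supDisp x ρ (g * g)
    have hsup : supDisp x ρ g ≤ (supDisp x ρ (g * g) + 64 / τ * supDisp x ρ g ^ 2) / 2 := by
      refine supDisp_le hρ fun y hy => ?_
      have e := hσ.two_mul_disp_le (hΓ hg) (x := x) (y := y) (ρ := ρ) (l := τ / 2)
        (b := 32 * supDisp x ρ g) (by positivity) (by linarith)
        (h.doubling hσ hΓ hτ hg (h0 g) hg' fun y hy => le_supDisp g hy) hy
      have e1 := le_supDisp (x := x) (ρ := ρ) (g * g) hy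
      rw [IsometryEquiv.mul_apply] at e1
      have e2 : dist y (g y) * (32 * supDisp x ρ g) / (τ / 2) ≤ 64 / τ * supDisp x ρ g ^ 2 := by
        have : dist y (g y) * (32 * supDisp x ρ g) ≤ supDisp x ρ g * (32 * supDisp x ρ g) :=
          mul_le_mul_of_nonneg_right (le_supDisp g hy) (by linarith [h0 g])
        calc _ ≤ supDisp x ρ g * (32 * supDisp x ρ g) / (τ / 2) := by gcongr
          _ = _ := by field_simp; ring
      linarith
    have := mul_le_mul_of_nonneg_left hsup hL.le
    nlinarith

/-- A discrete group generated by isometries which are very small on a ball of radius two is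
virtually nilpotent. -/
theorem exists_isVirtuallyNilpotent_of_small (P r₀ : ℝ) (hr₀ : 0 < r₀) :
    ∃ ε : ℝ, 0 < ε ∧ ∀ (X : Type u) [MetricSpace X] (σ : X → X → ℝ → X), IsGCB σ →
      IsPacked X P r₀ → ∀ Γ ≤ sigmaIsometries σ, IsDiscreteSubgroup Γ → ∀ x : X,
        IsVirtuallyNilpotent ↥(Subgroup.closure
          {g : X ≃ᵢ X | g ∈ Γ ∧ ∀ y, dist y x ≤ 2 → dist y (g y) ≤ ε}) := by
  obtain ⟨τ, hτ, -, hgood⟩ := exists_goodRadius.{u} P r₀ hr₀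
  refine ⟨τ / 64 * (1 / 10 ^ 12), by positivity, fun X _ σ hσ hP Γ hΓ hd x => ?_⟩
  set S := {g : X ≃ᵢ X | g ∈ Γ ∧ ∀ y, dist y x ≤ 2 → dist y (g y) ≤ τ / 64 * (1 / 10 ^ 12)}
  set Λ := Subgroup.closure S
  have hΛΓ : Λ ≤ Γ := (Subgroup.closure_le _).2 fun g hg => hg.1
  obtain ⟨ρ, hρ1, hρ2, hρ⟩ := hgood X σ hσ hP Λ (hΛΓ.trans hΓ) x
  have hρ0 : 0 ≤ ρ := by linarith
  refine (hρ.isAlmostHomogeneous hσ (hΛΓ.trans hΓ) hτ hρ0).isVirtuallyNilpotent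
    (ε := 1 / 10 ^ 12) (by norm_num) le_rfl ?_ ?_
  · refine Set.Finite.of_finite_image (f := Subtype.val)
      ((hd x (τ / 64 * (1 / 10 ^ 12))).subset ?_) Subtype.val_injective.injOn
    rintro _ ⟨⟨g, hg⟩, hgN, rfl⟩
    refine ⟨hΛΓ hg, ?_⟩
    have hgN' : 64 / τ * supDisp x ρ g ≤ 1 / 10 ^ 12 := hgN
    refine (le_supDisp (x := x) (ρ := ρ) g (y := x) (by simpa using hρ0)).trans ?_
    calc supDisp x ρ g = τ / 64 * (64 / τ * supDisp x ρ g) := by field_simp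
      _ ≤ _ := by gcongr
  · rw [eq_top_iff, ← Subgroup.closure_closure_coe_preimage (k := S)]
    refine Subgroup.closure_mono ?_
    rintro ⟨g, hg⟩ hgS
    change 64 / τ * supDisp x ρ g ≤ 1 / 10 ^ 12
    have : supDisp x ρ g ≤ τ / 64 * (1 / 10 ^ 12) :=
      supDisp_le hρ0 fun y hy => hgS.2 y (hy.trans hρ2)
    calc 64 / τ * supDisp x ρ g ≤ 64 / τ * (τ / 64 * (1 / 10 ^ 12)) := by gcongr
      _ = _ := by field_simp

/-- A discrete group in which all short words have bounded displacement at a point is virtually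
nilpotent. -/
theorem exists_isVirtuallyNilpotent_of_wordBall (P r₀ : ℝ) (hr₀ : 0 < r₀) (r : ℝ) :
    ∃ n : ℕ, ∀ (X : Type u) [MetricSpace X] (σ : X → X → ℝ → X), IsGCB σ →
      IsPacked X P r₀ → ∀ S : Set (X ≃ᵢ X), S ⊆ sigmaIsometries σ →
        IsDiscreteSubgroup (Subgroup.closure S) → ∀ x : X,
          (∀ g ∈ wordBall S n, dist x (g x) ≤ r) → IsVirtuallyNilpotent ↥(Subgroup.closure S) := by
  obtain ⟨ε, hε, hA⟩ := exists_isVirtuallyNilpotent_of_small.{u} P r₀ hr₀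
  obtain ⟨n, hn⟩ := exists_uniform_pigeonhole_isometry.{u} P r₀ hr₀ 2 r ε hε
  refine ⟨n, fun X _ σ hσ hP S hS hd x hx => ?_⟩
  have hΓ : Subgroup.closure S ≤ sigmaIsometries σ := (Subgroup.closure_le _).2 hS
  have hvn := hA X σ hσ hP _ hΓ hd x
  set Λ := Subgroup.closure
    {g : X ≃ᵢ X | g ∈ Subgroup.closure S ∧ ∀ y, dist y x ≤ 2 → dist y (g y) ≤ ε} with hΛ
  rcases relIndex_ne_zero_or_exists_cosets S Λ with h | h
  · exact hvn.of_relIndex_ne_zero ((Subgroup.closure_le _).2 fun g hg => hg.1) h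
  · exfalso
    obtain ⟨F, hc, hF, hFΛ⟩ := h n
    set e := F.equivFinOfCardEq hc
    obtain ⟨i, j, hij, hclose⟩ := hn X σ hσ hP x (fun i => (e.symm i : X ≃ᵢ X)) fun i =>
      hx _ (hF _ (e.symm i).2)
    apply hij
    apply e.symm.injective
    apply Subtype.ext
    apply hFΛ _ (e.symm i).2 _ (e.symm j).2
    refine Subgroup.subset_closure ⟨mul_mem (inv_mem ?_) ?_, fun y hy => ?_⟩
    · exact wordBall_subset_closure _ (hF _ (e.symm i).2)
    · exact wordBall_subset_closure _ (hF _ (e.symm j).2)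
    · rw [IsometryEquiv.mul_apply, dist_inv_right]
      exact hclose y hy

/-- A Margulis constant for pairs of isometries. -/
theorem exists_margulis_constant (P r₀ : ℝ) (hr₀ : 0 < r₀) :
    ∃ ε : ℝ, 0 < ε ∧ ∀ (X : Type u) [MetricSpace X] (σ : X → X → ℝ → X), IsGCB σ →
      IsPacked X P r₀ → ∀ g h : X ≃ᵢ X, IsSigmaIsometry σ g → IsSigmaIsometry σ h →
        IsDiscreteSubgroup (Subgroup.closure {g, h}) → ∀ x : X,
          dist x (g x) ≤ ε → dist x (h x) ≤ ε →
            IsVirtuallyNilpotent ↥(Subgroup.closure ({g, h} : Set (X ≃ᵢ X))) := by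
  obtain ⟨n, hn⟩ := exists_isVirtuallyNilpotent_of_wordBall.{u} P r₀ hr₀ 1
  refine ⟨1 / (n + 1), by positivity, fun X _ σ hσ hP g h hg hh hd x hgx hhx => ?_⟩
  refine hn X σ hσ hP {g, h} ?_ hd x fun w hw => ?_
  · rintro _ (rfl | rfl)
    exacts [hg, hh]
  · refine (dist_le_of_mem_wordBall (r := 1 / (n + 1)) (by positivity) ?_ hw).trans ?_
    · rintro _ (rfl | rfl)
      exacts [hgx, hhx]
    · rw [mul_one_div, div_le_one (by positivity)]
      linarith

end LocalNilpotency

section GromovProduct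

variable {X : Type*} [MetricSpace X] {δ : ℝ}

/-- The Gromov product of `p` and `q` based at `z`. -/
noncomputable def gromovProd (z p q : X) : ℝ := (dist z p + dist z q - dist p q) / 2

theorem gromovProd_comm (z p q : X) : gromovProd z p q = gromovProd z q p := by
  unfold gromovProd
  rw [dist_comm p q]
  ring

theorem gromovProd_nonneg (z p q : X) : 0 ≤ gromovProd z p q := by
  unfold gromovProd
  have := dist_triangle_left p q z
  linarith

theorem gromovProd_le_left (z p q : X) : gromovProd z p q ≤ dist z p := by
  unfold gromovProd
  have := dist_triangle z p q
  linarith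

theorem gromovProd_le_right (z p q : X) : gromovProd z p q ≤ dist z q := by
  rw [gromovProd_comm]; exact gromovProd_le_left z q p

theorem gromovProd_self (z p : X) : gromovProd z p p = dist z p := by
  unfold gromovProd
  rw [dist_self]; ring

theorem gromovProd_map (g : X ≃ᵢ X) (z p q : X) :
    gromovProd (g z) (g p) (g q) = gromovProd z p q := by
  unfold gromovProd
  simp only [g.isometry.dist_eq]

theorem gromovProd_map_right (g : X ≃ᵢ X) (z p : X) :
    gromovProd z (g p) (g z) = dist z (g z) - gromovProd z p (g⁻¹ z) := by
  unfold gromovProd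
  rw [g.isometry.dist_eq, dist_inv_apply, dist_inv_right, dist_comm z p, dist_comm (g p) z]
  ring

/-- Gromov products seen from the two ends of a segment. -/
theorem gromovProd_add_gromovProd (p o y : X) :
    gromovProd p o y + gromovProd o p y = dist o p := by
  unfold gromovProd
  rw [dist_comm p o, dist_comm p y]
  ring

theorem abs_gromovProd_sub_le (z p q q' : X) :
    |gromovProd z p q - gromovProd z p q'| ≤ dist q q' := by
  unfold gromovProd
  have h1 := abs_le.1 (abs_dist_sub_le q q' z)
  have h2 := abs_le.1 (abs_dist_sub_le q q' p)
  rw [dist_comm z q, dist_comm z q', dist_comm p q, dist_comm p q', abs_le]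
  constructor <;> linarith [h1.1, h1.2, h2.1, h2.2]

theorem IsDeltaHyperbolic.min_gromovProd_le (hX : IsDeltaHyperbolic X δ) (z p q r : X) :
    min (gromovProd z p q) (gromovProd z q r) ≤ gromovProd z p r + δ := by
  have h := hX z q p r
  unfold gromovProd
  rw [min_le_iff]
  rcases le_max_iff.1 (show dist z q + dist p r - 2 * δ ≤
    max (dist z p + dist q r) (dist z r + dist q p) by linarith) with h | h
  · right; linarith
  · left; rw [dist_comm p q]; linarith

theorem IsDeltaHyperbolic.gromovProd_le (hX : IsDeltaHyperbolic X δ) {z p q r : X} {D : ℝ}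
    (h : D + δ < gromovProd z p q) (h' : gromovProd z q r ≤ D) : gromovProd z p r ≤ D + δ := by
  have := hX.min_gromovProd_le z q p r
  rw [gromovProd_comm z q p] at this
  rcases min_le_iff.1 this with h2 | h2 <;> linarith

theorem IsDeltaHyperbolic.sub_le_gromovProd_map (hX : IsDeltaHyperbolic X δ) {z p q : X}
    {g : X ≃ᵢ X} {D : ℝ} (h : D + δ < gromovProd z p q) (h' : gromovProd z q (g⁻¹ z) ≤ D) :
    dist z (g z) - D - δ ≤ gromovProd z (g p) (g z) := by
  rw [gromovProd_map_right]
  linarith [hX.gromovProd_le h h']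

end GromovProduct

section PingPong

variable {X : Type*} [MetricSpace X] {δ : ℝ} {u v w : X ≃ᵢ X}

/-- The ping-pong configuration for a pair of isometries generating a free semigroup. -/
def IsPingPong (u w : X ≃ᵢ X) : Prop :=
  ∃ A W : Set X, Disjoint A W ∧ W.Nonempty ∧ Set.MapsTo u (A ∪ W) A ∧ Set.MapsTo w (A ∪ W) W

theorem IsPingPong.pow (h : IsPingPong u w) {n : ℕ} (hn : n ≠ 0) : IsPingPong (u ^ n) w := by
  obtain ⟨A, W, hd, hne, hu, hw⟩ := h
  refine ⟨A, W, hd, hne, ?_, hw⟩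
  obtain ⟨n, rfl⟩ := Nat.exists_eq_succ_of_ne_zero hn
  induction n with
  | zero => simpa using hu
  | succ n ih =>
    rw [Nat.succ_eq_add_one, pow_succ']
    exact fun p hp => hu (Or.inl (ih (by simp) hp))

theorem IsPingPong.injective (h : IsPingPong u w) :
    Function.Injective (FreeMonoid.lift fun i : Bool => if i then u else w) := by
  obtain ⟨A, W, hd, hne, hu, hw⟩ := h
  set f := FreeMonoid.lift fun i : Bool => if i then u else w with hf
  have hA : A.Nonempty := by
    obtain ⟨p, hp⟩ := hne
    exact ⟨u p, hu (Or.inr hp)⟩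
  have hfm : ∀ m, Set.MapsTo (f m) (A ∪ W) (A ∪ W) := by
    intro m
    induction m using FreeMonoid.inductionOn' with
    | one => rw [map_one]; exact fun p hp => hp
    | of_mul i m ih =>
      rw [map_mul, hf, FreeMonoid.lift_eval_of]
      intro p hp
      cases i
      · exact Or.inr (hw (ih hp))
      · exact Or.inl (hu (ih hp))
  have hT : ∀ m, Set.MapsTo (f (FreeMonoid.of true * m)) (A ∪ W) A := by
    intro m p hp
    rw [map_mul, hf, FreeMonoid.lift_eval_of]
    exact hu (hfm m hp)
  have hF : ∀ m, Set.MapsTo (f (FreeMonoid.of false * m)) (A ∪ W) W := by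
    intro m p hp
    rw [map_mul, hf, FreeMonoid.lift_eval_of]
    exact hw (hfm m hp)
  have hdis : ∀ p, p ∈ A → p ∉ W := fun p h1 h2 => Set.disjoint_left.1 hd h1 h2
  have hone : ∀ i m, f (FreeMonoid.of i * m) ≠ 1 := by
    intro i m h
    cases i
    · obtain ⟨p, hp⟩ := hA
      have := hF m (Or.inl hp)
      rw [h] at this
      exact hdis p hp this
    · obtain ⟨p, hp⟩ := hne
      have := hT m (Or.inr hp)
      rw [h] at this
      exact hdis p this hp
  intro m
  induction m using FreeMonoid.inductionOn' with
  | one =>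
    intro m' h
    induction m' using FreeMonoid.inductionOn' with
    | one => rfl
    | of_mul i m' _ => rw [map_one] at h; exact absurd h.symm (hone i m')
  | of_mul i m ih =>
    intro m' h
    induction m' using FreeMonoid.inductionOn' with
    | one => rw [map_one] at h; exact absurd h (hone i m)
    | of_mul j m' _ =>
      obtain ⟨p, hp⟩ := hne
      cases i <;> cases j
      · rw [map_mul, map_mul] at h
        rw [ih (mul_left_cancel h)]
      · have h1 := hF m (Or.inr hp)
        rw [h] at h1
        exact absurd h1 (hdis _ (hT m' (Or.inr hp)))
      · have h1 := hT m (Or.inr hp)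
        rw [h] at h1
        exact absurd (hF m' (Or.inr hp)) (hdis _ h1)
      · rw [map_mul, map_mul] at h
        rw [ih (mul_left_cancel h)]

/-- Ping-pong for two cyclic groups whose orbits of `z` diverge at bounded distance from `z`. -/
theorem IsDeltaHyperbolic.isPingPong_pow_mul (hX : IsDeltaHyperbolic X δ) (hδ : 0 ≤ δ) {z : X}
    {D : ℝ} (huv : ∀ j k : ℤ, j ≠ 0 → k ≠ 0 → gromovProd z ((u ^ j) z) ((v ^ k) z) ≤ D)
    (hu : ∀ j : ℤ, j ≠ 0 → 2 * D + 6 * δ < dist z ((u ^ j) z))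
    (hv : ∀ j : ℤ, j ≠ 0 → 2 * D + 6 * δ < dist z ((v ^ j) z)) {n : ℕ} (hn : n ≠ 0) :
    IsPingPong (u ^ n) (v * u) := by
  have hD : 0 ≤ D := (gromovProd_nonneg _ _ _).trans (huv 1 1 (by simp) (by simp))
  have key : ∀ u v : X ≃ᵢ X,
      (∀ j k : ℤ, j ≠ 0 → k ≠ 0 → gromovProd z ((u ^ j) z) ((v ^ k) z) ≤ D) →
      (∀ j : ℤ, j ≠ 0 → 2 * D + 6 * δ < dist z ((u ^ j) z)) → ∀ p,
      (∃ k : ℤ, k ≠ 0 ∧ D + 2 * δ < gromovProd z p ((v ^ k) z)) → ∀ m : ℤ, m ≠ 0 →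
      ∃ k : ℤ, k ≠ 0 ∧ D + 2 * δ < gromovProd z ((u ^ m) p) ((u ^ k) z) := by
    rintro u v huv hu p ⟨k, hk, hp⟩ m hm
    refine ⟨m, hm, ?_⟩
    have h1 := huv (-m) k (by simpa) hk
    rw [zpow_neg, gromovProd_comm] at h1
    have := hX.sub_le_gromovProd_map (g := u ^ m) (p := p) (D := D) (by linarith) h1
    linarith [hu m hm]
  set C := {p : X | ∃ k : ℤ, k ≠ 0 ∧ D + 2 * δ < gromovProd z p ((v ^ k) z)}
  set B := {p : X | ∃ k : ℤ, k ≠ 0 ∧ D + 2 * δ < gromovProd z p ((u ^ k) z)}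
  have hCB : ∀ m : ℤ, m ≠ 0 → Set.MapsTo (u ^ m) C B := fun m hm p hp => key u v huv hu p hp m hm
  have hBC : Set.MapsTo v B C := fun p hp => by
    have := key v u (fun j k hj hk => by rw [gromovProd_comm]; exact huv k j hk hj) hv p hp 1
      one_ne_zero
    rwa [zpow_one] at this
  have hdis : ∀ p, p ∈ B → p ∉ C := by
    rintro p ⟨j, hj, hpj⟩ ⟨k, hk, hpk⟩
    have := hX.gromovProd_le (D := D) (by linarith) (huv j k hj hk)
    linarith
  set A := {p : X | ∃ k : ℕ, k ≠ 0 ∧ ∃ c ∈ C, p = (u ^ (k * n)) c}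
  have huC : ∀ m : ℕ, m ≠ 0 → ∀ c ∈ C, (u ^ m) c ∈ B := fun m hm c hc => by
    have := hCB m (by exact_mod_cast hm) hc
    rwa [zpow_natCast] at this
  refine ⟨A, C, Set.disjoint_left.2 ?_, ⟨v z, 1, one_ne_zero, ?_⟩, ?_, ?_⟩
  · rintro _ ⟨k, hk, c, hc, rfl⟩
    exact hdis _ (huC _ (mul_ne_zero hk hn) c hc)
  · have := hv 1 one_ne_zero
    rw [zpow_one] at this ⊢
    rw [gromovProd_self]
    linarith
  · rintro _ (⟨k, hk, c, hc, rfl⟩ | hp)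
    · refine ⟨k + 1, by simp, c, hc, ?_⟩
      rw [← IsometryEquiv.mul_apply, ← pow_add]
      congr 2
      ring
    · exact ⟨1, one_ne_zero, _, hp, by rw [one_mul]⟩
  · rintro _ (⟨k, hk, c, hc, rfl⟩ | hp)
    · rw [IsometryEquiv.mul_apply, ← IsometryEquiv.mul_apply u, ← pow_succ']
      exact hBC (huC _ (by simp) c hc)
    · have := huC 1 one_ne_zero _ hp
      rw [pow_one] at this
      exact hBC this

/-- Ping-pong for two isometries moving `z` far, in diverging directions. -/
theorem IsDeltaHyperbolic.isPingPong (hX : IsDeltaHyperbolic X δ) (hδ : 0 ≤ δ) {z : X} {D : ℝ}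
    (huu : gromovProd z (u z) (u⁻¹ z) ≤ D) (hww : gromovProd z (w z) (w⁻¹ z) ≤ D)
    (huw' : gromovProd z (u z) (w⁻¹ z) ≤ D) (hwu' : gromovProd z (w z) (u⁻¹ z) ≤ D)
    (huw : gromovProd z (u z) (w z) ≤ D) (hu : 2 * D + 5 * δ < dist z (u z))
    (hw : 2 * D + 5 * δ < dist z (w z)) : IsPingPong u w := by
  have hD : 0 ≤ D := (gromovProd_nonneg _ _ _).trans huu
  refine ⟨{p | D + δ < gromovProd z p (u z)}, {p | D + δ < gromovProd z p (w z)},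
    Set.disjoint_left.2 fun p hp hp' => ?_, ⟨w z, ?_⟩, ?_, ?_⟩
  · exact (hX.gromovProd_le hp huw).not_gt hp'
  · rw [Set.mem_ofPred_eq, gromovProd_self]
    linarith
  all_goals
    rintro p (hp | hp)
    all_goals
      rw [Set.mem_ofPred_eq] at hp ⊢
  · linarith [hX.sub_le_gromovProd_map hp huu]
  · linarith [hX.sub_le_gromovProd_map hp hwu']
  · linarith [hX.sub_le_gromovProd_map hp huw']
  · linarith [hX.sub_le_gromovProd_map hp hww]

end PingPong

section PingPongNilpotent

open scoped commutatorElement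

variable {X : Type*} [MetricSpace X] {u w : X ≃ᵢ X}

theorem IsPingPong.pow_right (h : IsPingPong u w) {n : ℕ} (hn : n ≠ 0) : IsPingPong u (w ^ n) := by
  obtain ⟨A, W, hd, hne, hu, hw⟩ := h
  refine ⟨A, W, hd, hne, hu, ?_⟩
  obtain ⟨n, rfl⟩ := Nat.exists_eq_succ_of_ne_zero hn
  induction n with
  | zero => simpa using hw
  | succ n ih =>
    rw [Nat.succ_eq_add_one, pow_succ']
    exact fun p hp => hw (Or.inr (ih (by simp) hp))

theorem IsPingPong.mul_mul (h : IsPingPong u w) : IsPingPong (u * w) (w * u) := by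
  obtain ⟨A, W, hd, hne, hu, hw⟩ := h
  exact ⟨A, W, hd, hne, fun p hp => hu (Or.inr (hw hp)), fun p hp => hw (Or.inl (hu hp))⟩

theorem IsPingPong.ne (h : IsPingPong u w) : u ≠ w := by
  rintro rfl
  obtain ⟨A, W, hd, ⟨p, hp⟩, hu, hw⟩ := h
  exact Set.disjoint_left.1 hd (hu (Or.inr hp)) (hw (Or.inr hp))

theorem IsPingPong.not_isNilpotent (h : IsPingPong u w) {H : Subgroup (X ≃ᵢ X)} (hu : u ∈ H)
    (hw : w ∈ H) : ¬ Group.IsNilpotent H := by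
  rw [Subgroup.isNilpotent_iff_lowerCentralSeries]
  rintro ⟨n, hn⟩
  have key : ∀ n, ∃ x ∈ H, ∃ y ∈ H, IsPingPong x y ∧ x * y⁻¹ ∈ H.lowerCentralSeries n := by
    intro n
    induction n with
    | zero => exact ⟨u, hu, w, hw, h, mul_mem hu (inv_mem hw)⟩
    | succ n ih =>
      obtain ⟨x, hx, y, hy, hxy, hl⟩ := ih
      refine ⟨x * y, mul_mem hx hy, y * x, mul_mem hy hx, hxy.mul_mul, ?_⟩
      have := Subgroup.commutator_mem_commutator hl hy
      rw [Subgroup.lowerCentralSeries_succ]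
      convert this using 1
      rw [commutatorElement_def]
      group
  obtain ⟨x, -, y, -, hxy, hl⟩ := key n
  rw [hn, Subgroup.mem_bot, mul_inv_eq_one] at hl
  exact hxy.ne hl

theorem IsPingPong.not_isVirtuallyNilpotent (h : IsPingPong u w) {K : Subgroup (X ≃ᵢ X)}
    (hu : u ∈ K) (hw : w ∈ K) : ¬ IsVirtuallyNilpotent ↥K := by
  rw [isVirtuallyNilpotent_subgroup_iff]
  rintro ⟨H, -, hi, hH⟩
  obtain ⟨n, hn, -, hun⟩ := Subgroup.exists_pow_mem_of_relIndex_ne_zero hi hu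
  obtain ⟨m, hm, -, hwm⟩ := Subgroup.exists_pow_mem_of_relIndex_ne_zero hi hw
  exact ((h.pow hn.ne').pow_right hm.ne').not_isNilpotent hun.1 hwm.1 hH

end PingPongNilpotent

section Hyperbolic

variable {X : Type*} [MetricSpace X] {δ : ℝ} {σ : X → X → ℝ → X}

theorem abs_gromovProd_sub_le_base (z z' p q : X) :
    |gromovProd z p q - gromovProd z' p q| ≤ dist z z' := by
  unfold gromovProd
  have h1 := abs_le.1 (abs_dist_sub_le z z' p)
  have h2 := abs_le.1 (abs_dist_sub_le z z' q)
  rw [abs_le]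
  constructor <;> linarith [h1.1, h1.2, h2.1, h2.2]

theorem gromovProd_le_add (z p q p' q' : X) :
    gromovProd z p q ≤ gromovProd z p' q' + dist p p' + dist q q' := by
  have h1 := abs_le.1 (abs_gromovProd_sub_le z p q q')
  have h2 := abs_le.1 (abs_gromovProd_sub_le z q' p p')
  rw [gromovProd_comm z q' p, gromovProd_comm z q' p'] at h2
  linarith [h1.2, h2.2]

/-- The displacement is small along segments whose ends are moved little. -/
theorem IsDeltaHyperbolic.disp_le (hX : IsDeltaHyperbolic X δ) (hδ : 0 ≤ δ) (g : X ≃ᵢ X) {z t q : X} {α β κ : ℝ}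
    (hz : dist z (g z) ≤ α) (ht : dist t (g t) ≤ β) (hq : gromovProd q z t ≤ κ)
    (hzq : α + β + 2 * κ ≤ 2 * dist z q) : dist q (g q) ≤ β + 2 * κ + 4 * δ := by
  unfold gromovProd at hq
  have h1 := hX q (g q) z t
  have h2 := hX (g q) z (g z) t
  have h3 := dist_triangle (g q) (g t) t
  have h4 := dist_triangle z (g z) t
  have h5 := dist_triangle z t (g z)
  have h6 := dist_triangle z (g t) t
  have h7 := dist_triangle (g z) t (g t)
  rw [g.isometry.dist_eq] at h3 h7
  rw [dist_comm (g t) t] at h3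
  rw [g.isometry.dist_eq] at h2
  have e1 := dist_comm q z
  have := dist_nonneg (x := q) (y := g q)
  rcases le_max_iff.1 (show dist q (g q) + dist z t - 2 * δ ≤
    max (dist q z + dist (g q) t) (dist q t + dist (g q) z) by linarith) with h | h
  · linarith
  · rcases le_max_iff.1 (show dist (g q) z + dist (g z) t - 2 * δ ≤
      max (dist q z + dist z t) (dist (g q) t + dist z (g z)) by linarith) with h' | h'
    · linarith
    · linarith

theorem IsDeltaHyperbolic.le_dist_of_chain (hX : IsDeltaHyperbolic X δ) {p u v q : X} {α β : ℝ}
    (hu : gromovProd u p v ≤ α) (hv : gromovProd v u q ≤ β) (huv : α + β + δ < dist u v) :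
    dist p u + dist u v + dist v q - 2 * α - 2 * β - 2 * δ ≤ dist p q := by
  have h1 := gromovProd_add_gromovProd v u p
  rw [gromovProd_comm u v p] at h1
  have h2 := hX.gromovProd_le (z := v) (p := p) (q := u) (r := q) (D := β)
    (by rw [gromovProd_comm]; linarith) hv
  unfold gromovProd at h2 hu
  linarith [dist_comm u p, dist_comm v p]

/-- A point on a segment at prescribed distance from its source. -/
theorem IsGCB.exists_dist_eq (hσ : IsGCB σ) (x y : X) {s : ℝ} (hs : 0 ≤ s) (hs' : s ≤ dist x y) :
    ∃ l ∈ Set.Icc (0 : ℝ) 1, dist x (σ x y l) = s ∧ dist (σ x y l) y = dist x y - s := by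
  rcases eq_or_lt_of_le (dist_nonneg (x := x) (y := y)) with h | h
  · have : s = 0 := by linarith
    refine ⟨0, by simp, ?_, ?_⟩ <;> simp [hσ.source, this]
  · have hl : s / dist x y ∈ Set.Icc (0 : ℝ) 1 := ⟨by positivity, (div_le_one h).2 hs'⟩
    refine ⟨_, hl, ?_, ?_⟩
    · rw [hσ.dist_source _ _ hl, div_mul_cancel₀ _ h.ne']
    · rw [hσ.dist_target _ _ hl, sub_mul, div_mul_cancel₀ _ h.ne', one_mul]

theorem IsDeltaHyperbolic.exists_dist_le_gromovProd (hX : IsDeltaHyperbolic X δ) (hσ : IsGCB σ)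
    (o p t : X) : ∃ l ∈ Set.Icc (0 : ℝ) 1, dist o (σ p t l) ≤ gromovProd o p t + 2 * δ := by
  obtain ⟨l, hl, h1, h2⟩ := hσ.exists_dist_eq p t (gromovProd_nonneg p o t)
    (gromovProd_le_right p o t)
  refine ⟨l, hl, ?_⟩
  have h := hX o (σ p t l) p t
  unfold gromovProd at *
  rw [dist_comm p o] at *
  rw [dist_comm p (σ p t l)] at h1
  rcases max_choice (dist o p + dist (σ p t l) t) (dist o t + dist (σ p t l) p) with h' | h' <;>
  · rw [h'] at h
    linarith

theorem IsDeltaHyperbolic.busemann_sub_le (hX : IsDeltaHyperbolic X δ) {u v s t : X}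
    (h : dist u v ≤ gromovProd u s t) :
    dist v t - dist u t ≤ dist v s - dist u s + 2 * δ := by
  have h1 := hX.min_gromovProd_le u v s t
  have h2 := gromovProd_le_left u v s
  rw [min_eq_left (h2.trans h)] at h1
  unfold gromovProd at h1
  linarith

end Hyperbolic

section AxisPoint

variable {X : Type*} [MetricSpace X] {δ : ℝ} {σ : X → X → ℝ → X} {h : X ≃ᵢ X} {t : X}

/-- A point moved a large distance by `h`, whose orbit under `h` is almost straight. -/
structure IsAxisPoint (δ : ℝ) (h : X ≃ᵢ X) (t : X) : Prop where
  large : 1000 * δ ≤ dist t (h t)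
  straight : gromovProd t (h t) (h⁻¹ t) ≤ δ

theorem IsGCB.isAxisPoint (hσ : IsGCB σ) (hh : IsSigmaIsometry σ h)
    (hl : 1000 * δ ≤ transLength h) (ht : dist t (h t) ≤ transLength h + δ) :
    IsAxisPoint δ h t := by
  refine ⟨hl.trans (transLength_le h t), ?_⟩
  obtain ⟨m, -, hm⟩ := hσ.midpoint_disp_le hh t
  have h1 := transLength_le h m
  have h2 := gromovProd_map h t (h t) (h⁻¹ t)
  rw [IsometryEquiv.apply_inv_self] at h2
  rw [← h2]
  unfold gromovProd
  rw [h.isometry.dist_eq, dist_comm (h t) t, dist_comm (h (h t)) t]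
  linarith

namespace IsAxisPoint

theorem inv (ht : IsAxisPoint δ h t) : IsAxisPoint δ h⁻¹ t :=
  ⟨by rw [dist_inv_apply]; exact ht.large, by rw [inv_inv, gromovProd_comm]; exact ht.straight⟩

theorem map (ht : IsAxisPoint δ h t) (g : X ≃ᵢ X) : IsAxisPoint δ (g * h * g⁻¹) (g t) := by
  refine ⟨by rw [dist_conj_apply]; exact ht.large, ?_⟩
  have : (g * h * g⁻¹)⁻¹ (g t) = g (h⁻¹ t) := by
    simp [IsometryEquiv.mul_apply]
  rw [this, show (g * h * g⁻¹) (g t) = g (h t) by simp [IsometryEquiv.mul_apply], gromovProd_map]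
  exact ht.straight

theorem zpow_apply (ht : IsAxisPoint δ h t) (k : ℤ) : IsAxisPoint δ h ((h ^ k) t) := by
  have := ht.map (h ^ k)
  rwa [← zpow_add_one, ← zpow_neg, ← zpow_add, show k + 1 + -k = 1 by ring, zpow_one] at this

variable (hX : IsDeltaHyperbolic X δ) (hδ : 0 < δ)
include hX hδ

theorem gromovProd_inv_le (ht : IsAxisPoint δ h t) (k : ℕ) :
    gromovProd t ((h ^ (k + 1)) t) (h⁻¹ t) ≤ 2 * δ ∧
      dist t (h t) - 2 * δ ≤ gromovProd t ((h ^ (k + 1)) t) (h t) := by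
  induction k with
  | zero =>
    rw [zero_add, pow_one, gromovProd_self]
    exact ⟨by linarith [ht.straight], by linarith⟩
  | succ k ih =>
    have h1 := gromovProd_map_right h t ((h ^ (k + 1)) t)
    rw [← IsometryEquiv.mul_apply, ← pow_succ'] at h1
    have h2 : dist t (h t) - 2 * δ ≤ gromovProd t ((h ^ (k + 1 + 1)) t) (h t) := by
      linarith [ih.1]
    refine ⟨?_, h2⟩
    have := hX.gromovProd_le (p := (h ^ (k + 1 + 1)) t) (D := δ) (by linarith [ht.large])
      ht.straight
    linarith

theorem gromovProd_zpow_ge (ht : IsAxisPoint δ h t) {k : ℤ} (hk : 0 < k) :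
    dist t (h t) - 2 * δ ≤ gromovProd t ((h ^ k) t) (h t) := by
  obtain ⟨n, rfl⟩ : ∃ n : ℕ, k = ((n + 1 : ℕ) : ℤ) := ⟨k.toNat - 1, by omega⟩
  rw [zpow_natCast]
  exact (ht.gromovProd_inv_le hX hδ n).2

theorem gromovProd_zpow_neg_le (ht : IsAxisPoint δ h t) {i j : ℤ} (hi : 0 < i) (hj : j < 0) :
    gromovProd t ((h ^ i) t) ((h ^ j) t) ≤ 3 * δ := by
  obtain ⟨n, rfl⟩ : ∃ n : ℕ, i = ((n + 1 : ℕ) : ℤ) := ⟨i.toNat - 1, by omega⟩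
  have h1 := (ht.gromovProd_inv_le hX hδ n).1
  have h2 := ht.inv.gromovProd_zpow_ge hX hδ (k := -j) (by omega)
  rw [inv_zpow, zpow_neg, inv_inv, dist_inv_apply] at h2
  rw [zpow_natCast, gromovProd_comm]
  rw [gromovProd_comm] at h1
  have := hX.gromovProd_le (p := (h ^ j) t) (D := 2 * δ) (by linarith [ht.large]) h1
  linarith

theorem gromovProd_zpow_zpow_ge (ht : IsAxisPoint δ h t) {i j : ℤ} (hi : 0 < i) (hij : i ≤ j) :
    dist t ((h ^ i) t) - 3 * δ ≤ gromovProd t ((h ^ j) t) ((h ^ i) t) := by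
  rcases hij.eq_or_lt with rfl | hij
  · rw [gromovProd_self]; linarith
  · have h1 := gromovProd_map_right (h ^ i) t ((h ^ (j - i)) t)
    rw [← IsometryEquiv.mul_apply, ← zpow_add, add_sub_cancel, ← zpow_neg] at h1
    linarith [ht.gromovProd_zpow_neg_le hX hδ (i := j - i) (j := -i) (by omega) (by omega)]

theorem le_dist_zpow (ht : IsAxisPoint δ h t) (k : ℤ) :
    |(k : ℝ)| * (dist t (h t) - 6 * δ) ≤ dist t ((h ^ k) t) := by
  rw [dist_zpow_natAbs, show |(k : ℝ)| = (k.natAbs : ℝ) by rw [Nat.cast_natAbs, Int.cast_abs]]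
  generalize k.natAbs = n
  induction n with
  | zero => simp
  | succ n ih =>
    rcases Nat.eq_zero_or_pos n with rfl | hn
    · rw [zero_add, pow_one]; push_cast; linarith
    · have h1 := ht.gromovProd_zpow_neg_le hX hδ (i := n) (j := -1) (by omega) (by omega)
      have h2 : dist ((h ^ (n : ℤ)) t) ((h ^ (-1 : ℤ)) t) = dist t ((h ^ (n + 1)) t) := by
        rw [zpow_neg, dist_inv_right, zpow_natCast, ← IsometryEquiv.mul_apply, zpow_one,
          ← pow_succ', dist_comm]
      unfold gromovProd at h1
      rw [h2, zpow_neg, dist_inv_apply, zpow_natCast, zpow_one] at h1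
      push_cast
      linarith

/-- A point of the orbit which is closest to `p`, up to `δ`, is a coarse projection. -/
theorem gromovProd_le_of_closest (ht : IsAxisPoint δ h t) {p : X}
    (hp : ∀ k : ℤ, dist p t ≤ dist p ((h ^ k) t) + δ) (k : ℤ) :
    gromovProd t p ((h ^ k) t) ≤ dist t (h t) / 2 + 2 * δ := by
  have key : ∀ h : X ≃ᵢ X, IsAxisPoint δ h t → (∀ k : ℤ, dist p t ≤ dist p ((h ^ k) t) + δ) →
      ∀ k : ℤ, 0 < k → gromovProd t p ((h ^ k) t) ≤ dist t (h t) / 2 + 2 * δ := by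
    intro h ht hp k hk
    have h1 := ht.gromovProd_zpow_ge hX hδ hk
    have h2 : gromovProd t p (h t) ≤ dist t (h t) / 2 + δ / 2 := by
      have := hp 1
      rw [zpow_one] at this
      unfold gromovProd
      rw [dist_comm t p]
      linarith
    rcases min_le_iff.1 (hX.min_gromovProd_le t p ((h ^ k) t) (h t)) with h3 | h3
    · linarith
    · linarith [ht.large]
  rcases lt_trichotomy k 0 with hk | rfl | hk
  · have := key h⁻¹ ht.inv (fun k => by rw [inv_zpow, ← zpow_neg]; exact hp _) (-k) (by omega)
    rwa [inv_zpow, zpow_neg, inv_inv, dist_inv_apply] at this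
  · rw [zpow_zero]
    have := gromovProd_le_right t p t
    rw [dist_self] at this
    exact this.trans (by positivity)
  · exact key h ht hp k hk

theorem dist_le_of_closest (ht : IsAxisPoint δ h t) {p : X}
    (hp : ∀ k : ℤ, dist p t ≤ dist p ((h ^ k) t) + δ) (i j : ℤ) :
    dist p t ≤ gromovProd p ((h ^ i) t) ((h ^ j) t) + dist t (h t) / 2 + 3 * δ := by
  have h1 := ht.gromovProd_le_of_closest hX hδ hp
  have h2 : ∀ k : ℤ, dist p t - dist t (h t) / 2 - 2 * δ ≤ gromovProd p t ((h ^ k) t) := by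
    intro k
    linarith [h1 k, gromovProd_add_gromovProd t p ((h ^ k) t)]
  have h3 := h2 i
  rw [gromovProd_comm] at h3
  rcases min_le_iff.1 (hX.min_gromovProd_le p ((h ^ i) t) t ((h ^ j) t)) with h4 | h4
  · linarith
  · linarith [h2 j]

theorem dist_le_disp_of_closest (ht : IsAxisPoint δ h t) {p : X}
    (hp : ∀ k : ℤ, dist p t ≤ dist p ((h ^ k) t) + δ) :
    dist p t ≤ dist p (h p) + 6 * δ := by
  have h0 := ht.gromovProd_le_of_closest hX hδ hp
  have h1 := h0 2
  have h2 := h0 (-2)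
  rw [← gromovProd_map (h ^ (2 : ℤ)), ← IsometryEquiv.mul_apply _ (h ^ (-2 : ℤ)), ← zpow_add,
    add_neg_cancel, zpow_zero, gromovProd_comm] at h2
  have h3 : 2 * dist t (h t) - 2 * δ ≤ dist t ((h ^ (2 : ℤ)) t) := by
    have := ht.straight
    unfold gromovProd at this
    rw [dist_inv_apply, dist_inv_right, ← IsometryEquiv.mul_apply, dist_comm _ t] at this
    rw [zpow_two]
    linarith
  have h4 := hX.le_dist_of_chain h1 h2 (by linarith [ht.large])
  rw [(h ^ (2 : ℤ)).isometry.dist_eq, dist_comm t p] at h4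
  have h5 := dist_zpow_apply_le h p 2
  norm_num at h5
  norm_num at h3 h4
  linarith

end IsAxisPoint

theorem exists_closest_zpow (hδ : 0 < δ) (h : X ≃ᵢ X) (t p : X) :
    ∃ k : ℤ, ∀ m : ℤ, dist p ((h ^ k) t) ≤ dist p ((h ^ m) t) + δ := by
  obtain ⟨k, hk⟩ := exists_lt_of_ciInf_lt (f := fun k : ℤ => dist p ((h ^ k) t))
    (lt_add_of_pos_right _ hδ)
  refine ⟨k, fun m => hk.le.trans ?_⟩
  gcongr
  exact ciInf_le ⟨0, by rintro _ ⟨k, rfl⟩; exact dist_nonneg⟩ m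

end AxisPoint

section TwoAxes

variable {X : Type*} [MetricSpace X] {δ A : ℝ} {a c : X ≃ᵢ X} {y z : X}

theorem disp_zpow_apply (a : X ≃ᵢ X) (i : ℤ) (y : X) :
    dist ((a ^ i) y) (a ((a ^ i) y)) = dist y (a y) := by
  rw [← IsometryEquiv.mul_apply, ← zpow_one_add, add_comm, zpow_add_one,
    IsometryEquiv.mul_apply, (a ^ i).isometry.dist_eq]

namespace IsAxisPoint

theorem nonneg_large (hδ : 0 < δ) (hy : IsAxisPoint δ a y) (hA : dist y (a y) = A) :
    1000 * δ ≤ A ∧ 0 < A := by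
  have := hy.large
  rw [hA] at this
  exact ⟨this, by linarith⟩

theorem twenty_mul_le (hX : IsDeltaHyperbolic X δ) (hδ : 0 < δ) (hy : IsAxisPoint δ a y)
    (hA : dist y (a y) = A) {k : ℤ} (hk : 20 ≤ |k|) : 20 * (A - 6 * δ) ≤ dist y ((a ^ k) y) := by
  obtain ⟨h1, h2⟩ := hy.nonneg_large hδ hA
  have h := hy.le_dist_zpow hX hδ k
  rw [hA] at h
  refine le_trans ?_ h
  have : (20 : ℝ) ≤ |(k : ℝ)| := by exact_mod_cast hk
  apply mul_le_mul_of_nonneg_right this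
  linarith

theorem twenty_le_abs {j : ℤ} (hj : j ≠ 0) : 20 ≤ |20 * j| := by
  rw [abs_mul]
  have := Int.one_le_abs hj
  norm_num
  omega

/-- Ping-pong for two isometries whose axes are far apart. -/
theorem isPingPong_of_far (hX : IsDeltaHyperbolic X δ) (hδ : 0 < δ) (hy : IsAxisPoint δ a y)
    (hz : IsAxisPoint δ c z) (hA : dist y (a y) = A) (hA' : dist z (c z) = A)
    (hyz : ∀ k : ℤ, dist z y ≤ dist z ((a ^ k) y) + δ)
    (hzy : ∀ k : ℤ, dist y z ≤ dist y ((c ^ k) z) + δ) (hd : 2 * A < dist y z) :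
    IsPingPong (a ^ 20) (c ^ 20 * a ^ 20) := by
  obtain ⟨hAδ, hA0⟩ := hy.nonneg_large hδ hA
  have h1 := hy.gromovProd_le_of_closest hX hδ hyz
  have h2 := hz.gromovProd_le_of_closest hX hδ hzy
  rw [hA] at h1
  rw [hA'] at h2
  have hP : ∀ {a : X ≃ᵢ X} (k : ℤ), (a ^ 20) ^ k = a ^ (20 * k) := fun k => by
    rw [zpow_mul]; norm_cast
  have hlarge := fun k hk => hz.twenty_mul_le hX hδ hA' (twenty_le_abs (j := k) hk)
  have h3 : ∀ k : ℤ, k ≠ 0 → gromovProd z y ((c ^ (20 * k)) y) ≤ A / 2 + 3 * δ := by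
    intro k hk
    have h4 := gromovProd_map_right (c ^ (20 * k)) z y
    rw [← zpow_neg] at h4
    have h5 := h2 (20 * k)
    have h6 := h2 (-(20 * k))
    rw [gromovProd_comm] at h5
    have h7 := hlarge k hk
    have := hX.gromovProd_le (p := (c ^ (20 * k)) y) (D := A / 2 + 2 * δ) (by linarith) h5
    rw [gromovProd_comm]
    linarith
  have h8 : ∀ k : ℤ, k ≠ 0 → 10 * A < dist z ((c ^ (20 * k)) y) := by
    intro k hk
    have h4 := gromovProd_map_right (c ^ (20 * k)) z y
    have h5 := gromovProd_le_left z ((c ^ (20 * k)) y) ((c ^ (20 * k)) z)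
    have h6 := h2 (-(20 * k))
    rw [zpow_neg] at h6
    linarith [hlarge k hk]
  refine hX.isPingPong_pow_mul hδ.le (z := y) (D := A / 2 + 3 * δ) ?_ ?_ ?_ (n := 1) one_ne_zero
    |> fun h => by rwa [pow_one] at h
  · intro j k hj hk
    rw [hP, hP]
    have h4 := h1 (20 * j)
    rw [gromovProd_comm] at h4
    have h5 := gromovProd_add_gromovProd z y ((c ^ (20 * k)) y)
    have h6 := h3 k hk
    rw [gromovProd_comm]
    rw [gromovProd_comm] at h4
    have := hX.gromovProd_le (z := y) (p := (c ^ (20 * k)) y) (q := z) (r := (a ^ (20 * j)) y)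
      (D := A / 2 + 2 * δ) (by rw [gromovProd_comm]; linarith) h4
    linarith
  · intro j hj
    rw [hP]
    linarith [hy.twenty_mul_le hX hδ hA (twenty_le_abs (j := j) hj)]
  · intro j hj
    rw [hP]
    have h5 := h3 j hj
    have h6 := h8 j hj
    unfold gromovProd at h5
    rw [dist_comm z y] at h5
    linarith

theorem gromovProd_le_three_mul (hX : IsDeltaHyperbolic X δ) (hδ : 0 < δ) (hy : IsAxisPoint δ a y)
    (hz : IsAxisPoint δ c z) (hA : dist y (a y) = A) (hA' : dist z (c z) = A)
    (hd : dist y z ≤ 2 * A) (hfar : ∀ m k : ℤ, 0 < m → 2 * A < dist ((a ^ m) y) ((c ^ k) z))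
    {m : ℤ} (hm : 0 < m) (k : ℤ) : gromovProd y ((a ^ m) y) ((c ^ k) z) ≤ 3 * A := by
  obtain ⟨hAδ, hA0⟩ := hy.nonneg_large hδ hA
  by_contra! hlt
  have h3 : dist y ((a ^ (3 : ℤ)) y) ≤ 3 * A := by
    have := dist_zpow_apply_le a y 3
    rw [hA] at this
    norm_num at this ⊢
    exact this
  have h3' : 3 * (A - 6 * δ) ≤ dist y ((a ^ (3 : ℤ)) y) := by
    have := hy.le_dist_zpow hX hδ 3
    rw [hA] at this
    norm_num at this ⊢
    exact this
  have hm3 : 3 ≤ m := by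
    by_contra! hm3
    have h4 := gromovProd_le_left y ((a ^ m) y) ((c ^ k) z)
    have h5 := dist_zpow_apply_le a y m
    rw [hA] at h5
    have h6 : |(m : ℝ)| ≤ 3 := by
      rw [abs_of_pos (by exact_mod_cast hm)]
      exact_mod_cast hm3.le
    have := mul_le_mul_of_nonneg_right h6 hA0.le
    linarith
  set q := (a ^ (3 : ℤ)) y
  have h4 := hy.gromovProd_zpow_zpow_ge hX hδ (i := 3) (by norm_num) hm3
  rw [gromovProd_comm] at h4
  have h5 : dist y q - 4 * δ ≤ gromovProd y q ((c ^ k) z) := by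
    rcases min_le_iff.1 (hX.min_gromovProd_le y q ((a ^ m) y) ((c ^ k) z)) with h | h <;> linarith
  have h6 := gromovProd_add_gromovProd q y ((c ^ k) z)
  have h7 : dist q y - dist y z ≤ gromovProd q y z := by
    unfold gromovProd
    linarith [dist_triangle_right q y z, dist_comm y z]
  rw [dist_comm q y] at h7
  have h8 := hX.gromovProd_le (z := q) (p := z) (q := y) (r := (c ^ k) z) (D := 4 * δ)
    (by rw [gromovProd_comm]; linarith) (by linarith)
  obtain ⟨i, hi⟩ := exists_closest_zpow hδ c z q
  have hz' := hz.zpow_apply i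
  have hzi : ∀ k : ℤ, (c ^ (k - i)) ((c ^ i) z) = (c ^ k) z := fun k => by
    rw [← IsometryEquiv.mul_apply, ← zpow_add, sub_add_cancel]
  have h9 := hz'.dist_le_of_closest hX hδ (p := q)
    (fun k => by rw [← IsometryEquiv.mul_apply, ← zpow_add]; exact hi (k + i)) (0 - i) (k - i)
  rw [hzi, hzi, zpow_zero, disp_zpow_apply, hA'] at h9
  have h10 := hfar 3 i (by norm_num)
  change gromovProd q z _ ≤ _ at h8
  change dist q _ ≤ gromovProd q z _ + _ + _ at h9
  linarith

/-- Ping-pong for two isometries whose axes pass close to each other and diverge. -/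
theorem isPingPong_of_near (hX : IsDeltaHyperbolic X δ) (hδ : 0 < δ) (hy : IsAxisPoint δ a y)
    (hz : IsAxisPoint δ c z) (hA : dist y (a y) = A) (hA' : dist z (c z) = A)
    (hd : dist y z ≤ 2 * A) (hfar : ∀ m k : ℤ, 0 < m → 2 * A < dist ((a ^ m) y) ((c ^ k) z)) :
    ∃ k : ℤ, |k| ≤ 20 ∧ IsPingPong (a ^ (20 : ℤ)) (c ^ k) := by
  obtain ⟨hAδ, hA0⟩ := hy.nonneg_large hδ hA
  have hcc : ∀ k : ℤ, dist ((c ^ k) y) ((c ^ k) z) ≤ 2 * A := fun k => by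
    rwa [(c ^ k).isometry.dist_eq]
  have h1 : ∀ k : ℤ, gromovProd y ((a ^ (20 : ℤ)) y) ((c ^ k) y) ≤ 5 * A := by
    intro k
    have := gromovProd_le_add y ((a ^ (20 : ℤ)) y) ((c ^ k) y) ((a ^ (20 : ℤ)) y) ((c ^ k) z)
    rw [dist_self] at this
    linarith [hcc k, hy.gromovProd_le_three_mul hX hδ hz hA hA' hd hfar (m := 20) (by norm_num) k]
  have h2 : gromovProd y ((c ^ (20 : ℤ)) y) ((c ^ (-20 : ℤ)) y) ≤ 6 * A + 3 * δ := by
    have h3 := gromovProd_le_add y ((c ^ (20 : ℤ)) y) ((c ^ (-20 : ℤ)) y) ((c ^ (20 : ℤ)) z)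
      ((c ^ (-20 : ℤ)) z)
    have h4 := (abs_le.1 (abs_gromovProd_sub_le_base y z ((c ^ (20 : ℤ)) z)
      ((c ^ (-20 : ℤ)) z))).2
    linarith [hcc 20, hcc (-20), hz.gromovProd_zpow_neg_le hX hδ (i := 20) (j := -20)
      (by norm_num) (by norm_num)]
  have key : ∀ k : ℤ, |k| = 20 → gromovProd y ((c ^ k) y) ((c ^ (-k)) y) ≤ 6 * A + 3 * δ →
      gromovProd y ((c ^ k) y) ((a ^ (-20 : ℤ)) y) ≤ 6 * A + 4 * δ →
      ∃ k : ℤ, |k| ≤ 20 ∧ IsPingPong (a ^ (20 : ℤ)) (c ^ k) := by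
    intro k hk h3 h4
    refine ⟨k, hk.le, hX.isPingPong hδ.le (z := y) (D := 7 * A) ?_ ?_ ?_ ?_ ?_ ?_ ?_⟩
    · rw [← zpow_neg]
      linarith [hy.gromovProd_zpow_neg_le hX hδ (i := 20) (j := -20) (by norm_num) (by norm_num)]
    · rw [← zpow_neg]; linarith
    · rw [← zpow_neg]; linarith [h1 (-k)]
    · rw [← zpow_neg]; linarith
    · linarith [h1 k]
    · linarith [hy.twenty_mul_le hX hδ hA (k := 20) (by norm_num)]
    · have h5 := hz.twenty_mul_le hX hδ hA' hk.ge
      linarith [dist_apply_le_of_dist_le (c ^ k) z y, dist_comm y z]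
  rcases min_le_iff.1 (hX.min_gromovProd_le y ((c ^ (20 : ℤ)) y) ((a ^ (-20 : ℤ)) y)
    ((c ^ (-20 : ℤ)) y)) with h | h
  · exact key 20 (by norm_num) h2 (by linarith)
  · rw [gromovProd_comm] at h
    refine key (-20) (by norm_num) ?_ (by linarith)
    rwa [neg_neg, gromovProd_comm]

/-- Either the orbit of an axis point of `a` stays close to its image under `g`, or a large power
of `a` plays ping-pong with a short word in `a` and its conjugate by `g`. -/
theorem forall_exists_dist_le_or_isPingPong (hX : IsDeltaHyperbolic X δ) (hδ : 0 < δ)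
    (hy : IsAxisPoint δ a y) (g : X ≃ᵢ X) :
    (∀ n : ℤ, ∃ k : ℤ, dist ((a ^ n) y) (g ((a ^ k) y)) ≤ 5 * dist y (a y)) ∨
      ∃ τ s e : ℤ, (τ = 1 ∨ τ = -1) ∧ |s| ≤ 20 ∧ |e| ≤ 20 ∧
        IsPingPong (a ^ (20 * τ)) (g * a ^ s * g⁻¹ * a ^ e) := by
  set A := dist y (a y) with hA
  obtain ⟨hAδ, hA0⟩ := hy.nonneg_large hδ rfl
  rw [← hA] at hAδ hA0
  have hconj : ∀ (a : X ≃ᵢ X) (k : ℤ), (g * a * g⁻¹) ^ k = g * a ^ k * g⁻¹ := fun a k => conj_zpow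
  have happ : ∀ (a : X ≃ᵢ X) (k : ℤ), ((g * a * g⁻¹) ^ k) (g y) = g ((a ^ k) y) := fun a k => by
    rw [hconj]; simp [IsometryEquiv.mul_apply]
  set I := {i : ℤ | ∃ j : ℤ, dist ((a ^ i) y) (g ((a ^ j) y)) ≤ 2 * A} with hI
  have hz := hy.map g
  have hzA : dist (g y) ((g * a * g⁻¹) (g y)) = A := dist_conj_apply a g y
  by_cases hemp : I = ∅
  · right
    have hfar : ∀ i j : ℤ, 2 * A < dist ((a ^ i) y) (g ((a ^ j) y)) := by
      intro i j
      by_contra! h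
      exact (Set.eq_empty_iff_forall_notMem.1 hemp i) ⟨j, h⟩
    obtain ⟨⟨i, j⟩, hij⟩ := exists_lt_of_ciInf_lt
      (f := fun p : ℤ × ℤ => dist ((a ^ p.1) y) (g ((a ^ p.2) y))) (lt_add_of_pos_right _ hδ)
    have hmin : ∀ k l : ℤ, dist ((a ^ i) y) (g ((a ^ j) y)) ≤
        dist ((a ^ k) y) (g ((a ^ l) y)) + δ := by
      intro k l
      refine hij.le.trans ?_
      gcongr
      exact ciInf_le (f := fun p : ℤ × ℤ => dist ((a ^ p.1) y) (g ((a ^ p.2) y)))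
        ⟨0, by rintro _ ⟨k, rfl⟩; exact dist_nonneg⟩ (k, l)
    refine ⟨1, 20, 20, Or.inl rfl, by norm_num, by norm_num, ?_⟩
    rw [← happ] at hmin
    have := (hy.zpow_apply i).isPingPong_of_far hX hδ (hz.zpow_apply j) (A := A)
      (disp_zpow_apply a i y) (by rw [disp_zpow_apply, hzA]) (fun k => ?_) (fun k => ?_)
      (by rw [happ]; exact hfar i j)
    · rw [← hconj]
      exact_mod_cast this
    · rw [dist_comm, dist_comm _ ((a ^ k) _), ← IsometryEquiv.mul_apply (a ^ k), ← zpow_add,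
        happ]
      rw [happ] at hmin
      exact hmin _ _
    · rw [← IsometryEquiv.mul_apply ((g * a * g⁻¹) ^ k), ← zpow_add, happ (k := k + j)]
      exact hmin _ _
  obtain ⟨i₀, hi₀⟩ := Set.nonempty_iff_ne_empty.2 hemp
  have near : ∀ (b : X ≃ᵢ X), IsAxisPoint δ b y → dist y (b y) = A → ∀ i j : ℤ,
      dist ((b ^ i) y) (g ((b ^ j) y)) ≤ 2 * A →
      (∀ m k : ℤ, i < m → 2 * A < dist ((b ^ m) y) (g ((b ^ k) y))) →
      ∃ k : ℤ, |k| ≤ 20 ∧ IsPingPong (b ^ (20 : ℤ)) (g * b ^ k * g⁻¹) := by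
    intro b hb hbA i j hij hfar
    have hzb : dist (g y) ((g * b * g⁻¹) (g y)) = A := by rw [dist_conj_apply, hbA]
    obtain ⟨k, hk, hpp⟩ := (hb.zpow_apply i).isPingPong_of_near hX hδ ((hb.map g).zpow_apply j)
      (A := A) (by rw [disp_zpow_apply, hbA]) (by rw [disp_zpow_apply, hzb]) (by rwa [happ]) (fun m k hm => by
        rw [← IsometryEquiv.mul_apply, ← IsometryEquiv.mul_apply (_ ^ k), ← zpow_add, ← zpow_add,
          happ]
        exact hfar _ _ (by omega))
    exact ⟨k, hk, by rwa [hconj] at hpp⟩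
  by_cases hab : BddAbove I
  · right
    obtain ⟨⟨j, hj⟩, hmax⟩ := (⟨Int.csSup_mem ⟨i₀, hi₀⟩ hab, fun i hi => le_csSup hab hi⟩ :
      sSup I ∈ I ∧ ∀ i ∈ I, i ≤ sSup I)
    obtain ⟨k, hk, hpp⟩ := near a hy rfl (sSup I) j hj fun m k hm => by
      by_contra! h
      exact absurd (hmax m ⟨k, h⟩) (by omega)
    exact ⟨1, k, 0, Or.inl rfl, hk, by norm_num, by simpa using hpp⟩
  by_cases hbe : BddBelow I
  · right
    obtain ⟨⟨j, hj⟩, hmax⟩ := (⟨Int.csInf_mem ⟨i₀, hi₀⟩ hbe, fun i hi => csInf_le hbe hi⟩ :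
      sInf I ∈ I ∧ ∀ i ∈ I, sInf I ≤ i)
    obtain ⟨k, hk, hpp⟩ := near a⁻¹ hy.inv (by rw [dist_inv_apply]) (-sInf I) (-j)
      (by rw [inv_zpow, inv_zpow, ← zpow_neg, ← zpow_neg, neg_neg, neg_neg]; exact hj)
      fun m k hm => by
        by_contra! h
        rw [inv_zpow, inv_zpow, ← zpow_neg, ← zpow_neg] at h
        exact absurd (hmax (-m) ⟨-k, h⟩) (by omega)
    rw [inv_zpow, inv_zpow, ← zpow_neg, ← zpow_neg] at hpp
    exact ⟨-1, -k, 0, Or.inr rfl, by rwa [abs_neg], by norm_num, by simpa using hpp⟩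
  left
  intro n
  rw [not_bddAbove_iff] at hab
  rw [not_bddBelow_iff] at hbe
  obtain ⟨i, ⟨i', hi⟩, hni⟩ := hab n
  obtain ⟨j, ⟨j', hj⟩, hnj⟩ := hbe n
  set p := (a ^ n) y with hp
  have hpp : ∀ k, (a ^ (k - n)) p = (a ^ k) y := fun k => by
    rw [hp, ← IsometryEquiv.mul_apply, ← zpow_add, sub_add_cancel]
  have h1 := (hy.zpow_apply n).gromovProd_zpow_neg_le hX hδ (i := i - n) (j := j - n) (by omega)
    (by omega)
  change gromovProd p _ _ ≤ _ at h1
  rw [← hp, hpp, hpp] at h1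
  have h2 := gromovProd_le_add p (g ((a ^ i') y)) (g ((a ^ j') y)) ((a ^ i) y) ((a ^ j) y)
  rw [dist_comm] at hi hj
  obtain ⟨l, hl⟩ := exists_closest_zpow hδ (g * a * g⁻¹) (g y) p
  have hz' := hz.zpow_apply l
  refine ⟨l, ?_⟩
  have hzl : ∀ k : ℤ, ((g * a * g⁻¹) ^ (k - l)) (((g * a * g⁻¹) ^ l) (g y)) = g ((a ^ k) y) :=
    fun k => by rw [← IsometryEquiv.mul_apply, ← zpow_add, sub_add_cancel, happ]
  have h9 := hz'.dist_le_of_closest hX hδ (p := p)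
    (fun k => by
      rw [← IsometryEquiv.mul_apply ((g * a * g⁻¹) ^ k), ← zpow_add]; exact hl (k + l))
    (i' - l) (j' - l)
  rw [hzl, hzl, disp_zpow_apply, hzA, happ] at h9
  linarith

end IsAxisPoint

end TwoAxes

theorem relIndex_ne_zero_of_finite {G : Type*} [Group G] {Λ Γ : Subgroup G} {F : Set G}
    (hF : F.Finite) (h : ∀ g ∈ Γ, ∃ f ∈ F, f⁻¹ * g ∈ Λ) : Λ.relIndex Γ ≠ 0 := by
  have : Finite F := hF
  have key : ∀ q : Γ ⧸ Λ.subgroupOf Γ, ∃ f : F, (f : G)⁻¹ * (q.out : G) ∈ Λ := fun q => by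
    obtain ⟨f, hf, hfq⟩ := h q.out q.out.2
    exact ⟨⟨f, hf⟩, hfq⟩
  choose f hf using key
  have hinj : Function.Injective f := by
    intro p q hpq
    rw [← Quotient.out_eq p, ← Quotient.out_eq q]
    refine QuotientGroup.eq.2 (Subgroup.mem_subgroupOf.2 ?_)
    have := mul_mem (inv_mem (hf p)) (hpq ▸ hf q)
    simpa [mul_assoc] using this
  have : Finite (Γ ⧸ Λ.subgroupOf Γ) := Finite.of_injective f hinj
  rw [Subgroup.relIndex, ← Subgroup.finiteIndex_iff]
  exact Subgroup.finiteIndex_of_finite_quotient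

section CoarseStabilizer

variable {X : Type*} [MetricSpace X] {δ : ℝ} {σ : X → X → ℝ → X} {a g : X ≃ᵢ X}

theorem IsPingPong.conj {u w : X ≃ᵢ X} (h : IsPingPong u w) (g : X ≃ᵢ X) :
    IsPingPong (g * u * g⁻¹) (g * w * g⁻¹) := by
  obtain ⟨A, W, hd, hne, hu, hw⟩ := h
  refine ⟨g '' A, g '' W, (Set.disjoint_image_iff g.injective).2 hd, hne.image _, ?_, ?_⟩ <;>
    rw [← Set.image_union]
  · rintro _ ⟨p, hp, rfl⟩
    exact ⟨u p, hu hp, by simp [IsometryEquiv.mul_apply]⟩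
  · rintro _ ⟨p, hp, rfl⟩
    exact ⟨w p, hw hp, by simp [IsometryEquiv.mul_apply]⟩

/-- The orbit of `x` under `a` lies in a bounded neighbourhood of its image under `g`. -/
def CoarselyCovers (a : X ≃ᵢ X) (x : X) (g : X ≃ᵢ X) : Prop :=
  ∃ K : ℝ, ∀ n : ℤ, ∃ k : ℤ, dist ((a ^ n) x) (g ((a ^ k) x)) ≤ K

theorem CoarselyCovers.mul {x : X} {g h : X ≃ᵢ X} (hg : CoarselyCovers a x g)
    (hh : CoarselyCovers a x h) : CoarselyCovers a x (g * h) := by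
  obtain ⟨K, hK⟩ := hg
  obtain ⟨L, hL⟩ := hh
  refine ⟨K + L, fun n => ?_⟩
  obtain ⟨k, hk⟩ := hK n
  obtain ⟨l, hl⟩ := hL k
  refine ⟨l, (dist_triangle _ (g ((a ^ k) x)) _).trans ?_⟩
  rw [IsometryEquiv.mul_apply, g.isometry.dist_eq]
  linarith

/-- The isometries preserving the orbit of `x` under `a` up to a bounded distance. -/
def coarseStabilizer (a : X ≃ᵢ X) (x : X) : Subgroup (X ≃ᵢ X) where
  carrier := {g | CoarselyCovers a x g ∧ CoarselyCovers a x g⁻¹}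
  one_mem' := ⟨⟨0, fun n => ⟨n, by simp⟩⟩, ⟨0, fun n => ⟨n, by simp⟩⟩⟩
  mul_mem' := fun {g h} hg hh => ⟨hg.1.mul hh.1, by rw [mul_inv_rev]; exact hh.2.mul hg.2⟩
  inv_mem' := fun {g} hg => ⟨hg.2, by rw [inv_inv]; exact hg.1⟩

theorem self_mem_coarseStabilizer (a : X ≃ᵢ X) (x : X) : a ∈ coarseStabilizer a x := by
  refine ⟨⟨0, fun n => ⟨n - 1, ?_⟩⟩, ⟨0, fun n => ⟨n + 1, ?_⟩⟩⟩
  · rw [← IsometryEquiv.mul_apply, ← zpow_one_add, add_sub_cancel, dist_self]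
  · rw [dist_inv_right, ← IsometryEquiv.mul_apply, ← zpow_one_add, add_comm, dist_self]

theorem exists_dist_zpow_mul_le (a : X ≃ᵢ X) (x y : X) {n : ℤ} (hn : n ≠ 0) (k : ℤ) :
    ∃ j : ℤ, dist ((a ^ k) x) ((a ^ (n * j)) y) ≤ |(n : ℝ)| * dist x (a x) + dist x y := by
  refine ⟨k / n, ?_⟩
  have h1 : k = n * (k / n) + k % n := (Int.mul_ediv_add_emod k n).symm
  have h2 : |((k % n : ℤ) : ℝ)| ≤ |(n : ℝ)| := by
    have h3 := Int.emod_nonneg k hn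
    have h4 := Int.emod_lt_abs k hn
    exact_mod_cast (abs_of_nonneg h3).trans_le h4.le
  have h3 : dist ((a ^ k) x) ((a ^ (n * (k / n))) y) = dist ((a ^ (k % n)) x) y := by
    nth_rewrite 1 [h1]
    rw [zpow_add, IsometryEquiv.mul_apply, IsometryEquiv.dist_eq]
  rw [h3]
  refine (dist_triangle_left _ _ x).trans ?_
  have := (dist_zpow_apply_le a x (k % n)).trans
    (mul_le_mul_of_nonneg_right h2 dist_nonneg)
  linarith

theorem CoarselyCovers.of_zpow {x y : X} {n : ℤ} (hn : n ≠ 0) (h : CoarselyCovers (a ^ n) y g) :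
    CoarselyCovers a x g := by
  obtain ⟨K, hK⟩ := h
  refine ⟨|(n : ℝ)| * dist x (a x) + dist x y + (K + dist x y), fun k => ?_⟩
  obtain ⟨j, hj⟩ := exists_dist_zpow_mul_le a x y hn k
  obtain ⟨i, hi⟩ := hK j
  refine ⟨n * i, (dist_triangle _ ((a ^ (n * j)) y) _).trans (add_le_add hj ?_)⟩
  rw [← zpow_mul, ← zpow_mul] at hi
  refine (dist_triangle _ (g ((a ^ (n * i)) y)) _).trans (add_le_add hi ?_)
  rw [g.isometry.dist_eq, IsometryEquiv.dist_eq, dist_comm]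

theorem IsAxisPoint.mem_coarseStabilizer_or (hX : IsDeltaHyperbolic X δ) (hδ : 0 < δ) {n : ℤ}
    (hn : n ≠ 0) {y : X} (hy : IsAxisPoint δ (a ^ n) y) (x : X) (g : X ≃ᵢ X) :
    g ∈ coarseStabilizer a x ∨ ∃ h, (h = g ∨ h = g⁻¹) ∧ ∃ τ s e : ℤ, (τ = 1 ∨ τ = -1) ∧
      |s| ≤ 20 ∧ |e| ≤ 20 ∧
        IsPingPong ((a ^ n) ^ (20 * τ)) (h * (a ^ n) ^ s * h⁻¹ * (a ^ n) ^ e) := by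
  rcases hy.forall_exists_dist_le_or_isPingPong hX hδ g with h1 | h1
  · rcases hy.forall_exists_dist_le_or_isPingPong hX hδ g⁻¹ with h2 | h2
    · exact Or.inl ⟨CoarselyCovers.of_zpow hn ⟨_, h1⟩, CoarselyCovers.of_zpow hn ⟨_, h2⟩⟩
    · exact Or.inr ⟨_, Or.inr rfl, h2⟩
  · exact Or.inr ⟨_, Or.inl rfl, h1⟩

theorem IsGCB.exists_isAxisPoint [Nonempty X] (hσ : IsGCB σ) (hδ : 0 < δ)
    (ha : IsSigmaIsometry σ a) {n : ℤ} (hn : 1000 * δ ≤ |(n : ℝ)| * transLength a) :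
    ∃ y, IsAxisPoint δ (a ^ n) y := by
  obtain ⟨y, hy⟩ := exists_disp_lt (a ^ n) hδ
  exact ⟨y, hσ.isAxisPoint ((sigmaIsometries σ).zpow_mem ha n)
    (hn.trans (le_transLength fun z => hσ.abs_mul_transLength_le_disp ha n z)) hy.le⟩

theorem exists_int_le_mul {l : ℝ} (hl : 0 < l) (r : ℝ) :
    ∃ n : ℤ, 0 < n ∧ r ≤ n * l := by
  obtain ⟨n, hn⟩ := exists_nat_gt (r / l)
  refine ⟨n + 1, by omega, ?_⟩
  rw [div_lt_iff₀ hl] at hn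
  push_cast
  linarith

theorem IsAxisPoint.exists_dist_le_of_mem_coarseStabilizer (hX : IsDeltaHyperbolic X δ)
    (hδ : 0 < δ) {n : ℤ} (hn : n ≠ 0) {y : X} (hy : IsAxisPoint δ (a ^ n) y) {x : X}
    (hg : g ∈ coarseStabilizer a x) :
    ∃ k : ℤ, dist (g y) ((a ^ k) y) ≤ dist y ((a ^ n) y) := by
  obtain ⟨K, hK⟩ := hg.2
  set A := dist y ((a ^ n) y) with hA
  have hAl := hy.large
  rw [← hA] at hAl
  set K' := dist y x + (K + (|(n : ℝ)| * dist x (a x) + dist x y)) with hK'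
  have hnear : ∀ i : ℤ, ∃ j : ℤ, dist (g (((a ^ n) ^ i) y)) (((a ^ n) ^ j) y) ≤ K' := by
    intro i
    obtain ⟨k, hk⟩ := hK (n * i)
    obtain ⟨j, hj⟩ := exists_dist_zpow_mul_le a x y hn k
    refine ⟨j, ?_⟩
    rw [dist_inv_right] at hk
    rw [← zpow_mul, ← zpow_mul]
    refine (dist_triangle _ (g ((a ^ (n * i)) x)) _).trans (add_le_add ?_ ?_)
    · rw [g.isometry.dist_eq, IsometryEquiv.dist_eq]
    · exact (dist_triangle _ ((a ^ k) x) _).trans (add_le_add hk hj)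
  obtain ⟨N, hN0, hN⟩ := exists_int_le_mul (l := A - 6 * δ) (by linarith) (K' + 10 * δ)
  have hlarge : ∀ i : ℤ, |i| = N → K' + 10 * δ ≤ dist y (((a ^ n) ^ i) y) := by
    intro i hi
    refine le_trans ?_ (hy.le_dist_zpow hX hδ i)
    rw [← Int.cast_abs, hi]
    exact hN
  obtain ⟨i, hi⟩ := hnear N
  obtain ⟨j, hj⟩ := hnear (-N)
  have hgp : ∀ m i : ℤ, |m| = N → dist (g (((a ^ n) ^ m) y)) (((a ^ n) ^ i) y) ≤ K' →
      10 * δ ≤ gromovProd (g y) (((a ^ n) ^ i) y) (g (((a ^ n) ^ m) y)) := by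
    intro m i hm hd
    have h1 := hlarge m hm
    have h2 := (abs_le.1 (abs_gromovProd_sub_le (g y) (g (((a ^ n) ^ m) y)) (g (((a ^ n) ^ m) y))
      (((a ^ n) ^ i) y))).2
    rw [gromovProd_self, g.isometry.dist_eq, gromovProd_comm] at h2
    linarith
  have h1 := hy.gromovProd_zpow_neg_le hX hδ (i := N) (j := -N) hN0 (by omega)
  rw [← gromovProd_map g] at h1
  have h2 := hX.gromovProd_le (z := g y) (p := ((a ^ n) ^ i) y) (q := g (((a ^ n) ^ N) y))
    (r := g (((a ^ n) ^ (-N)) y)) (D := 3 * δ)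
    (by linarith [hgp N i (abs_of_pos hN0) hi]) h1
  rw [gromovProd_comm] at h2
  have h3 := hX.gromovProd_le (z := g y) (p := ((a ^ n) ^ j) y)
    (q := g (((a ^ n) ^ (-N)) y)) (r := ((a ^ n) ^ i) y) (D := 4 * δ)
    (by linarith [hgp (-N) j (by rw [abs_neg, abs_of_pos hN0]) hj]) (by linarith)
  obtain ⟨l, hl⟩ := exists_closest_zpow hδ (a ^ n) y (g y)
  have hyl := hy.zpow_apply l
  have hzl : ∀ k : ℤ, ((a ^ n) ^ (k - l)) (((a ^ n) ^ l) y) = ((a ^ n) ^ k) y :=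
    fun k => by rw [← IsometryEquiv.mul_apply, ← zpow_add, sub_add_cancel]
  have h9 := hyl.dist_le_of_closest hX hδ (p := g y)
    (fun k => by
      rw [← IsometryEquiv.mul_apply ((a ^ n) ^ k), ← zpow_add]; exact hl (k + l))
    (j - l) (i - l)
  rw [hzl, hzl, disp_zpow_apply] at h9
  refine ⟨n * l, ?_⟩
  rw [zpow_mul]
  linarith

/-- The coarse stabilizer of an axis is virtually cyclic. -/
theorem IsGCB.isVirtuallyNilpotent_of_coarseStabilizer [Nonempty X] (hσ : IsGCB σ)
    (hX : IsDeltaHyperbolic X δ) (hδ : 0 < δ) (ha : IsSigmaIsometry σ a)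
    (hl : 0 < transLength a) {Γ : Subgroup (X ≃ᵢ X)} (hd : IsDiscreteSubgroup Γ) (haΓ : a ∈ Γ)
    (x : X) (hi : (coarseStabilizer a x).relIndex Γ ≠ 0) : IsVirtuallyNilpotent ↥Γ := by
  obtain ⟨n, hn0, hn⟩ := exists_int_le_mul hl (1000 * δ)
  obtain ⟨y, hy⟩ := hσ.exists_isAxisPoint hδ ha (n := n)
    (by rwa [abs_of_pos (by exact_mod_cast hn0)])
  have h1 : (Subgroup.zpowers a).relIndex (coarseStabilizer a x ⊓ Γ) ≠ 0 := by
    refine relIndex_ne_zero_of_finite (hd y (dist y ((a ^ n) y))) fun g hg => ?_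
    obtain ⟨k, hk⟩ := hy.exists_dist_le_of_mem_coarseStabilizer hX hδ hn0.ne' (inv_mem hg.1)
    refine ⟨g * a ^ k, ⟨mul_mem hg.2 (zpow_mem haΓ k), ?_⟩, ?_⟩
    · rwa [IsometryEquiv.mul_apply, ← dist_inv_left]
    · rw [mul_inv_rev, inv_mul_cancel_right, ← zpow_neg]
      exact zpow_mem (Subgroup.mem_zpowers a) _
  have h2 : IsVirtuallyNilpotent ↥(coarseStabilizer a x ⊓ Γ) := by
    refine isVirtuallyNilpotent_subgroup_iff.2 ⟨Subgroup.zpowers a ⊓ (coarseStabilizer a x ⊓ Γ),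
      inf_le_right, by rwa [Subgroup.inf_relIndex_right], ?_⟩
    rw [Subgroup.isNilpotent_iff_lowerCentralSeries]
    refine ⟨1, ?_⟩
    rw [Subgroup.lowerCentralSeries_succ, Subgroup.lowerCentralSeries_zero, eq_bot_iff,
      Subgroup.commutator_le]
    rintro u ⟨hu, -⟩ v ⟨hv, -⟩
    rw [Subgroup.mem_bot, commutatorElement_eq_one_iff_mul_comm]
    obtain ⟨i, rfl⟩ := hu
    obtain ⟨j, rfl⟩ := hv
    exact (Commute.zpow_zpow_self a i j).eq
  exact h2.of_relIndex_ne_zero inf_le_right (by rwa [Subgroup.inf_relIndex_right])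

/-- In a discrete group, conjugates of powers of a hyperbolic element generating a virtually
nilpotent group with that element are conjugate by elements of the coarse stabilizer. -/
theorem IsGCB.mem_coarseStabilizer [Nonempty X] (hσ : IsGCB σ)
    (hX : IsDeltaHyperbolic X δ) (hδ : 0 < δ) (ha : IsSigmaIsometry σ a)
    (hl : 0 < transLength a) (x : X) {m l : ℤ} (hm : m ≠ 0) (hl0 : l ≠ 0)
    (hv : IsVirtuallyNilpotent ↥(Subgroup.closure ({a ^ m, g * a ^ l * g⁻¹} : Set (X ≃ᵢ X)))) :
    g ∈ coarseStabilizer a x := by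
  obtain ⟨n, hn0, hn⟩ := exists_int_le_mul hl (1000 * δ)
  set N := n * m * l with hN
  have hN0 : N ≠ 0 := mul_ne_zero (mul_ne_zero hn0.ne' hm) hl0
  have hnN : 1000 * δ ≤ |(N : ℝ)| * transLength a := by
    refine hn.trans (mul_le_mul_of_nonneg_right ?_ hl.le)
    have : n ≤ |N| := by
      rw [hN, mul_assoc, abs_mul, abs_of_pos hn0]
      exact le_mul_of_one_le_right hn0.le (Int.one_le_abs (mul_ne_zero hm hl0))
    exact_mod_cast this
  obtain ⟨y, hy⟩ := hσ.exists_isAxisPoint hδ ha hnN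
  rcases hy.mem_coarseStabilizer_or hX hδ hN0 x g with h | ⟨h, hh, τ, s, e, -, -, -, hpp⟩
  · exact h
  exfalso
  set V := Subgroup.closure ({a ^ m, g * a ^ l * g⁻¹} : Set (X ≃ᵢ X))
  have h1 : ∀ k : ℤ, (a ^ N) ^ k ∈ V := fun k => by
    rw [← zpow_mul, show N * k = m * (n * l * k) by rw [hN]; ring, zpow_mul]
    exact zpow_mem (Subgroup.subset_closure (by simp)) _
  have h2 : ∀ k : ℤ, g * (a ^ N) ^ k * g⁻¹ ∈ V := fun k => by
    rw [← zpow_mul, show N * k = l * (n * m * k) by rw [hN]; ring, zpow_mul, ← conj_zpow]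
    exact zpow_mem (Subgroup.subset_closure (by simp)) _
  rcases hh with rfl | rfl
  · exact hpp.not_isVirtuallyNilpotent (h1 _) (mul_mem (h2 s) (h1 e)) hv
  · refine (hpp.conj g).not_isVirtuallyNilpotent (h2 _) ?_ hv
    have := mul_mem (h1 s) (h2 e)
    convert this using 1
    group

end CoarseStabilizer

section Escape

variable {X : Type*} [MetricSpace X] {a : X ≃ᵢ X}

theorem IsNonElliptic.zpow_injective (ha : IsNonElliptic a) [Nonempty X] :
    Function.Injective fun i : ℤ => a ^ i := by
  refine injective_zpow_iff_not_isOfFinOrder.2 fun h => ?_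
  obtain ⟨x⟩ := ‹Nonempty X›
  refine ha x (Set.Finite.isBounded ?_)
  have h1 : (Set.range fun n : ℤ => a ^ n).Finite := h.finite_zpowers
  rw [show (fun n : ℤ => (a ^ n) x) = (fun g : X ≃ᵢ X => g x) ∘ fun n : ℤ => a ^ n from rfl,
    Set.range_comp]
  exact h1.image _

/-- The orbit of `x` under the powers of `a` goes to infinity. -/
def Escapes (a : X ≃ᵢ X) (x : X) : Prop :=
  ∀ R : ℝ, ∃ M : ℕ, ∀ i : ℤ, (M : ℤ) ≤ |i| → R ≤ dist x ((a ^ i) x)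

theorem IsNonElliptic.escapes (ha : IsNonElliptic a) {Γ : Subgroup (X ≃ᵢ X)}
    (hd : IsDiscreteSubgroup Γ) (haΓ : a ∈ Γ) (x : X) : Escapes a x := by
  have : Nonempty X := ⟨x⟩
  intro R
  have h1 : {i : ℤ | dist x ((a ^ i) x) ≤ R}.Finite :=
    ((hd x R).preimage (ha.zpow_injective.injOn)).subset
      fun i hi => ⟨Γ.zpow_mem haΓ i, hi⟩
  obtain ⟨M, hM⟩ := (h1.image Int.natAbs).bddAbove
  refine ⟨M + 1, fun i hi => ?_⟩
  by_contra! h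
  have := hM (Set.mem_image_of_mem Int.natAbs (show i ∈ {i : ℤ | _} from h.le))
  rw [Int.abs_eq_natAbs] at hi
  omega

end Escape

section Parabolic

variable {X : Type*} [MetricSpace X] {δ : ℝ} {a g : X ≃ᵢ X} {x : X} {t : ℕ → X}

/-- The isometries `g` for which `g (t n)` and `t n` are eventually close at infinity. -/
def endStabilizer (hX : IsDeltaHyperbolic X δ) (x : X) (t : ℕ → X)
    (ht : Tendsto (fun n => dist x (t n)) atTop atTop) : Subgroup (X ≃ᵢ X) where
  carrier := {g | Tendsto (fun n => gromovProd x (g (t n)) (t n)) atTop atTop}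
  one_mem' := by
    simpa [gromovProd_self] using ht
  mul_mem' := by
    intro g h hg hh
    simp only [Set.mem_ofPred_eq, Filter.tendsto_atTop] at hg hh ⊢
    intro T
    filter_upwards [hg (T + δ), hh (T + δ + dist (g⁻¹ x) x)] with n h1 h2
    have h3 := hX.min_gromovProd_le x ((g * h) (t n)) (g (t n)) (t n)
    have h4 : T + δ ≤ gromovProd x ((g * h) (t n)) (g (t n)) := by
      rw [IsometryEquiv.mul_apply, ← gromovProd_map g⁻¹, IsometryEquiv.inv_apply_self,
        IsometryEquiv.inv_apply_self]
      linarith [(abs_le.1 (abs_gromovProd_sub_le_base (g⁻¹ x) x (h (t n)) (t n))).1]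
    linarith [le_min h4 h1]
  inv_mem' := by
    intro g hg
    simp only [Set.mem_ofPred_eq, Filter.tendsto_atTop] at hg ⊢
    intro T
    filter_upwards [hg (T + dist (g x) x)] with n h1
    rw [← gromovProd_map g, IsometryEquiv.apply_inv_self, gromovProd_comm]
    linarith [(abs_le.1 (abs_gromovProd_sub_le_base (g x) x (g (t n)) (t n))).1]

theorem mem_endStabilizer {hX : IsDeltaHyperbolic X δ}
    {ht : Tendsto (fun n => dist x (t n)) atTop atTop} :
    g ∈ endStabilizer hX x t ht ↔ ∀ T, ∀ᶠ n in atTop, T ≤ gromovProd x (g (t n)) (t n) :=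
  Filter.tendsto_atTop

theorem sub_le_gromovProd_of_disp_le {s : X} (h : dist s (g s) ≤ δ) (x : X) :
    (dist x (g x) - δ) / 2 ≤ gromovProd x (g x) s := by
  unfold gromovProd
  have := dist_triangle (g x) (g s) s
  rw [g.isometry.dist_eq, dist_comm (g s) s] at this
  linarith

variable (hat : ∀ i : ℤ, ∀ᶠ n in atTop, dist (t n) ((a ^ i) (t n)) ≤ δ)
include hat

theorem Escapes.tendsto_dist (hx : Escapes a x) :
    Tendsto (fun n => dist x (t n)) atTop atTop := by
  refine Filter.tendsto_atTop.2 fun T => ?_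
  obtain ⟨M, hM⟩ := hx (2 * T + δ)
  filter_upwards [hat M] with n h
  linarith [sub_le_gromovProd_of_disp_le h x, hM M (by simp),
    gromovProd_le_right x ((a ^ (M : ℤ)) x) (t n)]

theorem Escapes.eventually_le_gromovProd (hX : IsDeltaHyperbolic X δ) (hx : Escapes a x) (T : ℝ) :
    ∃ k, ∀ n ≥ k, ∀ m ≥ k, T ≤ gromovProd x (t n) (t m) := by
  obtain ⟨M, hM⟩ := hx (2 * T + 3 * δ)
  obtain ⟨k, hk⟩ := eventually_atTop.1 (hat M)
  refine ⟨k, fun n hn m hm => ?_⟩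
  have h1 := sub_le_gromovProd_of_disp_le (hk n hn) x
  have h2 := sub_le_gromovProd_of_disp_le (hk m hm) x
  have h3 := hX.min_gromovProd_le x (t n) ((a ^ (M : ℤ)) x) (t m)
  rw [gromovProd_comm] at h1
  have h4 := hM M (by simp)
  linarith [le_min (show T + δ ≤ gromovProd x (t n) ((a ^ (M : ℤ)) x) by linarith)
    (show T + δ ≤ gromovProd x ((a ^ (M : ℤ)) x) (t m) by linarith)]

theorem Escapes.mem_endStabilizer (hX : IsDeltaHyperbolic X δ) (hδ : 0 < δ) (hx : Escapes a x)
    {m l : ℤ} (hm : m ≠ 0) (hl : l ≠ 0)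
    (hv : IsVirtuallyNilpotent ↥(Subgroup.closure ({a ^ m, g * a ^ l * g⁻¹} : Set (X ≃ᵢ X)))) :
    g ∈ endStabilizer hX x t (hx.tendsto_dist hat) := by
  by_contra hg
  rw [_root_.mem_endStabilizer] at hg
  push Not at hg
  obtain ⟨T, hT⟩ := hg
  set D := max T 0 + 2 * δ + dist x (g x) with hD
  have hT0 := le_max_left T 0
  have hT1 := le_max_right T 0
  obtain ⟨M, hM⟩ := hx (2 * D + 7 * δ + 2 * dist x (g x))
  have hM0 : M ≠ 0 := by
    rintro rfl
    have := hM 0 (by simp)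
    simp only [zpow_zero] at this
    change _ ≤ dist x x at this
    rw [dist_self] at this
    linarith [dist_nonneg (x := x) (y := g x)]
  set u := a ^ (m * l * M) with hu
  have hul : ∀ j : ℤ, j ≠ 0 → 2 * D + 7 * δ + 2 * dist x (g x) ≤ dist x ((u ^ j) x) := by
    intro j hj
    rw [hu, ← zpow_mul]
    refine hM _ ?_
    rw [show m * l * M * j = (m * l * j) * M by ring, abs_mul, Nat.abs_cast]
    exact le_mul_of_one_le_left (by positivity)
      (Int.one_le_abs (mul_ne_zero (mul_ne_zero hm hl) hj))
  have huv : ∀ j k : ℤ, j ≠ 0 → k ≠ 0 →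
      gromovProd x ((u ^ j) x) (((g * u * g⁻¹) ^ k) x) ≤ D := by
    intro j k hj hk
    have h1 := hat (m * l * M * j)
    have h2 := hat (m * l * M * k)
    rw [zpow_mul, ← hu] at h1 h2
    obtain ⟨n, h0, h1, h2⟩ := (hT.and_eventually (h1.and h2)).exists
    have h3 := sub_le_gromovProd_of_disp_le h1 x
    have h4 := sub_le_gromovProd_of_disp_le h2 x
    have h5 : max T 0 + 3 * δ ≤ gromovProd x (g (t n)) (g ((u ^ k) x)) := by
      rw [← gromovProd_map g⁻¹, IsometryEquiv.inv_apply_self, IsometryEquiv.inv_apply_self,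
        gromovProd_comm]
      have h6 := (abs_le.1 (abs_gromovProd_sub_le_base (g⁻¹ x) x ((u ^ k) x) (t n))).1
      rw [dist_comm, dist_inv_apply] at h6
      linarith [hul k hk, dist_nonneg (x := x) (y := g x)]
    have h6 : gromovProd x ((u ^ j) x) (g ((u ^ k) x)) ≤ max T 0 + 2 * δ := by
      have h7 := hX.gromovProd_le (z := x) (p := (u ^ j) x) (q := t n) (r := g (t n))
        (D := max T 0) (by linarith [hul j hj, dist_nonneg (x := x) (y := g x)])
        (by rw [gromovProd_comm]; linarith)
      rw [gromovProd_comm] at h7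
      by_contra! h8
      have h9 := hX.min_gromovProd_le x (g (t n)) (g ((u ^ k) x)) ((u ^ j) x)
      rw [gromovProd_comm x (g ((u ^ k) x)) ((u ^ j) x)] at h9
      linarith [lt_min (show max T 0 + 2 * δ < gromovProd x (g (t n)) (g ((u ^ k) x)) by linarith)
        h8]
    have h7 := gromovProd_le_add x ((u ^ j) x) (((g * u * g⁻¹) ^ k) x) ((u ^ j) x) (g ((u ^ k) x))
    rw [dist_self, conj_zpow, IsometryEquiv.mul_apply, IsometryEquiv.mul_apply,
      g.isometry.dist_eq, IsometryEquiv.dist_eq, dist_comm, dist_inv_apply] at h7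
    rw [conj_zpow, IsometryEquiv.mul_apply, IsometryEquiv.mul_apply]
    linarith
  have hvl : ∀ j : ℤ, j ≠ 0 → 2 * D + 6 * δ < dist x (((g * u * g⁻¹) ^ j) x) := by
    intro j hj
    have h1 := dist_apply_le_of_dist_le (u ^ j) x (g⁻¹ x)
    rw [← dist_conj_apply', ← conj_zpow, dist_inv_apply] at h1
    linarith [hul j hj]
  refine (hX.isPingPong_pow_mul hδ.le huv (fun j hj => by linarith [hul j hj, dist_nonneg (x := x) (y := g x)]) hvl
    one_ne_zero).not_isVirtuallyNilpotent ?_ ?_ hv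
  · rw [pow_one, hu, show m * l * M = m * (l * M) by ring, zpow_mul]
    exact Subgroup.zpow_mem _ (Subgroup.subset_closure (by simp)) _
  · refine mul_mem ?_ ?_
    · have h1 : g * a ^ l * g⁻¹ ∈ Subgroup.closure ({a ^ m, g * a ^ l * g⁻¹} : Set (X ≃ᵢ X)) :=
        Subgroup.subset_closure (by simp)
      have h2 := Subgroup.zpow_mem _ h1 (m * M)
      rwa [conj_zpow, ← zpow_mul, show l * (m * M) = m * l * M by ring] at h2
    · rw [hu, show m * l * M = m * (l * M) by ring, zpow_mul]
      exact Subgroup.zpow_mem _ (Subgroup.subset_closure (by simp)) _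

omit hat

theorem IsDeltaHyperbolic.disp_le_max (hX : IsDeltaHyperbolic X δ) {p y : X}
    (hp : dist x p + dist p y = dist x y) (hgp : dist x (g x) ≤ dist x p)
    (h : dist x p + dist x (g x) ≤ gromovProd x (g y) y) :
    dist p (g p) ≤ max (dist (g x) y - dist x y) (dist (g⁻¹ x) y - dist x y) + 4 * δ := by
  have h1 := hX p (g p) x y
  have h2 : dist (g p) y ≤ dist p y + (dist (g x) y - dist x y) + 2 * δ := by
    have h3 := hX (g p) y (g x) (g y)
    simp only [g.isometry.dist_eq] at h3
    unfold gromovProd at h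
    have h4 := dist_triangle x (g x) y
    have h5 := dist_triangle x (g x) (g y)
    have h6 := dist_triangle (g x) x y
    rw [g.isometry.dist_eq] at h5
    rw [dist_comm (g x) x] at h6
    rw [dist_comm y (g y), dist_comm y (g x), dist_comm p x] at h3
    rcases max_cases (dist x p + dist (g y) y) (dist p y + dist (g x) y) with h7 | h7 <;> linarith
  have h3 := hX.busemann_sub_le (u := x) (v := g⁻¹ x) (s := y) (t := p)
    (by rw [dist_inv_apply]; unfold gromovProd; rw [dist_comm y p]; linarith)
  rw [dist_inv_left g x p] at h3
  rw [dist_comm p x] at h1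
  rcases max_cases (dist (g x) y - dist x y) (dist (g⁻¹ x) y - dist x y) with h7 | h7 <;>
  rcases max_cases (dist x p + dist (g p) y) (dist p y + dist (g p) x) with h8 | h8 <;>
  linarith [dist_comm (g p) x]

theorem IsDeltaHyperbolic.gromovProd_pow_le (hX : IsDeltaHyperbolic X δ) {p y : X}
    (h1 : gromovProd p (g p) y ≤ 4 * δ) (h2 : dist p (g p) - 5 * δ ≤ gromovProd p (g⁻¹ p) y)
    (h3 : 16 * δ ≤ dist p (g p)) (hδ : 0 < δ) (k : ℕ) :
    gromovProd p ((g ^ (k + 1)) p) y ≤ 5 * δ ∧ 2 * (k + 1) * δ ≤ dist p ((g ^ (k + 1)) p) := by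
  induction k with
  | zero =>
    rw [zero_add, pow_one]
    exact ⟨by linarith, by push_cast; linarith⟩
  | succ k ih =>
    have h4 := hX.gromovProd_le (z := p) (p := g⁻¹ p) (q := y) (r := (g ^ (k + 1)) p) (D := 5 * δ)
      (by linarith) (by rw [gromovProd_comm]; exact ih.1)
    rw [gromovProd_comm] at h4
    have h5 := gromovProd_map_right g p ((g ^ (k + 1)) p)
    rw [← IsometryEquiv.mul_apply, ← pow_succ'] at h5
    refine ⟨?_, ?_⟩
    · by_contra! h6
      have h7 := hX.gromovProd_le (z := p) (p := (g ^ (k + 1 + 1)) p) (q := g p) (r := y)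
        (D := 4 * δ) (by linarith) h1
      linarith
    · have h6 : dist p ((g ^ (k + 1 + 1)) p) = dist ((g ^ (k + 1)) p) (g⁻¹ p) := by
        rw [pow_succ' g (k + 1), IsometryEquiv.mul_apply, dist_comm _ (g⁻¹ p), dist_inv_left]
      unfold gromovProd at h4
      rw [h6, dist_inv_apply] at *
      push_cast
      linarith [ih.2]

end Parabolic

section Parabolic

variable {X : Type*} [MetricSpace X] {δ : ℝ} {σ : X → X → ℝ → X} {a g : X ≃ᵢ X} {x : X}
  {t : ℕ → X}

theorem Escapes.eventually_dist_sub_dist_le (hσ : IsGCB σ) (hX : IsDeltaHyperbolic X δ)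
    (hδ : 0 < δ) (hat : ∀ i : ℤ, ∀ᶠ n in atTop, dist (t n) ((a ^ i) (t n)) ≤ δ)
    (hx : Escapes a x) {Γ : Subgroup (X ≃ᵢ X)} (hd : IsDiscreteSubgroup Γ) (haΓ : a ∈ Γ)
    (hai : Function.Injective fun i : ℤ => a ^ i) (hgΓ : g ∈ Γ)
    (hg : g ∈ endStabilizer hX x t (hx.tendsto_dist hat)) :
    ∀ᶠ n in atTop, dist (g x) (t n) - dist x (t n) ≤ 22 * δ := by
  by_contra hcon
  have hcon' : ∃ᶠ n in atTop, 22 * δ < dist (g x) (t n) - dist x (t n) :=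
    fun h => hcon (h.mono fun n hn => not_lt.1 hn)
  have hgE := hg
  rw [_root_.mem_endStabilizer] at hg
  set α := dist x (g x) with hα
  obtain ⟨k₀, hk₀⟩ := hx.eventually_le_gromovProd hat hX (2 * α)
  obtain ⟨n, hs, hgn, hn⟩ := (hcon'.and_eventually
    ((hg (2 * α)).and (eventually_ge_atTop k₀))).exists
  have hα0 : 0 ≤ α := dist_nonneg
  set s := dist (g x) (t n) - dist x (t n) with hs'
  obtain ⟨l, -, hp1, hp2⟩ := hσ.exists_dist_eq x (t n) hα0
    (by linarith [gromovProd_le_right x (g (t n)) (t n)])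
  set p := σ x (t n) l
  have hbn : dist (g⁻¹ x) (t n) - dist x (t n) ≤ - s + 2 * δ := by
    have h1 := hX.busemann_sub_le (u := g x) (v := x) (s := t n) (t := g (t n)) ?_
    · rw [g.isometry.dist_eq] at h1
      rw [dist_inv_left]
      linarith
    · rw [dist_comm, ← hα]
      linarith [(abs_le.1 (abs_gromovProd_sub_le_base (g x) x (t n) (g (t n)))).1,
        gromovProd_comm x (t n) (g (t n)), dist_comm (g x) x]
  have hφ : dist p (g p) ≤ s + 4 * δ := by
    refine (hX.disp_le_max (by linarith) (by linarith) (by linarith)).trans ?_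
    rw [max_eq_left (by linarith)]
  have hev : ∀ᶠ m in atTop, gromovProd p (g p) (t m) ≤ 4 * δ ∧
      dist p (g p) - 5 * δ ≤ gromovProd p (g⁻¹ p) (t m) ∧ s - 4 * δ ≤ dist p (g p) := by
    filter_upwards [eventually_ge_atTop k₀, hg (dist p (g p) + dist x (g p))] with m hm hgm
    have h1 := hX.busemann_sub_le (u := x) (v := g x) (s := t m) (t := t n)
      (by linarith [hk₀ m hm n hn])
    have h2 : α - δ ≤ gromovProd x p (t m) := by
      have h3 := hX.min_gromovProd_le x p (t n) (t m)
      have h4 : gromovProd x p (t n) = α := by unfold gromovProd; linarith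
      linarith [le_min h4.ge (show α ≤ gromovProd x (t n) (t m) by linarith [hk₀ n hn m hm])]
    have h3 := dist_triangle (g x) (g p) (t m)
    rw [g.isometry.dist_eq] at h3
    have h4 := hX.busemann_sub_le (u := g p) (v := p) (s := t m) (t := g (t m)) ?_
    · rw [g.isometry.dist_eq] at h4
      have h5 := dist_triangle p (g p) (t m)
      have h6 := dist_triangle (g p) p (t m)
      rw [dist_comm (g p) p] at h6
      unfold gromovProd at *
      rw [dist_inv_apply, dist_inv_left]
      refine ⟨?_, ?_, ?_⟩ <;> linarith
    · rw [gromovProd_comm, dist_comm]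
      linarith [(abs_le.1 (abs_gromovProd_sub_le_base (g p) x (g (t m)) (t m))).1,
        dist_comm (g p) x]
  have hφ2 : 16 * δ ≤ dist p (g p) := by
    obtain ⟨m, -, -, h⟩ := hev.exists
    linarith
  have hF := hd p (19 * δ)
  obtain ⟨I, hI⟩ : ∃ I : ℕ, hF.toFinset.card < I := ⟨_, Nat.lt_succ_self _⟩
  obtain ⟨R, hR⟩ : ∃ R : ℝ, ∀ i ∈ Finset.range I, dist p ((a ^ (i : ℤ)) p) ≤ R := by
    obtain ⟨R, hR⟩ := ((Finset.range I).image fun i : ℕ => dist p ((a ^ (i : ℤ)) p)).bddAbove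
    exact ⟨R, fun i hi => hR (Finset.mem_coe.2 (Finset.mem_image_of_mem _ hi))⟩
  obtain ⟨k, hk⟩ := exists_nat_gt ((R + 15 * δ) / (4 * δ))
  rw [div_lt_iff₀ (by linarith)] at hk
  set h := g ^ (k + 1) with hh
  have hhE : h ∈ endStabilizer hX x t (hx.tendsto_dist hat) := pow_mem hgE _
  rw [_root_.mem_endStabilizer] at hhE
  obtain ⟨m, ⟨hm1, hm2, -⟩, hm3, hm4⟩ := (hev.and ((hhE (8 * δ + dist p x)).and
    ((Filter.eventually_all_finset (Finset.range I)).2 fun i _ => hat i))).exists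
  have hpow := hX.gromovProd_pow_le hm1 hm2 hφ2 hδ k
  have hmem : ∀ i ∈ Finset.range I, h * a ^ (i : ℤ) * h⁻¹ ∈ hF.toFinset := by
    intro i hi
    rw [Set.Finite.mem_toFinset]
    have hhΓ : h ∈ Γ := pow_mem hgΓ _
    refine ⟨mul_mem (mul_mem hhΓ (Γ.zpow_mem haΓ _)) (inv_mem hhΓ), ?_⟩
    rw [dist_conj_apply']
    have h1 : gromovProd (h⁻¹ p) p (t m) ≤ 7 * δ := by
      rw [← gromovProd_map h, IsometryEquiv.apply_inv_self]
      have h2 := hX.min_gromovProd_le p (h p) (h (t m)) (t m)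
      have h3 := (abs_le.1 (abs_gromovProd_sub_le_base p x (h (t m)) (t m))).1
      by_contra! h4
      linarith [lt_min h4 (show 7 * δ < gromovProd p (h (t m)) (t m) by linarith)]
    have h2 := hX.disp_le hδ.le (a ^ (i : ℤ)) (hR i hi) (hm4 i hi) h1 (by
      rw [dist_inv_apply]
      linarith)
    linarith
  have hcard := Finset.card_le_card_of_injOn (fun i : ℕ => h * a ^ (i : ℤ) * h⁻¹)
    (s := Finset.range I) hmem (by
      intro i _ j _ hij
      have := hai (mul_left_cancel (mul_right_cancel hij))
      exact_mod_cast this)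
  rw [Finset.card_range] at hcard
  omega

theorem Set.Finite.wordBall {G : Type*} [Group G] {S : Set G} (hS : S.Finite) (n : ℕ) :
    (wordBall S n).Finite := by
  have : Finite ↥(S ∪ S⁻¹) := hS.union hS.inv
  refine ((List.finite_length_le ↥(S ∪ S⁻¹) n).image fun L => (L.map Subtype.val).prod).subset ?_
  rintro _ ⟨L, hL, h, rfl⟩
  lift L to List ↥(S ∪ S⁻¹) using h
  exact ⟨L, by simpa using hL, rfl⟩

theorem IsGCB.isVirtuallyNilpotent_of_endStabilizer {P r₀ : ℝ} (hσ : IsGCB σ)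
    (hX : IsDeltaHyperbolic X δ) (hP : IsPacked X P r₀) (hr₀ : 0 < r₀) (hδ : 0 < δ)
    (hat : ∀ i : ℤ, ∀ᶠ n in atTop, dist (t n) ((a ^ i) (t n)) ≤ δ)
    (hx : Escapes a x) {Γ : Subgroup (X ≃ᵢ X)} (hd : IsDiscreteSubgroup Γ) (haΓ : a ∈ Γ)
    (hai : Function.Injective fun i : ℤ => a ^ i) (hΓσ : Γ ≤ sigmaIsometries σ) (hfg : Γ.FG)
    (hi : (endStabilizer hX x t (hx.tendsto_dist hat)).relIndex Γ ≠ 0) :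
    IsVirtuallyNilpotent ↥Γ := by
  set E := endStabilizer hX x t (hx.tendsto_dist hat)
  have hEfg : (E ⊓ Γ).FG := by
    have : Group.FG Γ := (Group.fg_iff_subgroup_fg Γ).2 hfg
    have : (E.subgroupOf Γ).FiniteIndex := ⟨hi⟩
    have h1 : (E.subgroupOf Γ).FG := (Group.fg_iff_subgroup_fg _).1 inferInstance
    have h2 := ((Subgroup.fg_iff_submonoid_fg _).1 h1).map Γ.subtype
    rw [Subgroup.fg_iff_submonoid_fg]
    rwa [← Subgroup.subgroupOf_map_subtype]
  obtain ⟨S, hS⟩ := hEfg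
  refine IsVirtuallyNilpotent.of_relIndex_ne_zero (Λ := E ⊓ Γ) inf_le_right
    (by rwa [Subgroup.inf_relIndex_right]) ?_
  obtain ⟨n, hn⟩ := exists_isVirtuallyNilpotent_of_wordBall P r₀ hr₀ (26 * δ)
  have hSE : ∀ g ∈ wordBall (S : Set (X ≃ᵢ X)) n, g ∈ E ∧ g ∈ Γ := fun g hg => by
    have := wordBall_subset_closure n hg
    rwa [hS] at this
  have hfin : (wordBall (S : Set (X ≃ᵢ X)) n).Finite := S.finite_toSet.wordBall n
  obtain ⟨R, hR⟩ : ∃ R : ℝ, ∀ g ∈ wordBall (S : Set (X ≃ᵢ X)) n, dist x (g x) ≤ R := by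
    obtain ⟨R, hR⟩ := (hfin.image fun g => dist x (g x)).bddAbove
    exact ⟨R, fun g hg => hR (Set.mem_image_of_mem _ hg)⟩
  have hR0 : 0 ≤ R := dist_nonneg.trans (hR 1 (one_mem_wordBall n))
  have hev : ∀ᶠ m in atTop, ∀ g ∈ wordBall (S : Set (X ≃ᵢ X)) n,
      dist (g x) (t m) - dist x (t m) ≤ 22 * δ ∧ 2 * R ≤ gromovProd x (g (t m)) (t m) := by
    refine (Filter.eventually_all_finite hfin).2 fun g hg => ?_
    exact (hx.eventually_dist_sub_dist_le hσ hX hδ hat hd haΓ hai (hSE g hg).2 (hSE g hg).1).and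
      (mem_endStabilizer.1 (hSE g hg).1 _)
  obtain ⟨m, hm⟩ := hev.exists
  obtain ⟨l, -, hp1, hp2⟩ := hσ.exists_dist_eq x (t m) hR0 (by
    have h1 := (hm 1 (one_mem_wordBall n)).2
    linarith [gromovProd_le_right x ((1 : X ≃ᵢ X) (t m)) (t m)])
  rw [← hS]
  refine hn X σ hσ hP S (fun g hg => hΓσ ?_) ?_ (σ x (t m) l) fun g hg => ?_
  · have := Subgroup.subset_closure hg
    rw [hS] at this
    exact this.2
  · rw [hS]
    exact fun y r => (hd y r).subset fun g hg => ⟨hg.1.2, hg.2⟩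
  · refine (hX.disp_le_max (by linarith) (by rw [hp1]; exact hR g hg) ?_).trans ?_
    · linarith [hR g hg, (hm g hg).2]
    · linarith [max_le (hm g hg).1 (hm g⁻¹ (inv_mem_wordBall hg)).1]

end Parabolic

section GromovConvex

variable {X : Type*} [MetricSpace X] {δ lam : ℝ}

/-- Gromov products of points of `Y` are at least the distance to `Y`, up to `lam`. -/
def IsGromovConvex (lam : ℝ) (Y : Set X) : Prop :=
  ∀ o : X, ∀ m : ℝ, (∀ s ∈ Y, m ≤ dist o s) → ∀ p ∈ Y, ∀ q ∈ Y, m - lam ≤ gromovProd o p q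

theorem IsGromovConvex.image {Y : Set X} (hY : IsGromovConvex lam Y) (g : X ≃ᵢ X) :
    IsGromovConvex lam (g '' Y) := by
  rintro o m hm _ ⟨p, hp, rfl⟩ _ ⟨q, hq, rfl⟩
  rw [← IsometryEquiv.apply_inv_self g o, gromovProd_map]
  refine hY _ m (fun s hs => ?_) p hp q hq
  rw [dist_inv_left]
  exact hm _ (Set.mem_image_of_mem _ hs)

/-- A coarse Helly property. -/
theorem IsDeltaHyperbolic.exists_dist_le_of_pairwise (hX : IsDeltaHyperbolic X δ) (hδ : 0 < δ)
    (hlam : 0 ≤ lam) {ι : Type*} {F : Finset ι} (hF : F.Nonempty) {Y : ι → Set X} {R : ℝ}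
    (hY : ∀ i ∈ F, IsGromovConvex lam (Y i))
    (hR : ∀ i ∈ F, ∀ j ∈ F, ∃ u ∈ Y i, ∃ v ∈ Y j, dist u v ≤ R) :
    ∃ p, ∀ i ∈ F, ∃ y ∈ Y i, dist p y ≤ R + 2 * lam + 6 * δ := by
  have hne : ∀ i ∈ F, (Y i).Nonempty := fun i hi => by
    obtain ⟨u, hu, -⟩ := hR i hi i hi
    exact ⟨u, hu⟩
  have hnear : ∀ o, ∀ i ∈ F, ∃ y ∈ Y i, dist o y ≤ infDist o (Y i) + δ := fun o i hi => by
    obtain ⟨y, hy, h⟩ := (infDist_lt_iff (hne i hi)).1 (lt_add_of_pos_right (infDist o (Y i)) hδ)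
    exact ⟨y, hy, h.le⟩
  obtain ⟨k, hk⟩ := id hF
  obtain ⟨o, -⟩ := hne k hk
  obtain ⟨i₀, hi₀, hmax⟩ := F.exists_max_image (fun i => infDist o (Y i)) hF
  obtain ⟨p, hp, hop⟩ := hnear o i₀ hi₀
  refine ⟨p, fun i hi => ?_⟩
  obtain ⟨w, hw, hpw⟩ := hnear p i hi
  obtain ⟨u, hu, v, hv, huv⟩ := hR i₀ hi₀ i hi
  obtain ⟨y, hy, hoy⟩ := hnear o i hi
  refine ⟨w, hw, hpw.trans ?_⟩
  set D := infDist p (Y i)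
  have hD : ∀ s ∈ Y i, D ≤ dist p s := fun s hs => infDist_le_dist_of_mem hs
  have h1 := hY i₀ hi₀ o _ (fun s hs => infDist_le_dist_of_mem hs) p hp u hu
  have h2 := gromovProd_add_gromovProd p o u
  have h3 := hY i hi p D hD y hy v hv
  have h4 : D - R ≤ gromovProd p v u := by
    have := (abs_le.1 (abs_gromovProd_sub_le p v u v)).1
    rw [gromovProd_self] at this
    linarith [hD v hv]
  have h5 : (D - δ) / 2 ≤ gromovProd p o y := by
    unfold gromovProd
    rw [dist_comm p o]
    linarith [hD y hy, hmax i hi, infDist_le_dist_of_mem (x := o) hp]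
  have h6 := hX.min_gromovProd_le p y v u
  have h7 := hX.min_gromovProd_le p o y u
  have hR0 : 0 ≤ R := dist_nonneg.trans huv
  rcases min_le_iff.1 h7 with h7 | h7
  · linarith
  · rcases min_le_iff.1 h6 with h6 | h6 <;> linarith

end GromovConvex

section ThinSet

variable {X : Type*} [MetricSpace X] {δ H : ℝ} {σ : X → X → ℝ → X} {a : X ≃ᵢ X}

/-- The points moved little by some nontrivial power of `a` of small translation length. -/
def thinSet (a : X ≃ᵢ X) (H : ℝ) : Set X :=
  {p | ∃ i : ℤ, i ≠ 0 ∧ |(i : ℝ)| * transLength a ≤ H / 2 ∧ dist p ((a ^ i) p) ≤ H}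

theorem IsGCB.lt_disp_of_notMem_thinSet (hσ : IsGCB σ) (ha : IsSigmaIsometry σ a) {p : X}
    (hH : 0 < H) (hp : p ∉ thinSet a H) {j : ℤ} (hj : j ≠ 0) : H / 2 < dist p ((a ^ j) p) := by
  by_contra! h
  exact hp ⟨j, hj, (hσ.abs_mul_transLength_le_disp ha j p).trans h, by linarith⟩

theorem zpow_apply_mem_thinSet {p : X} (hp : p ∈ thinSet a H) (j : ℤ) :
    (a ^ j) p ∈ thinSet a H := by
  obtain ⟨i, hi, h1, h2⟩ := hp
  exact ⟨i, hi, h1, by rwa [← IsometryEquiv.mul_apply, ← zpow_add, add_comm, zpow_add,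
    IsometryEquiv.mul_apply, IsometryEquiv.dist_eq]⟩

theorem thinSet_nonempty [Nonempty X] (hH : 0 < H) (ha : transLength a < H / 2) :
    (thinSet a H).Nonempty := by
  obtain ⟨y, hy⟩ := exists_disp_lt a (show 0 < H / 2 by linarith)
  exact ⟨y, 1, one_ne_zero, by simpa using ha.le, by rw [zpow_one]; linarith⟩

theorem IsGCB.isGromovConvex_thinSet (hσ : IsGCB σ) (hX : IsDeltaHyperbolic X δ)
    (ha : IsSigmaIsometry σ a) (hH : 0 < H) : IsGromovConvex (3 * δ) (thinSet a H) := by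
  rintro o m hm p ⟨i, hi, hi1, hi2⟩ q ⟨j, hj, hj1, hj2⟩
  have : Nonempty X := ⟨o⟩
  have hpos : ∀ i : ℤ, i ≠ 0 → 0 < |(i : ℝ)| := fun i hi => abs_pos.2 (Int.cast_ne_zero.2 hi)
  have hi0 := hpos i hi
  have hj0 := hpos j hj
  obtain ⟨t, ht⟩ := exists_disp_lt a (η := H / 2 / (|(i : ℝ)| + |(j : ℝ)|)) (by positivity)
  have hseg : ∀ (k : ℤ) (p : X), k ≠ 0 → |(k : ℝ)| * transLength a ≤ H / 2 →
      dist p ((a ^ k) p) ≤ H → dist t ((a ^ k) t) ≤ H → m - 2 * δ ≤ gromovProd o p t := by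
    intro k p hk hk1 hk2 hk3
    obtain ⟨l, hl, h⟩ := hX.exists_dist_le_gromovProd hσ o p t
    have h1 := hσ.disp_sigma_le ((sigmaIsometries σ).zpow_mem ha k) p t hl
    have h2 := hm (σ p t l) ⟨k, hk, hk1, h1.trans (by nlinarith [hl.1, hl.2])⟩
    linarith
  have hsmall : ∀ k : ℤ, |(k : ℝ)| ≤ |(i : ℝ)| + |(j : ℝ)| →
      |(k : ℝ)| * transLength a ≤ H / 2 → dist t ((a ^ k) t) ≤ H := by
    intro k hk hk1
    refine (dist_zpow_apply_le a t k).trans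
      ((mul_le_mul_of_nonneg_left ht.le (abs_nonneg _)).trans ?_)
    have : |(k : ℝ)| * (H / 2 / (|(i : ℝ)| + |(j : ℝ)|)) ≤ H / 2 := by
      rw [mul_div_assoc', div_le_iff₀ (by positivity), mul_comm]
      gcongr
    linarith
  have h1 := hseg i p hi hi1 hi2 (hsmall i (by linarith) hi1)
  have h2 := hseg j q hj hj1 hj2 (hsmall j (by linarith) hj1)
  rw [gromovProd_comm] at h2
  linarith [le_min h1 h2, hX.min_gromovProd_le o p t q]

/-- If the thin set of `a` is far from its image under `g`, powers of `a` play ping-pong. -/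
theorem IsGCB.isPingPong_of_thinSet (hσ : IsGCB σ) (hX : IsDeltaHyperbolic X δ) (hδ : 0 < δ)
    (ha : IsSigmaIsometry σ a) (hne : (thinSet a (100 * δ)).Nonempty) (g : X ≃ᵢ X)
    (hfar : ∀ u ∈ thinSet a (100 * δ), ∀ v ∈ thinSet a (100 * δ), 50 * δ < dist u (g v))
    {n : ℕ} (hn : n ≠ 0) : IsPingPong (a ^ n) (g * a * g⁻¹ * a) := by
  set Y := thinSet a (100 * δ) with hY
  have hH : 0 < 100 * δ := by linarith
  have hQ := hσ.isGromovConvex_thinSet hX ha hH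
  obtain ⟨s₀, hs₀⟩ := hne
  set S : Set ℝ := (fun q : X × X => dist q.1 (g q.2)) '' (Y ×ˢ Y) with hS
  have hSb : BddBelow S := ⟨0, by rintro _ ⟨q, -, rfl⟩; exact dist_nonneg⟩
  have hSn : S.Nonempty := Set.Nonempty.image _ ⟨(s₀, s₀), hs₀, hs₀⟩
  obtain ⟨_, ⟨⟨y, y'⟩, ⟨hy, hy'⟩, rfl⟩, hyy⟩ :=
    exists_lt_of_csInf_lt hSn (lt_add_of_pos_right (sInf S) hδ)
  have hmin : ∀ u ∈ Y, ∀ v ∈ Y, dist y (g y') - δ ≤ dist u (g v) := fun u hu v hv => by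
    have := csInf_le hSb (Set.mem_image_of_mem (fun q : X × X => dist q.1 (g q.2))
      (show (u, v) ∈ Y ×ˢ Y from ⟨hu, hv⟩))
    dsimp only at *
    linarith
  have hD := hfar y hy y' hy'
  set D := dist y (g y') with hDdef
  obtain ⟨l, -, hz1, hz2⟩ := hσ.exists_dist_eq y (g y') (s := D / 2) (by linarith) (by linarith)
  set z := σ y (g y') l
  have hone : ∀ (z y : X), y ∈ Y → dist z y = D / 2 → (∀ s ∈ Y, D / 2 - δ ≤ dist z s) →
      ∀ j : ℤ, j ≠ 0 → 10 * δ < dist z ((a ^ j) z) ∧ 10 * δ ≤ gromovProd z ((a ^ j) z) y := by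
    intro z y hy hzy hzs j hj
    have h0 : z ∉ Y := fun h => by
      have := hzs z h
      rw [dist_self] at this
      linarith
    have h1 := hσ.lt_disp_of_notMem_thinSet ha hH h0 hj
    have h2 := hQ z _ hzs _ (zpow_apply_mem_thinSet hy j) y hy
    have h3 : 20 * δ ≤ gromovProd z ((a ^ j) z) ((a ^ j) y) := by
      unfold gromovProd
      rw [IsometryEquiv.dist_eq, hzy]
      linarith [hzs _ (zpow_apply_mem_thinSet hy j)]
    have h4 := hX.min_gromovProd_le z ((a ^ j) z) ((a ^ j) y) y
    refine ⟨by linarith, ?_⟩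
    linarith [le_min h3 (show 20 * δ ≤ gromovProd z ((a ^ j) y) y by linarith)]
  have hu := hone z y hy (by rw [dist_comm]; exact hz1) fun s hs => by
    linarith [hmin s hs y' hy', dist_triangle s z (g y'), dist_comm s z]
  have hv := hone (g⁻¹ z) y' hy' (by rw [dist_inv_left]; linarith) fun s hs => by
    rw [dist_inv_left]
    linarith [hmin y hy s hs, dist_triangle y z (g s)]
  refine hX.isPingPong_pow_mul hδ.le (D := 2 * δ) (z := z) (fun j k hj hk => ?_)
    (fun j hj => by linarith [(hu j hj).1]) (fun j hj => ?_) hn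
  · have h1 := (hu j hj).2
    have h2 := (hv k hk).2
    rw [← gromovProd_map g, IsometryEquiv.apply_inv_self] at h2
    rw [conj_zpow]
    have h3 := hX.gromovProd_le (z := z) (p := (a ^ j) z) (q := y) (r := g y') (D := 0)
      (by linarith) (by unfold gromovProd; linarith [dist_comm z y])
    rw [gromovProd_comm]
    exact (hX.gromovProd_le (z := z) (q := g y') (D := δ)
      (by rw [IsometryEquiv.mul_apply, IsometryEquiv.mul_apply]; linarith)
      (by rw [gromovProd_comm]; linarith)).trans (by linarith)
  · rw [conj_zpow, dist_conj_apply']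
    linarith [(hv j hj).1]

end ThinSet

section ElementaryHull

variable {X : Type*} [MetricSpace X] {δ : ℝ} {σ : X → X → ℝ → X} {a : X ≃ᵢ X}

/-- A discrete group is elementary as soon as it is commensurable to the stabilizer of the ends of
one of its non-elliptic elements. -/
theorem IsGCB.exists_elementary_hull [Nonempty X] {P r₀ : ℝ} (hσ : IsGCB σ)
    (hX : IsDeltaHyperbolic X δ) (hP : IsPacked X P r₀) (hr₀ : 0 < r₀) (hδ : 0 < δ)
    (ha : IsSigmaIsometry σ a) (hae : IsNonElliptic a) {Γ : Subgroup (X ≃ᵢ X)}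
    (hd : IsDiscreteSubgroup Γ) (haΓ : a ∈ Γ) (hΓσ : Γ ≤ sigmaIsometries σ) (hfg : Γ.FG) :
    ∃ E : Subgroup (X ≃ᵢ X), (E.relIndex Γ ≠ 0 → IsVirtuallyNilpotent ↥Γ) ∧
      ∀ (g : X ≃ᵢ X) (m l : ℤ), m ≠ 0 → l ≠ 0 →
        IsVirtuallyNilpotent ↥(Subgroup.closure ({a ^ m, g * a ^ l * g⁻¹} : Set (X ≃ᵢ X))) →
          g ∈ E := by
  obtain ⟨x⟩ := id ‹Nonempty X›
  rcases (transLength_nonneg a).eq_or_lt' with hl | hl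
  · have hη : ∀ n : ℕ, 0 < δ / (n + 1) := fun n => by positivity
    choose t ht using fun n => exists_disp_lt a (hη n)
    have hat : ∀ i : ℤ, ∀ᶠ n in atTop, dist (t n) ((a ^ i) (t n)) ≤ δ := by
      intro i
      filter_upwards [eventually_ge_atTop i.natAbs] with n hn
      refine (dist_zpow_apply_le a (t n) i).trans ?_
      have h1 : |(i : ℝ)| ≤ n + 1 := by
        have : |(i : ℝ)| = (i.natAbs : ℝ) := by simp
        rw [this]
        exact_mod_cast hn.trans n.le_succ
      calc |(i : ℝ)| * dist (t n) (a (t n)) ≤ (n + 1) * (δ / (n + 1)) := by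
            gcongr
            linarith [ht n]
        _ = δ := by field_simp
    have hx := hae.escapes hd haΓ x
    exact ⟨endStabilizer hX x t (hx.tendsto_dist hat),
      hσ.isVirtuallyNilpotent_of_endStabilizer hX hP hr₀ hδ hat hx hd haΓ hae.zpow_injective hΓσ
        hfg, fun g m l hm hl hv => hx.mem_endStabilizer hat hX hδ hm hl hv⟩
  · exact ⟨coarseStabilizer a x, hσ.isVirtuallyNilpotent_of_coarseStabilizer hX hδ ha hl hd haΓ x,
      fun g m l hm hl0 hv => hσ.mem_coarseStabilizer hX hδ ha hl x hm hl0 hv⟩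

end ElementaryHull

section ThinToThinner

universe u

/-- Points of the thin set of an isometry of small translation length are uniformly close to points
moved even less by a nontrivial power. -/
theorem exists_uniform_dist_le_of_mem_thinSet (P r₀ δ H ε : ℝ) (hr₀ : 0 < r₀) (hδ : 0 < δ)
    (hH : 0 < H) (hε : 0 < ε) :
    ∃ K : ℝ, ∀ (X : Type u) [MetricSpace X] (σ : X → X → ℝ → X), IsGCB σ →
      IsDeltaHyperbolic X δ → IsPacked X P r₀ → ∀ a : X ≃ᵢ X, IsSigmaIsometry σ a →
        transLength a < ε → ∀ p ∈ thinSet a H,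
          ∃ q, ∃ m : ℤ, m ≠ 0 ∧ dist q ((a ^ m) q) ≤ ε ∧ dist p q ≤ K := by
  obtain ⟨n, hn⟩ := exists_uniform_pigeonhole.{u} P r₀ hr₀ (5 * δ) ε hε
  obtain ⟨L, hL⟩ : ∃ L : ℕ, L = n + 1 := ⟨_, rfl⟩
  have hL1 : (1 : ℝ) ≤ L := by rw [hL]; push_cast; linarith [(n.cast_nonneg : (0 : ℝ) ≤ n)]
  refine ⟨(1000 * L * H + 6 * δ) + (L * H + δ) / 2, fun X _ σ hσ hX hP a ha hlt p hp => ?_⟩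
  obtain ⟨i, hi, hi1, hi2⟩ := hp
  have : Nonempty X := ⟨p⟩
  have hi0 : 0 < |(i : ℝ)| := abs_pos.2 (Int.cast_ne_zero.2 hi)
  have hLH : 0 < L * H := by positivity
  by_cases hcase : |(i : ℝ)| * transLength a < δ / L
  · have hr : transLength a < min ε (δ / L / |(i : ℝ)|) := by
      rw [lt_min_iff, lt_div_iff₀ hi0, mul_comm]
      exact ⟨hlt, hcase⟩
    obtain ⟨t, ht⟩ := exists_disp_lt a (sub_pos.2 hr)
    rw [add_sub_cancel, lt_min_iff] at ht
    by_cases hpt : dist p t ≤ (L * H + δ) / 2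
    · exact ⟨t, 1, one_ne_zero, by rw [zpow_one]; exact ht.1.le, by linarith⟩
    push Not at hpt
    obtain ⟨l, -, hq1, hq2⟩ := hσ.exists_dist_eq p t (s := (L * H + δ) / 2) (by linarith) hpt.le
    set q := σ p t l
    have hdisp : ∀ k : ℕ, k ≤ L → dist q ((a ^ (i * k)) q) ≤ 5 * δ := by
      intro k hk
      have hk' : (k : ℝ) ≤ L := by exact_mod_cast hk
      have h1 : dist p ((a ^ (i * k)) p) ≤ L * H := by
        rw [zpow_mul, zpow_natCast]
        refine (dist_pow_apply_le _ p k).trans ?_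
        gcongr
      have h2 : dist t ((a ^ (i * k)) t) ≤ δ := by
        refine (dist_zpow_apply_le a t _).trans ?_
        push_cast
        rw [abs_mul, Nat.abs_cast]
        calc |(i : ℝ)| * k * dist t (a t) ≤ |(i : ℝ)| * L * (δ / L / |(i : ℝ)|) := by
              gcongr
              exact ht.2.le
          _ = δ := by field_simp
      have h3 : gromovProd q p t ≤ 0 := by
        unfold gromovProd
        linarith [dist_comm p q]
      linarith [hX.disp_le hδ.le (a ^ (i * k)) h1 h2 h3 (by linarith)]
    obtain ⟨k, k', hkk, hclose⟩ := hn X σ hσ hP q (fun k => (a ^ (i * (k : ℕ))) q) fun k => by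
      rw [dist_comm]
      exact hdisp k (by omega)
    refine ⟨q, i * ((k' : ℕ) : ℤ) - i * ((k : ℕ) : ℤ), ?_, ?_, by linarith⟩
    · rw [← mul_sub]
      refine mul_ne_zero hi fun h => hkk (Fin.ext ?_)
      omega
    · rwa [sub_eq_neg_add, zpow_add, IsometryEquiv.mul_apply, zpow_neg, dist_inv_right]
  · push Not at hcase
    set W : ℤ := 1000 * L with hW
    have hWr : (W : ℝ) = 1000 * L := by rw [hW]; push_cast; ring
    have hW0 : (0 : ℝ) < W := by rw [hWr]; linarith
    set h := a ^ (i * W) with hh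
    have hlen : |(i : ℝ)| * W * transLength a ≤ transLength h := by
      refine le_transLength fun z => ?_
      have := hσ.abs_mul_transLength_le_disp ha (i * W) z
      push_cast at this
      rwa [abs_mul, abs_of_pos hW0] at this
    obtain ⟨t, ht⟩ := exists_disp_lt a (η := min (ε - transLength a) (δ / (|(i : ℝ)| * W)))
      (lt_min (by linarith) (by positivity))
    have ht1 : dist t (a t) ≤ ε := by linarith [min_le_left (ε - transLength a) (δ / (|(i : ℝ)| * W))]
    have ht2 : dist t (h t) ≤ transLength h + δ := by
      refine (dist_zpow_apply_le a t _).trans ?_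
      push_cast
      rw [abs_mul, abs_of_pos hW0]
      calc |(i : ℝ)| * W * dist t (a t)
          ≤ |(i : ℝ)| * W * (transLength a + δ / (|(i : ℝ)| * W)) := by
            gcongr
            linarith [min_le_right (ε - transLength a) (δ / (|(i : ℝ)| * W))]
        _ = |(i : ℝ)| * W * transLength a + δ := by field_simp
        _ ≤ _ := by linarith
    have hax : IsAxisPoint δ h t := by
      refine hσ.isAxisPoint ((sigmaIsometries σ).zpow_mem ha _) (le_trans ?_ hlen) ht2
      rw [div_le_iff₀ (by linarith)] at hcase
      rw [hWr]
      linarith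
    obtain ⟨k, hk⟩ := exists_closest_zpow hδ h t p
    refine ⟨(h ^ k) t, 1, one_ne_zero, ?_, ?_⟩
    · rw [zpow_one, hh, ← zpow_mul, disp_zpow_apply]
      exact ht1
    · have h1 := (hax.zpow_apply k).dist_le_disp_of_closest hX hδ (p := p)
        (fun j => by rw [← IsometryEquiv.mul_apply, ← zpow_add]; exact hk _)
      have h2 : dist p (h p) ≤ W * H := by
        rw [hh, zpow_mul]
        refine (dist_zpow_apply_le _ p W).trans ?_
        rw [abs_of_pos hW0]
        gcongr
      rw [hWr] at h2
      linarith

end ThinToThinner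

section WordLength

variable {G : Type*} [Group G] {S : Set G}

theorem zpow_mem_wordBall {g : G} (hg : g ∈ wordBall S 1) {k : ℤ} {n : ℕ} (hk : |k| ≤ n) :
    g ^ k ∈ wordBall S n := by
  rw [Int.abs_eq_natAbs] at hk
  have h1 : ∀ m : ℕ, m ≤ n → g ^ m ∈ wordBall S n := fun m hm =>
    wordBall_mono (by omega) (pow_mem_wordBall hg m)
  rcases k.natAbs_eq with h | h <;> rw [h]
  · rw [zpow_natCast]
    exact h1 _ (by omega)
  · rw [zpow_neg, zpow_natCast]
    exact inv_mem_wordBall (h1 _ (by omega))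

end WordLength

section FreeSemigroup

universe u

variable {X : Type u} [MetricSpace X] {δ : ℝ} {σ : X → X → ℝ → X} {a b : X ≃ᵢ X}

theorem IsNonElementary.not_isVirtuallyNilpotent {Γ : Subgroup (X ≃ᵢ X)} (h : IsNonElementary Γ) :
    ¬ IsVirtuallyNilpotent ↥Γ := by
  obtain ⟨g, h, hg, hh, hn⟩ := h
  refine fun hΓ => hn (hΓ.mono ((Subgroup.closure_le _).2 ?_))
  rintro _ (rfl | rfl)
  exacts [hg, hh]

theorem IsNonElementary.nonempty {Γ : Subgroup (X ≃ᵢ X)} (h : IsNonElementary Γ) : Nonempty X := by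
  by_contra hX
  rw [not_nonempty_iff] at hX
  refine h.not_isVirtuallyNilpotent ⟨⊤, inferInstance, ?_⟩
  have : Subsingleton (X ≃ᵢ X) := ⟨fun g h => IsometryEquiv.ext fun x => hX.elim x⟩
  infer_instance

theorem closure_pair_le_sigmaIsometries (ha : IsSigmaIsometry σ a) (hb : IsSigmaIsometry σ b) :
    Subgroup.closure {a, b} ≤ sigmaIsometries σ := by
  rw [Subgroup.closure_le]
  rintro _ (rfl | rfl)
  exacts [ha, hb]

theorem IsGCB.exists_isPingPong_of_le_transLength (hσ : IsGCB σ) (hX : IsDeltaHyperbolic X δ)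
    (hδ : 0 < δ) (ha : IsSigmaIsometry σ a) (hl : 0 < transLength a)
    (hd : IsDiscreteSubgroup (Subgroup.closure ({a, b} : Set (X ≃ᵢ X))))
    (hne : IsNonElementary (Subgroup.closure ({a, b} : Set (X ≃ᵢ X)))) {n : ℕ} (hn0 : 0 < n)
    (hn : 1000 * δ ≤ n * transLength a) :
    ∃ w ∈ wordBall {a, b} (40 * n + 2), ∃ τ : ℤ, (τ = 1 ∨ τ = -1) ∧
      IsPingPong (a ^ (τ * (20 * n : ℕ))) w := by
  have := hne.nonempty
  obtain ⟨x⟩ := id this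
  obtain ⟨y, hy⟩ := hσ.exists_isAxisPoint hδ ha (n := n) (by simpa using hn)
  rcases hy.mem_coarseStabilizer_or hX hδ (by exact_mod_cast hn0.ne') x b with h |
    ⟨h, hh, τ, s, e, hτ, hs, he, hpp⟩
  · refine absurd (hσ.isVirtuallyNilpotent_of_coarseStabilizer hX hδ ha hl hd
      (Subgroup.subset_closure (by simp)) x ?_) hne.not_isVirtuallyNilpotent
    rw [Subgroup.relIndex_eq_one.2]
    · exact one_ne_zero
    · rw [Subgroup.closure_le]
      rintro _ (rfl | rfl)
      exacts [self_mem_coarseStabilizer _ _, h]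
  · have ha1 : a ∈ wordBall {a, b} 1 := mem_wordBall_one (by simp)
    have hpow : ∀ k : ℤ, |k| ≤ 20 → (a ^ (n : ℤ)) ^ k ∈ wordBall {a, b} (20 * n) := fun k hk => by
      rw [← zpow_mul]
      refine zpow_mem_wordBall ha1 ?_
      rw [abs_mul, Nat.abs_cast, mul_comm]
      push_cast
      gcongr
    have hh1 : h ∈ wordBall {a, b} 1 := mem_wordBall_one (by rcases hh with rfl | rfl <;> simp)
    refine ⟨_, wordBall_mono ?_ (mul_mem_wordBall (mul_mem_wordBall (mul_mem_wordBall hh1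
      (hpow s hs)) (inv_mem_wordBall hh1)) (hpow e he)), τ, hτ, ?_⟩
    · omega
    · rwa [← zpow_mul, show (n : ℤ) * (20 * τ) = τ * (20 * n : ℕ) by push_cast; ring] at hpp

theorem exists_uniform_isPingPong_of_transLength_lt (P r₀ δ : ℝ) (hr₀ : 0 < r₀) (hδ : 0 < δ) :
    ∃ ε : ℝ, 0 < ε ∧ ∃ K : ℕ, ∀ (X : Type u) [MetricSpace X] (σ : X → X → ℝ → X), IsGCB σ →
      IsDeltaHyperbolic X δ → IsPacked X P r₀ → ∀ a b : X ≃ᵢ X, IsSigmaIsometry σ a →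
        IsSigmaIsometry σ b → IsNonElliptic a →
          IsDiscreteSubgroup (Subgroup.closure ({a, b} : Set (X ≃ᵢ X))) →
          IsNonElementary (Subgroup.closure ({a, b} : Set (X ≃ᵢ X))) → transLength a < ε →
            ∃ w ∈ wordBall {a, b} K, ∀ n : ℕ, n ≠ 0 → IsPingPong (a ^ n) w := by
  obtain ⟨μ, hμ, hM⟩ := exists_margulis_constant.{u} P r₀ hr₀
  set ε := min (μ / 2) (50 * δ) with hε
  have hε0 : 0 < ε := lt_min (by positivity) (by positivity)
  have hεμ : 2 * ε ≤ μ := by linarith [min_le_left (μ / 2) (50 * δ)]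
  obtain ⟨K₀, hK₀⟩ :=
    exists_uniform_dist_le_of_mem_thinSet.{u} P r₀ δ (100 * δ) ε hr₀ hδ (by linarith) hε0
  obtain ⟨n, hn⟩ := exists_uniform_pigeonhole.{u} P r₀ hr₀
    (50 * δ + 2 * (3 * δ) + 6 * δ + K₀) (ε / 2) (by positivity)
  refine ⟨ε, hε0, n + n + 1 + (n + n) + 1,
    fun X _ σ hσ hX hP a b ha hb hae hd hne hlt => ?_⟩
  have := hne.nonempty
  set Γ := Subgroup.closure ({a, b} : Set (X ≃ᵢ X)) with hΓ
  have haΓ : a ∈ Γ := Subgroup.subset_closure (by simp)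
  have hΓσ : Γ ≤ sigmaIsometries σ := closure_pair_le_sigmaIsometries ha hb
  obtain ⟨E, hE, hEm⟩ := hσ.exists_elementary_hull hX hP hr₀ hδ ha hae hd haΓ hΓσ
    ((Subgroup.fg_iff _).2 ⟨_, rfl, by simp⟩)
  obtain ⟨F, hFc, hFw, hFE⟩ := (relIndex_ne_zero_or_exists_cosets {a, b} E).resolve_left
    (fun h => hne.not_isVirtuallyNilpotent (hE h)) n
  set Y := thinSet a (100 * δ) with hY
  have hYne : Y.Nonempty := thinSet_nonempty (by linarith)
    (by linarith [min_le_right (μ / 2) (50 * δ)])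
  by_cases hclose : ∀ u ∈ F, ∀ v ∈ F, ∃ s ∈ u '' Y, ∃ s' ∈ v '' Y, dist s s' ≤ 50 * δ
  · exfalso
    obtain ⟨p, hp⟩ := hX.exists_dist_le_of_pairwise hδ (lam := 3 * δ) (by linarith)
      (Finset.card_pos.1 (by omega)) (Y := fun u : X ≃ᵢ X => u '' Y)
      (fun u _ => (hσ.isGromovConvex_thinSet hX ha (by linarith)).image u) hclose
    have hq : ∀ u : F, ∃ q, ∃ m : ℤ, m ≠ 0 ∧ dist q ((a ^ m) q) ≤ ε ∧
        dist ((u : X ≃ᵢ X) q) p ≤ 50 * δ + 2 * (3 * δ) + 6 * δ + K₀ := by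
      rintro ⟨u, hu⟩
      obtain ⟨_, ⟨y, hy, rfl⟩, hpy⟩ := hp u hu
      obtain ⟨q, m, hm, hq1, hq2⟩ := hK₀ X σ hσ hX hP a ha hlt y hy
      refine ⟨q, m, hm, hq1, ?_⟩
      have := dist_triangle p (u y) (u q)
      rw [u.isometry.dist_eq] at this
      rw [dist_comm]
      linarith
    choose q m hm hq1 hq2 using hq
    set e := F.equivFinOfCardEq hFc
    obtain ⟨i, j, hij, hclose⟩ := hn X σ hσ hP p (fun i => (e.symm i : X ≃ᵢ X) (q (e.symm i)))
      fun i => hq2 _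
    apply hij
    apply e.symm.injective
    apply Subtype.ext
    generalize e.symm i = u at *
    generalize e.symm j = v at *
    have huΓ := wordBall_subset_closure n (hFw u u.2)
    have hvΓ := wordBall_subset_closure n (hFw v v.2)
    set g := (u : X ≃ᵢ X)⁻¹ * v with hg
    have hgΓ : g ∈ Γ := mul_mem (inv_mem huΓ) hvΓ
    have ham := Γ.zpow_mem haΓ (m u)
    have hgag : g * a ^ (m v) * g⁻¹ ∈ Γ := mul_mem (mul_mem hgΓ (Γ.zpow_mem haΓ _)) (inv_mem hgΓ)
    refine hFE u u.2 v v.2 (hEm g (m u) (m v) (hm u) (hm v) (hM X σ hσ hP _ _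
      (hΓσ ham) (hΓσ hgag) (fun x R => (hd x R).subset fun k hk => ⟨?_, hk.2⟩) (q u)
      (by linarith [hq1 u]) ?_))
    · refine (Subgroup.closure_le _).2 ?_ hk.1
      rintro _ (rfl | rfl)
      exacts [ham, hgag]
    · have h1 := dist_apply_le_of_dist_le (g * a ^ (m v) * g⁻¹) (q u) (g (q v))
      have h2 : dist (q u) (g (q v)) ≤ ε / 2 := by
        rw [hg, IsometryEquiv.mul_apply, dist_inv_right]
        exact hclose
      rw [dist_conj_apply] at h1
      linarith [hq1 v]
  · push Not at hclose
    obtain ⟨u, hu, v, hv, hfar⟩ := hclose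
    have ha1 : a ∈ wordBall {a, b} 1 := mem_wordBall_one (by simp)
    have hg : u⁻¹ * v ∈ wordBall {a, b} (n + n) :=
      mul_mem_wordBall (inv_mem_wordBall (hFw u hu)) (hFw v hv)
    refine ⟨_, mul_mem_wordBall (mul_mem_wordBall (mul_mem_wordBall hg ha1)
      (inv_mem_wordBall hg)) ha1, fun k hk =>
        hσ.isPingPong_of_thinSet hX hδ ha hYne (u⁻¹ * v) (fun s hs s' hs' => ?_) hk⟩
    rw [IsometryEquiv.mul_apply, dist_inv_right]
    exact hfar _ (Set.mem_image_of_mem u hs) _ (Set.mem_image_of_mem v hs')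

end FreeSemigroup

/-- **Theorem 1.1(i)** (quantitative free sub-semigroup theorem with specification). -/
theorem free_subsemigroup_with_specification
    (P₀ r₀ δ : ℝ) (hP₀ : 0 < P₀) (hr₀ : 0 < r₀) (hδ : 0 < δ) :
    ∃ N : ℕ, 0 < N ∧
      ∀ (X : Type*) [MetricSpace X] [CompleteSpace X] (σ : X → X → ℝ → X),
        IsGCB σ → IsDeltaHyperbolic X δ → IsPacked X P₀ r₀ →
        ∀ a b : X ≃ᵢ X, IsSigmaIsometry σ a → IsSigmaIsometry σ b →
          IsNonElliptic a →
          IsDiscreteSubgroup (Subgroup.closure ({a, b} : Set (X ≃ᵢ X))) →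
          IsNonElementary (Subgroup.closure ({a, b} : Set (X ≃ᵢ X))) →
          ∃ w : X ≃ᵢ X,
            (∃ L : List (X ≃ᵢ X), L.length ≤ N ∧
              (∀ u ∈ L, u ∈ ({a, a⁻¹, b, b⁻¹} : Set (X ≃ᵢ X))) ∧ w = L.prod) ∧
            ∃ τ : ℤ, (τ = 1 ∨ τ = -1) ∧
              Function.Injective
                ⇑(FreeMonoid.lift fun i : Bool => if i then a ^ (τ * (N : ℤ)) else w) := by
  obtain ⟨ε, hε, K, hK⟩ := exists_uniform_isPingPong_of_transLength_lt P₀ r₀ δ hr₀ hδ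
  obtain ⟨n, hn⟩ := exists_nat_gt (1000 * δ / ε)
  rw [div_lt_iff₀ hε] at hn
  have hn0 : 0 < n := by
    rcases n.eq_zero_or_pos with rfl | h
    · norm_num at hn
      linarith
    · exact h
  have hN : 20 * n * (K + 3) ≠ 0 := by positivity
  refine ⟨20 * n * (K + 3), by positivity, fun X _ _ σ hσ hX hP a b ha hb hae hd hne => ?_⟩
  suffices h : ∃ w ∈ wordBall {a, b} (20 * n * (K + 3)), ∃ τ : ℤ, (τ = 1 ∨ τ = -1) ∧
      IsPingPong (a ^ (τ * ((20 * n * (K + 3) : ℕ) : ℤ))) w by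
    obtain ⟨w, ⟨L, hL, hLw, rfl⟩, τ, hτ, hpp⟩ := h
    refine ⟨_, ⟨L, hL, fun u hu => ?_, rfl⟩, τ, hτ, hpp.injective⟩
    rcases hLw u hu with (rfl | rfl) | (h | h)
    · simp
    · simp
    · simp [← h]
    · simp [← Set.mem_singleton_iff.1 h]
  rcases lt_or_ge (transLength a) ε with hlt | hge
  · obtain ⟨w, hw, h⟩ := hK X σ hσ hX hP a b ha hb hae hd hne hlt
    refine ⟨w, wordBall_mono (by nlinarith) hw, 1, Or.inl rfl, ?_⟩
    rw [one_mul, zpow_natCast]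
    exact h _ hN
  · obtain ⟨w, hw, τ, hτ, h⟩ := hσ.exists_isPingPong_of_le_transLength hX hδ ha (hε.trans_le hge)
      hd hne hn0 (hn.le.trans (by gcongr))
    refine ⟨w, wordBall_mono (by nlinarith) hw, τ, hτ, ?_⟩
    rw [Nat.cast_mul, ← mul_assoc, zpow_mul, zpow_natCast]
    exact h.pow (by omega)
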